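/- arXiv:1509.03871 — 4 statements merged into one kernel-verified Lean document; each statement's English description precedes it below -/
import Mathlib

section
/- Let 0 < α < 1/2 and ε > 0. For all sufficiently large n there exists a set F of 3-element subsets of {1,…,n} with |F| ≥ n^{2+α} such that every nontrivial Z/2 2-cycle Z ⊆ F satisfies |Z| ≥ n^{2−2α−ε}; that is, there exist simplicial complexes on n vertices with at least n^{2+α} faces and 2-girth at least n^{2−2α−ε}. -/
/-- A `Z/2` 2-cycle: a finite set `Z` of 3-element subsets of the vertex type `V`
such that every 2-element subset of `V` is contained in an even number of members of `Z`. -/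
def IsTwoCycle {V : Type} [DecidableEq V] (Z : Finset (Finset V)) : Prop :=
  (∀ t ∈ Z, t.card = 3) ∧
  ∀ e : Finset V, e.card = 2 → Even ((Z.filter (fun t => e ⊆ t)).card)

/-!
Build a minimal cycle face by face: as long as the faces used so far are not the whole cycle, their
boundary is nonempty, and another face can be glued along one of its edges. This unfolds a cycle
with `f` faces to a triangulated polygon, which is a binary tree together with a closed walk of
length `f + 2` traversing every edge an even number of times. Hence the number of minimal cycles
is at most a Catalan number times the number of such even loops.

Even loops of length `L` with a given multiset `s` of vertices are counted by the Kraft inequality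
for a random walk that either jumps to a vertex drawn from `s` or reuses an edge already traversed
at the current vertex. The number of such edges at `v` is at most twice the multiplicity of `v`.
After multiplication by ratios of multiplicities, which telescope along the walk, the squared
probabilities of a first and of a later traversal of an edge multiply to at least `(8 * L) ^ (-2)`,
so every loop has squared probability at least `(8 * L) ^ (-L)`. Thus there are at most about
`(C * (n + L)) ^ (L / 2)` even loops on `n` vertices; when `L < n`, this follows by concatenating
loops into longer ones.

If `(n + m) * p ^ 2` is small, a random set of triples of density `p` therefore contains on average
`O(n ^ 2)` minimal cycles with at most `m` faces, and deleting one face of each leaves a complex of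
2-girth at least `m`. The theorem takes `p = 24 * n ^ (α - 1)`.
-/

namespace TwoGirth

open Finset

section EvenLoops

variable {V : Type*}

/-- The sequence of edges traversed by the walk that starts at `u` and then visits the vertices
of the list in order. -/
def walkEdges : V → List V → List (Sym2 V)
  | _, [] => []
  | u, x :: l => s(u, x) :: walkEdges x l

@[simp]
lemma length_walkEdges (u : V) (l : List V) : (walkEdges u l).length = l.length := by
  induction l generalizing u with
  | nil => rfl
  | cons x l ih => simp [walkEdges, ih]

lemma walkEdges_append (u : V) (l m : List V) :
    walkEdges u (l ++ m) = walkEdges u l ++ walkEdges (l.getLastD u) m := by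
  induction l generalizing u with
  | nil => rfl
  | cons x l ih => simp only [List.cons_append, walkEdges, ih, List.getLastD_cons]

lemma getLastD_append (u : V) (l m : List V) :
    (l ++ m).getLastD u = m.getLastD (l.getLastD u) := by
  induction l generalizing u with
  | nil => rfl
  | cons x l ih => simp only [List.cons_append, List.getLastD_cons, ih]

lemma getLastD_mem_cons (u : V) (l : List V) : l.getLastD u ∈ u :: l := by
  induction l generalizing u with
  | nil => simp
  | cons x l ih => simpa only [List.getLastD_cons] using List.mem_cons_of_mem u (ih x)

lemma mem_of_mem_walkEdges {u v : V} {l : List V} {e : Sym2 V} (he : e ∈ walkEdges u l)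
    (hv : v ∈ e) : v ∈ u :: l := by
  induction l generalizing u with
  | nil => simp [walkEdges] at he
  | cons x l ih =>
    rcases List.mem_cons.1 he with rfl | he
    · rcases Sym2.mem_iff.1 hv with rfl | rfl <;> simp
    · exact List.mem_cons_of_mem u (ih he)

variable [DecidableEq V]

/-- The walk from `w` through the vertices of `l` is closed and traverses every edge an even
number of times. The starting vertex is not listed in `l`, so that `l.length` is the number of
steps. -/
def IsEvenLoop (w : V) (l : List V) : Prop :=
  l.getLastD w = w ∧ ∀ e, Even ((walkEdges w l).count e)

lemma IsEvenLoop.nil (w : V) : IsEvenLoop w [] := by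
  simp [IsEvenLoop, walkEdges]

lemma IsEvenLoop.append {w : V} {l m : List V} (hl : IsEvenLoop w l) (hm : IsEvenLoop w m) :
    IsEvenLoop w (l ++ m) := by
  refine ⟨by rw [getLastD_append, hl.1, hm.1], fun e => ?_⟩
  rw [walkEdges_append, hl.1, List.count_append]
  exact (hl.2 e).add (hm.2 e)

variable [Fintype V]

open Classical in
/-- The even loops with `L` steps based at `w`. -/
noncomputable def evenLoops (w : V) (L : ℕ) : Finset (List V) :=
  {l ∈ (List.finite_length_eq V L).toFinset | IsEvenLoop w l}

lemma mem_evenLoops {w : V} {L : ℕ} {l : List V} :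
    l ∈ evenLoops w L ↔ l.length = L ∧ IsEvenLoop w l := by
  simp [evenLoops]

lemma card_evenLoops_mul_le (w : V) (L M : ℕ) :
    #(evenLoops w L) * #(evenLoops w M) ≤ #(evenLoops w (L + M)) := by
  rw [← card_product]
  refine card_le_card_of_injOn (fun q => q.1 ++ q.2) (fun q hq => ?_) fun q hq r hr h => ?_
  · obtain ⟨hl, hm⟩ := mem_product.1 hq
    rw [mem_evenLoops] at hl hm
    exact mem_evenLoops.2 ⟨by simp [hl.1, hm.1], hl.2.append hm.2⟩
  · have hlen : q.1.length = r.1.length :=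
      (mem_evenLoops.1 (mem_product.1 hq).1).1.trans (mem_evenLoops.1 (mem_product.1 hr).1).1.symm
    exact Prod.ext_iff.2 (List.append_inj h hlen)

lemma card_evenLoops_pow_le (w : V) (L j : ℕ) :
    #(evenLoops w L) ^ j ≤ #(evenLoops w (j * L)) := by
  induction j with
  | zero => simpa using ⟨[], mem_evenLoops.2 ⟨rfl, .nil w⟩⟩
  | succ j ih =>
    rw [pow_succ, Nat.succ_mul]
    exact (Nat.mul_le_mul_right _ ih).trans (card_evenLoops_mul_le w _ L)

end EvenLoops

section Kraft

variable {α : Type*}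

/-- The probability that a process produces the list `l`, written with its newest entry first,
when `p l x` is the probability that `x` follows the history `l`. -/
def pathWeight (p : List α → α → ℝ) : List α → ℝ
  | [] => 1
  | x :: l => p l x * pathWeight p l

lemma pathWeight_nonneg {p : List α → α → ℝ} (hp : ∀ l x, 0 ≤ p l x) (l : List α) :
    0 ≤ pathWeight p l := by
  induction l with
  | nil => exact zero_le_one
  | cons x l ih => exact mul_nonneg (hp l x) ih

lemma sum_pathWeight_le_one [Fintype α] {p : List α → α → ℝ} (hp : ∀ l x, 0 ≤ p l x)
    (hsum : ∀ l, ∑ x, p l x ≤ 1) (k : ℕ) (S : Finset (List α)) (hS : ∀ l ∈ S, l.length = k) :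
    ∑ l ∈ S, pathWeight p l ≤ 1 := by
  classical
  induction k generalizing S with
  | zero =>
    have hS' : S ⊆ {[]} := fun l hl => by simpa using hS l hl
    calc ∑ l ∈ S, pathWeight p l ≤ ∑ l ∈ {[]}, pathWeight p l :=
          sum_le_sum_of_subset_of_nonneg hS' fun l _ _ => pathWeight_nonneg hp l
      _ = 1 := by simp [pathWeight]
  | succ k ih =>
    set T : Finset (List α) := S.image List.tail
    set cons : List α × α → List α := fun q => q.2 :: q.1
    have hcons : cons.Injective := fun q r h => by
      obtain ⟨h₂, h₁⟩ := List.cons.inj h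
      exact Prod.ext h₁ h₂
    have hST : S ⊆ (T ×ˢ univ).image cons := fun l hl => by
      obtain ⟨x, m, rfl⟩ := List.exists_cons_of_length_eq_add_one (hS l hl)
      exact mem_image.2 ⟨(m, x), by simpa [T] using ⟨_, hl, rfl⟩, rfl⟩
    have hT : ∀ m ∈ T, m.length = k := fun m hm => by
      obtain ⟨l, hl, rfl⟩ := mem_image.1 hm
      simp [hS l hl]
    calc ∑ l ∈ S, pathWeight p l
        ≤ ∑ l ∈ (T ×ˢ univ).image cons, pathWeight p l :=
          sum_le_sum_of_subset_of_nonneg hST fun l _ _ => pathWeight_nonneg hp l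
      _ = ∑ m ∈ T, (∑ x, p m x) * pathWeight p m := by
          rw [sum_image hcons.injOn, sum_product]
          exact sum_congr rfl fun m _ => (sum_mul univ (p m) (pathWeight p m)).symm
      _ ≤ ∑ m ∈ T, pathWeight p m :=
          sum_le_sum fun m _ => mul_le_of_le_one_left (pathWeight_nonneg hp m) (hsum m)
      _ ≤ 1 := ih T hT

end Kraft

section History

variable {α : Type*} [DecidableEq α]

/-- The product over the entries of a list, written with its newest entry first, in which `e`
contributes `A e` on its first occurrence and `B e` on each later one. -/
def historyProd (A B : α → ℝ) : List α → ℝ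
  | [] => 1
  | e :: l => (if e ∈ l then B e else A e) * historyProd A B l

lemma historyProd_nonneg {A B : α → ℝ} (hA : ∀ e, 0 ≤ A e) (hB : ∀ e, 0 ≤ B e) (l : List α) :
    0 ≤ historyProd A B l := by
  induction l with
  | nil => exact zero_le_one
  | cons e l ih => exact mul_nonneg (by split_ifs; exacts [hB e, hA e]) ih

lemma historyProd_eq_prod (A B : α → ℝ) (l : List α) :
    historyProd A B l = ∏ e ∈ l.toFinset, A e * B e ^ (l.count e - 1) := by
  induction l with
  | nil => simp [historyProd]
  | cons a l ih =>
    have hother : ∀ e ∈ l.toFinset.erase a,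
        A e * B e ^ ((a :: l).count e - 1) = A e * B e ^ (l.count e - 1) := fun e he => by
      rw [List.count_cons_of_ne (ne_of_mem_erase he).symm]
    rw [historyProd, ih]
    by_cases ha : a ∈ l
    · have hcount : (a :: l).count a - 1 = (l.count a - 1) + 1 := by
        have := List.count_pos_iff.2 ha
        rw [List.count_cons_self]
        omega
      rw [if_pos ha, List.toFinset_cons, insert_eq_of_mem (List.mem_toFinset.2 ha),
        ← mul_prod_erase _ _ (List.mem_toFinset.2 ha),
        ← mul_prod_erase _ _ (List.mem_toFinset.2 ha), prod_congr rfl hother, hcount]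
      ring
    · have ha' : a ∉ l.toFinset := by simpa using ha
      rw [erase_eq_of_notMem ha'] at hother
      rw [if_neg ha, List.toFinset_cons, prod_insert ha', prod_congr rfl hother,
        List.count_cons_self, List.count_eq_zero_of_not_mem ha]
      simp

lemma pow_length_le_historyProd {A B : α → ℝ} {b : ℝ} {l : List α} (hb : 0 ≤ b)
    (hA : ∀ e ∈ l, 0 ≤ A e) (hAB : ∀ e ∈ l, b ^ 2 ≤ A e * B e) (hB : ∀ e ∈ l, b ≤ B e)
    (heven : ∀ e, Even (l.count e)) :
    b ^ l.length ≤ historyProd A B l := by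
  rw [historyProd_eq_prod, ← List.sum_toFinset_count_eq_length, ← prod_pow_eq_pow_sum]
  refine prod_le_prod (fun e _ => pow_nonneg hb _) fun e he => ?_
  have hel : e ∈ l := List.mem_toFinset.1 he
  obtain ⟨k, hk⟩ : ∃ k, l.count e = k + 2 := by
    have hpos := List.count_pos_iff.2 hel
    obtain ⟨r, hr⟩ := heven e
    exact ⟨l.count e - 2, by omega⟩
  have hBe : 0 ≤ B e := hb.trans (hB e hel)
  calc b ^ l.count e = b ^ 2 * b ^ k := by rw [hk]; ring
    _ ≤ A e * B e * B e ^ k := by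
        gcongr
        · exact mul_nonneg (hA e hel) hBe
        · exact hAB e hel
        · exact hB e hel
    _ = A e * B e ^ (l.count e - 1) := by
        rw [hk, show k + 2 - 1 = k + 1 by omega]
        ring

end History

section Weights

variable {V : Type*} [DecidableEq V]

/-- The product of the multiplicities in `s` of the two ends of an edge. -/
def endsProd (s : Multiset V) (e : Sym2 V) : ℝ :=
  (e.map fun v => (s.count v : ℝ)).mul

@[simp]
lemma endsProd_mk (s : Multiset V) (x y : V) : endsProd s s(x, y) = s.count x * s.count y := by
  simp [endsProd]

lemma endsProd_pos {s : Multiset V} {e : Sym2 V} (he : ∀ v ∈ e, v ∈ s) : 0 < endsProd s e := by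
  induction e using Sym2.ind with | _ x y =>
  rw [endsProd_mk]
  have hx := Multiset.count_pos.2 (he x (Sym2.mem_mk_left x y))
  have hy := Multiset.count_pos.2 (he y (Sym2.mem_mk_right x y))
  positivity

/-- The weight charged to the first traversal of an edge. A move to a new vertex `x` from `h` in
`stepProb` has probability at least `s.count x / (2 * s.card)`; squaring it and symmetrising by the
factor `s.count h / s.count x` gives this formula. -/
noncomputable def newWeight (s : Multiset V) (e : Sym2 V) : ℝ :=
  endsProd s e / (4 * s.card ^ 2)

/-- The weight charged to each further traversal of an edge; the two terms of the maximum come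
from bounding the probability of such a step in `stepProb` by AM-GM and by its second summand
alone. -/
noncomputable def oldWeight (s : Multiset V) (e : Sym2 V) : ℝ :=
  max (1 / (2 * s.card)) (1 / (16 * endsProd s e))

lemma newWeight_nonneg (s : Multiset V) (e : Sym2 V) : 0 ≤ newWeight s e := by
  induction e using Sym2.ind with | _ x y => rw [newWeight, endsProd_mk]; positivity

lemma oldWeight_nonneg (s : Multiset V) (e : Sym2 V) : 0 ≤ oldWeight s e :=
  le_max_of_le_left (by positivity)

lemma sq_le_newWeight_mul_oldWeight {s : Multiset V} {e : Sym2 V} (he : 0 < endsProd s e) :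
    (1 / (8 * s.card) : ℝ) ^ 2 ≤ newWeight s e * oldWeight s e :=
  calc (1 / (8 * s.card) : ℝ) ^ 2 = newWeight s e * (1 / (16 * endsProd s e)) := by
        unfold newWeight
        field_simp
        norm_num
    _ ≤ newWeight s e * oldWeight s e := by
        unfold newWeight
        gcongr
        exact le_max_right _ _

lemma le_oldWeight (s : Multiset V) (e : Sym2 V) : (1 / (8 * s.card) : ℝ) ≤ oldWeight s e := by
  refine le_trans ?_ (le_max_left _ _)
  rcases s.card.eq_zero_or_pos with hs | hs
  · simp [hs]
  · gcongr
    norm_num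

end Weights

section Counting

variable {V : Type*} [Fintype V] [DecidableEq V]

/-- The vertices joined to `z` by an edge of the walk that starts at `u` and then visits the
vertices of `l`. -/
def walkNbrs (z u : V) (l : List V) : Finset V :=
  {y | s(y, z) ∈ walkEdges u l}

lemma mem_walkNbrs {z u y : V} {l : List V} : y ∈ walkNbrs z u l ↔ s(y, z) ∈ walkEdges u l := by
  simp [walkNbrs]

lemma card_walkNbrs_add_le (z u : V) (l : List V) :
    #(walkNbrs z u l) + (if u = z then 1 else 0) ≤ 2 * (u :: l).count z := by
  induction l generalizing u with
  | nil => by_cases h : u = z <;> simp [walkNbrs, walkEdges, h]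
  | cons x l ih =>
    have hsub : walkNbrs z u (x :: l) ⊆
        (if u = z then {x} else ∅) ∪ (if x = z then {u} else ∅) ∪ walkNbrs z x l := fun y hy => by
      rw [mem_walkNbrs, walkEdges, List.mem_cons, Sym2.eq_iff] at hy
      simp only [mem_union, mem_walkNbrs]
      rcases hy with (⟨rfl, rfl⟩ | ⟨rfl, rfl⟩) | hy <;> simp_all
    have hcard := (card_le_card hsub).trans (card_union_le _ _)
    have hends := card_union_le (if u = z then {x} else (∅ : Finset V)) (if x = z then {u} else ∅)
    have hx := ih x
    simp only [List.count_cons (b := u), beq_iff_eq]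
    split_ifs at * <;> simp only [card_singleton, card_empty] at * <;> omega

lemma card_walkNbrs_le (z u : V) (l : List V) : #(walkNbrs z u l) ≤ 2 * (u :: l).count z :=
  (Nat.le_add_right _ _).trans (card_walkNbrs_add_le z u l)

/-- The transition probabilities of the random process that starts at `w` and then, at each step,
tosses a fair coin either to move to a vertex chosen with probability proportional to its
multiplicity in `s`, or to traverse again an edge used before, chosen uniformly among those at the
current vertex. Histories list the newest vertex first. -/
noncomputable def stepProb (w : V) (s : Multiset V) : List V → V → ℝ
  | [], x => if x = w then 1 else 0
  | h :: m, x =>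
    (s.count x / s.card + if x ∈ walkNbrs h h m then (#(walkNbrs h h m) : ℝ)⁻¹ else 0) / 2

lemma stepProb_nonneg (w : V) (s : Multiset V) (l : List V) (x : V) : 0 ≤ stepProb w s l x := by
  cases l <;> unfold stepProb <;> positivity

lemma sum_stepProb_le_one (w : V) (s : Multiset V) (l : List V) : ∑ x, stepProb w s l x ≤ 1 := by
  cases l with
  | nil => simp [stepProb]
  | cons h m =>
    have hnew : ∑ x, (s.count x / s.card : ℝ) ≤ 1 := by
      rw [← sum_div, ← Nat.cast_sum, Multiset.sum_count_eq_card fun a _ => mem_univ a]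
      exact div_self_le_one _
    have hold : ∑ x, (if x ∈ walkNbrs h h m then (#(walkNbrs h h m) : ℝ)⁻¹ else 0) ≤ 1 := by
      rw [sum_ite_mem, univ_inter, sum_const, nsmul_eq_mul]
      exact mul_inv_le_one
    simp only [stepProb]
    rw [← sum_div, sum_add_distrib]
    linarith

lemma count_mul_newWeight_le (w : V) (s : Multiset V) (x h : V) (m : List V) :
    s.count x * newWeight s s(x, h) ≤ s.count h * stepProb w s (h :: m) x ^ 2 := by
  have hp : (s.count x / (2 * s.card) : ℝ) ≤ stepProb w s (h :: m) x := by
    rw [stepProb, mul_comm, ← div_div]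
    gcongr
    exact le_add_of_nonneg_right (by positivity)
  calc s.count x * newWeight s s(x, h) = s.count h * (s.count x / (2 * s.card) : ℝ) ^ 2 := by
        rw [newWeight, endsProd_mk]
        ring
    _ ≤ s.count h * stepProb w s (h :: m) x ^ 2 := by gcongr

-- AM-GM turns the fair mixture of `q` and `r` into their geometric mean.
lemma half_le_mul_sq_midpoint {d q r : ℝ} (hd : 0 ≤ d) (hq : 0 ≤ q) (hr : 1 ≤ 2 * d * r) :
    q / 2 ≤ d * ((q + r) / 2) ^ 2 :=
  calc q / 2 ≤ d * r * q := by nlinarith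
    _ ≤ d * ((q + r) / 2) ^ 2 := by nlinarith [mul_nonneg hd (sq_nonneg (q - r))]

lemma inv_le_mul_sq_midpoint {d q r : ℝ} (hd : 0 < d) (hq : 0 ≤ q) (hr : 1 ≤ 2 * d * r) :
    1 / (16 * d) ≤ d * ((q + r) / 2) ^ 2 := by
  have hr' : 1 / (2 * d) ≤ r := by rwa [div_le_iff₀' (by positivity)]
  calc 1 / (16 * d) = d * (1 / (2 * d) / 2) ^ 2 := by field_simp; norm_num
    _ ≤ d * ((q + r) / 2) ^ 2 := by
        gcongr
        linarith

lemma count_mul_oldWeight_le (w : V) {s : Multiset V} {x h : V} {m : List V}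
    (hs : ↑(h :: m) ≤ s) (hx : s(x, h) ∈ walkEdges h m) :
    s.count x * oldWeight s s(x, h) ≤ s.count h * stepProb w s (h :: m) x ^ 2 := by
  have hxN : x ∈ walkNbrs h h m := mem_walkNbrs.2 hx
  have hN : (0 : ℝ) < #(walkNbrs h h m) := by exact_mod_cast card_pos.2 ⟨x, hxN⟩
  have hNh : (#(walkNbrs h h m) : ℝ) ≤ 2 * s.count h := by
    have hcount : (h :: m).count h ≤ s.count h :=
      Multiset.coe_count h (h :: m) ▸ Multiset.count_le_of_le h hs
    exact_mod_cast (card_walkNbrs_le h h m).trans (Nat.mul_le_mul_left 2 hcount)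
  have hh : (0 : ℝ) < s.count h := by linarith
  have hinv : 1 ≤ 2 * (s.count h : ℝ) * (#(walkNbrs h h m) : ℝ)⁻¹ := by
    rwa [← div_eq_mul_inv, one_le_div hN]
  rw [oldWeight, stepProb, if_pos hxN, mul_max_of_nonneg _ _ (by positivity), endsProd_mk]
  refine max_le ?_ ?_
  · calc (s.count x * (1 / (2 * s.card)) : ℝ) = s.count x / s.card / 2 := by ring
      _ ≤ _ := half_le_mul_sq_midpoint hh.le (by positivity) hinv
  · calc (s.count x * (1 / (16 * (s.count x * s.count h))) : ℝ)
        = s.count x / s.count x * (1 / (16 * s.count h)) := by ring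
      _ ≤ 1 / (16 * s.count h) := mul_le_of_le_one_left (by positivity) (div_self_le_one _)
      _ ≤ _ := inv_le_mul_sq_midpoint hh (by positivity) hinv

lemma count_mul_historyProd_le {w h : V} {s : Multiset V} {m : List V} (hw : m.getLastD h = w)
    (hs : ↑m ≤ s) :
    s.count h * historyProd (newWeight s) (oldWeight s) (walkEdges h m) ≤
      s.count w * pathWeight (stepProb w s) (h :: m) ^ 2 := by
  induction m generalizing h with
  | nil =>
    obtain rfl : h = w := hw
    simp [historyProd, walkEdges, pathWeight, stepProb]
  | cons y m ih =>
    set H := historyProd (newWeight s) (oldWeight s) (walkEdges y m)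
    have hH : 0 ≤ H :=
      historyProd_nonneg (newWeight_nonneg s) (oldWeight_nonneg s) _
    have hstep : s.count h * (if s(h, y) ∈ walkEdges y m then oldWeight s s(h, y)
        else newWeight s s(h, y)) ≤ s.count y * stepProb w s (y :: m) h ^ 2 := by
      split_ifs with hmem
      · exact count_mul_oldWeight_le w hs hmem
      · exact count_mul_newWeight_le w s h y m
    have hms : (m : Multiset V) ≤ s := (Multiset.le_cons_self (↑m) y).trans hs
    have hind : s.count y * H ≤ s.count w * pathWeight (stepProb w s) (y :: m) ^ 2 :=
      ih (by simpa only [List.getLastD_cons] using hw) hms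
    calc s.count h * historyProd (newWeight s) (oldWeight s) (walkEdges h (y :: m))
        = s.count h * (if s(h, y) ∈ walkEdges y m then oldWeight s s(h, y)
            else newWeight s s(h, y)) * H := by rw [walkEdges, historyProd, mul_assoc]
      _ ≤ s.count y * stepProb w s (y :: m) h ^ 2 * H := by gcongr
      _ = stepProb w s (y :: m) h ^ 2 * (s.count y * H) := by ring
      _ ≤ stepProb w s (y :: m) h ^ 2 * (s.count w * pathWeight (stepProb w s) (y :: m) ^ 2) := by
          gcongr
      _ = s.count w * pathWeight (stepProb w s) (h :: y :: m) ^ 2 := by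
          rw [show pathWeight (stepProb w s) (h :: y :: m) =
            stepProb w s (y :: m) h * pathWeight (stepProb w s) (y :: m) from rfl]
          ring

lemma IsEvenLoop.inv_pow_length_le_sq_pathWeight {w : V} {l : List V} (hl : IsEvenLoop w l) :
    (1 / (8 * l.length) : ℝ) ^ l.length ≤ pathWeight (stepProb w ↑l) (w :: l) ^ 2 := by
  rcases eq_or_ne l [] with rfl | hne
  · simp [pathWeight, stepProb]
  have hwl : w ∈ l := by
    obtain ⟨x, l, rfl⟩ := List.exists_cons_of_ne_nil hne
    exact (List.getLastD_cons.symm.trans hl.1) ▸ getLastD_mem_cons x l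
  have hends : ∀ e ∈ walkEdges w l, 0 < endsProd ↑l e := fun e he => endsProd_pos fun v hv => by
    rcases List.mem_cons.1 (mem_of_mem_walkEdges he hv) with rfl | hvl
    exacts [hwl, hvl]
  have hlower : (1 / (8 * (l : Multiset V).card) : ℝ) ^ (walkEdges w l).length ≤
      historyProd (newWeight ↑l) (oldWeight ↑l) (walkEdges w l) :=
    pow_length_le_historyProd (by positivity) (fun e _ => newWeight_nonneg _ e)
      (fun e he => sq_le_newWeight_mul_oldWeight (hends e he)) (fun e _ => le_oldWeight _ e) hl.2
  rw [length_walkEdges, Multiset.coe_card] at hlower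
  have hupper := count_mul_historyProd_le (s := ↑l) hl.1 le_rfl
  refine hlower.trans (le_of_mul_le_mul_left hupper ?_)
  exact_mod_cast Multiset.count_pos.2 (Multiset.mem_coe.2 hwl)

lemma card_evenLoops_fiber_sq_le (w : V) (L : ℕ) (s : Multiset V) :
    #{l ∈ evenLoops w L | Multiset.ofList l = s} ^ 2 ≤ (8 * L) ^ L := by
  set S : Finset (List V) := {l ∈ evenLoops w L | Multiset.ofList l = s}
  set c : ℝ := (1 / (8 * L)) ^ L with hc
  have hweight : ∀ l ∈ S, √c ≤ pathWeight (stepProb w s) (w :: l) := fun l hlS => by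
    obtain ⟨hl, rfl⟩ := mem_filter.1 hlS
    obtain ⟨rfl, hloop⟩ := mem_evenLoops.1 hl
    exact Real.sqrt_le_iff.2 ⟨pathWeight_nonneg (stepProb_nonneg w _) _,
      hloop.inv_pow_length_le_sq_pathWeight⟩
  have hkraft : ∑ l ∈ S, pathWeight (stepProb w s) (w :: l) ≤ 1 := by
    rw [← sum_image (f := pathWeight (stepProb w s)) (List.cons_injective (a := w)).injOn]
    refine sum_pathWeight_le_one (stepProb_nonneg w s) (sum_stepProb_le_one w s) (L + 1) _ ?_
    exact forall_mem_image.2 fun l hl => by simp [(mem_evenLoops.1 (mem_filter.1 hl).1).1]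
  have hsqrt : #S * √c ≤ 1 := by
    simpa only [nsmul_eq_mul] using (card_nsmul_le_sum S _ _ hweight).trans hkraft
  have hsq : (#S : ℝ) ^ 2 * c ≤ 1 := by
    rw [← Real.sq_sqrt (show 0 ≤ c by positivity), ← mul_pow]
    exact pow_le_one₀ (by positivity) hsqrt
  rcases L.eq_zero_or_pos with rfl | hL
  · simpa [hc] using hsq
  · rw [hc, one_div_pow, mul_one_div, div_le_one (by positivity)] at hsq
    exact_mod_cast hsq

lemma card_evenLoops_sq_le_multichoose (w : V) (L : ℕ) :
    #(evenLoops w L) ^ 2 ≤ (8 * L) ^ L * (Fintype.card V).multichoose L ^ 2 := by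
  classical
  set n := Nat.sqrt ((8 * L) ^ L)
  have hfiber : ∀ s ∈ (univ : Finset (Sym V L)).image (↑),
      #{l ∈ evenLoops w L | Multiset.ofList l = s} ≤ n := fun s _ =>
    Nat.le_sqrt'.2 (card_evenLoops_fiber_sq_le w L s)
  have hmaps : ∀ l ∈ evenLoops w L, (l : Multiset V) ∈ (univ : Finset (Sym V L)).image (↑) :=
    fun l hl => mem_image.2 ⟨⟨l, (mem_evenLoops.1 hl).1⟩, mem_univ _, rfl⟩
  have hcard : #((univ : Finset (Sym V L)).image ((↑) : Sym V L → Multiset V)) ≤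
      (Fintype.card V).multichoose L :=
    card_image_le.trans (Sym.card_sym_eq_multichoose V L).le
  calc #(evenLoops w L) ^ 2 ≤ (n * (Fintype.card V).multichoose L) ^ 2 := by
        gcongr
        exact (card_le_mul_card_image_of_maps_to hmaps n hfiber).trans (Nat.mul_le_mul_left n hcard)
    _ ≤ (8 * L) ^ L * (Fintype.card V).multichoose L ^ 2 := by
        rw [mul_pow]
        exact Nat.mul_le_mul_right _ (Nat.sqrt_le' _)

lemma multichoose_le_two_pow (n k : ℕ) : n.multichoose k ≤ 2 ^ (n + k) := by
  rw [Nat.multichoose_eq]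
  exact (Nat.choose_le_two_pow _ _).trans (Nat.pow_le_pow_right two_pos (Nat.sub_le _ _))

lemma card_evenLoops_sq_le_of_card_le (w : V) {L : ℕ} (hL : Fintype.card V ≤ L) :
    #(evenLoops w L) ^ 2 ≤ (128 * L) ^ L :=
  calc #(evenLoops w L) ^ 2 ≤ (8 * L) ^ L * (Fintype.card V).multichoose L ^ 2 :=
        card_evenLoops_sq_le_multichoose w L
    _ ≤ (8 * L) ^ L * (2 ^ (L + L)) ^ 2 := by
        gcongr
        exact (multichoose_le_two_pow _ _).trans (by gcongr; norm_num)
    _ = (128 * L) ^ L := by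
        rw [← pow_mul, show (L + L) * 2 = 4 * L by ring, pow_mul, ← mul_pow]
        ring

lemma card_evenLoops_sq_le (w : V) {L : ℕ} (hL : 0 < L) :
    #(evenLoops w L) ^ 2 ≤ (128 * (Fintype.card V + L)) ^ L := by
  set n := Fintype.card V
  set j := n / L + 1
  have hnj : n ≤ j * L := (Nat.lt_mul_of_div_lt (Nat.lt_succ_self _) hL).le
  have hjn : j * L ≤ n + L := by
    rw [Nat.succ_mul]
    exact Nat.add_le_add_right (Nat.div_mul_le_self n L) L
  refine le_of_pow_le_pow_left₀ (Nat.succ_ne_zero _ : j ≠ 0) (Nat.zero_le _) ?_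
  calc (#(evenLoops w L) ^ 2) ^ j = (#(evenLoops w L) ^ j) ^ 2 := pow_right_comm _ _ _
    _ ≤ #(evenLoops w (j * L)) ^ 2 := by gcongr; exact card_evenLoops_pow_le w L j
    _ ≤ (128 * (j * L)) ^ (j * L) := card_evenLoops_sq_le_of_card_le w hnj
    _ ≤ (128 * (n + L)) ^ (j * L) := by gcongr
    _ = ((128 * (n + L)) ^ L) ^ j := by rw [mul_comm j, pow_mul]

end Counting

section Trees

open BinaryTree

variable {V : Type*}

/-- The labels of a binary tree, listed in in-order. -/
def labels : BinaryTree V → List V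
  | .nil => []
  | .node x l r => labels l ++ x :: labels r

@[simp]
lemma length_labels (T : BinaryTree V) : (labels T).length = T.numNodes := by
  induction T with
  | nil => rfl
  | node x l r ihl ihr => simp [labels, ihl, ihr, numNodes]; omega

lemma numNodes_map {W : Type*} (f : V → W) (T : BinaryTree V) :
    (T.map f).numNodes = T.numNodes := by
  induction T with
  | nil => rfl
  | node x l r ihl ihr => simp only [BinaryTree.map, numNodes, ihl, ihr]

lemma eq_of_shape_eq_of_labels_eq {T T' : BinaryTree V}
    (hshape : T.map (fun _ => ()) = T'.map fun _ => ()) (hlabels : labels T = labels T') :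
    T = T' := by
  induction T generalizing T' with
  | nil =>
    cases T' with
    | nil => rfl
    | node => simp [BinaryTree.map] at hshape
  | node x l r ihl ihr =>
    cases T' with
    | nil => simp [BinaryTree.map] at hshape
    | node x' l' r' =>
      obtain ⟨-, hl, hr⟩ := BinaryTree.node.inj hshape
      have hlen : (labels l).length = (labels l').length := by
        simpa only [length_labels, numNodes_map] using congrArg numNodes hl
      obtain ⟨hl', hxr⟩ := List.append_inj hlabels hlen
      obtain ⟨rfl, hr'⟩ := List.cons.inj hxr
      rw [ihl hl hl', ihr hr hr']

/-- A binary tree describes a triangulated polygon with a base edge from `u` to `w`: the root label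
is the apex of the triangle on the base, and the two subtrees describe the polygons glued to its
other two edges. These are the sides of the polygon other than the base. -/
def sides : BinaryTree V → V → V → Multiset (Sym2 V)
  | .nil, u, w => {s(u, w)}
  | .node x l r, u, w => sides l u x + sides r x w

lemma sides_eq_walkEdges (T : BinaryTree V) (u w : V) :
    sides T u w = walkEdges u (labels T ++ [w]) := by
  induction T generalizing u w with
  | nil => rfl
  | node x l r ihl ihr =>
    have hsplit : labels (.node x l r) ++ [w] = (labels l ++ [x]) ++ (labels r ++ [w]) := by
      simp [labels]
    rw [sides, ihl, ihr, hsplit, walkEdges_append u (labels l ++ [x]), List.getLastD_concat,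
      Multiset.coe_add]

variable [DecidableEq V]

/-- The triangles of the triangulated polygon described by a binary tree; see `sides`. -/
def faces : BinaryTree V → V → V → Multiset (Finset V)
  | .nil, _, _ => 0
  | .node x l r, u, w => {u, w, x} ::ₘ (faces l u x + faces r x w)

lemma card_faces (T : BinaryTree V) (u w : V) : (faces T u w).card = T.numNodes := by
  induction T generalizing u w with
  | nil => rfl
  | node x l r ihl ihr => simp [faces, ihl, ihr, numNodes]

lemma exists_glue_triangle {T : BinaryTree V} {u w a b : V} (hab : s(a, b) ∈ sides T u w)
    (x : V) :
    ∃ T' : BinaryTree V, faces T' u w = {a, b, x} ::ₘ faces T u w ∧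
      s(a, b) ::ₘ sides T' u w = s(a, x) ::ₘ s(x, b) ::ₘ sides T u w := by
  induction T generalizing u w with
  | nil =>
    refine ⟨.node x .nil .nil, ?_⟩
    rcases Sym2.eq_iff.1 (Multiset.mem_singleton.1 hab) with ⟨rfl, rfl⟩ | ⟨rfl, rfl⟩
    · refine ⟨rfl, ?_⟩
      simp only [sides, ← Multiset.singleton_add]
      abel
    · refine ⟨congrArg (· ::ₘ 0) (insert_comm b a {x}), ?_⟩
      simp only [sides, ← Multiset.singleton_add]
      rw [Sym2.eq_swap (a := x) (b := a), Sym2.eq_swap (a := b) (b := x),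
        Sym2.eq_swap (a := b) (b := a)]
      abel
  | node y l r ihl ihr =>
    rcases Multiset.mem_add.1 hab with h | h
    · obtain ⟨l', hfaces, hsides⟩ := ihl h
      refine ⟨.node y l' r, ?_, ?_⟩
      · rw [faces, hfaces, Multiset.cons_add, Multiset.cons_swap, faces]
      · rw [sides, ← Multiset.cons_add, hsides, Multiset.cons_add, Multiset.cons_add, sides]
    · obtain ⟨r', hfaces, hsides⟩ := ihr h
      refine ⟨.node y l r', ?_, ?_⟩
      · rw [faces, hfaces, Multiset.add_cons, Multiset.cons_swap, faces]
      · rw [sides, ← Multiset.add_cons, hsides, Multiset.add_cons, Multiset.add_cons, sides]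

end Trees

section Unfolding

variable {V : Type} [DecidableEq V]

/-- The polygon described by `T` with base `(w, w)` is an unfolding of the set of triangles `Y`: it
is glued from the triangles of `Y` and one degenerate triangle `{w, u}`, the digon that carries the
base, and modulo 2 its sides are the boundary of `Y`. -/
structure IsUnfolding (T : BinaryTree V) (w u : V) (Y : Finset (Finset V)) : Prop where
  faces_eq : faces T w w = {w, u} ::ₘ Y.val
  not_isDiag : ∀ e ∈ sides T w w, ¬ e.IsDiag
  even_count_add : ∀ a b, a ≠ b →
    Even ((sides T w w).count s(a, b) + #{t ∈ Y | {a, b} ⊆ t})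

lemma isUnfolding_empty {w u : V} (hwu : w ≠ u) :
    IsUnfolding (.node u .nil .nil) w u ∅ where
  faces_eq := by simp [faces]
  not_isDiag := by simp [sides, hwu, hwu.symm]
  even_count_add a b _ := by
    simp only [sides, Sym2.eq_swap (a := u), ← two_nsmul, Multiset.count_nsmul, filter_empty,
      card_empty, add_zero]
    exact even_two_mul _

lemma ite_pair_subset_triangle {a b x c d : V} (hab : a ≠ b) (hax : a ≠ x) (hxb : x ≠ b)
    (hcd : c ≠ d) :
    (if {c, d} ⊆ ({a, b, x} : Finset V) then 1 else 0) =
      (if s(c, d) = s(a, b) then 1 else 0) + (if s(c, d) = s(a, x) then 1 else 0) +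
        (if s(c, d) = s(x, b) then 1 else 0) := by
  simp only [insert_subset_iff, singleton_subset_iff, mem_insert, mem_singleton, Sym2.eq_iff]
  grind

lemma IsUnfolding.exists_insert {T : BinaryTree V} {w u : V} {Y : Finset (Finset V)}
    (hT : IsUnfolding T w u Y) {t : Finset V} (ht : #t = 3) (htY : t ∉ Y) {a b : V}
    (hab : a ≠ b) (habt : {a, b} ⊆ t) (hside : s(a, b) ∈ sides T w w) :
    ∃ T', IsUnfolding T' w u (insert t Y) := by
  obtain ⟨x, hx, rfl⟩ : ∃ x, x ∉ ({a, b} : Finset V) ∧ t = {a, b, x} := by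
    obtain ⟨x, hx, hxt⟩ := exists_eq_insert_iff.2 ⟨habt, by rw [card_pair hab, ht]⟩
    exact ⟨x, hx, by rw [← hxt, insert_comm, pair_comm x b]⟩
  have hax : a ≠ x := by rintro rfl; simp at hx
  have hxb : x ≠ b := by rintro rfl; simp at hx
  obtain ⟨T', hfaces, hsides⟩ := exists_glue_triangle hside x
  refine ⟨T', ⟨?_, fun e he => ?_, fun c d hcd => ?_⟩⟩
  · rw [hfaces, hT.faces_eq, Multiset.cons_swap, insert_val_of_notMem htY]
  · have he' : e ∈ s(a, x) ::ₘ s(x, b) ::ₘ sides T w w := hsides ▸ Multiset.mem_cons_of_mem he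
    rcases (by simpa using he') with rfl | rfl | he'
    exacts [hax, hxb, hT.not_isDiag e he']
  · have hcount := congrArg (Multiset.count s(c, d)) hsides
    have htri := ite_pair_subset_triangle hab hax hxb hcd
    have hcard : #{t ∈ insert {a, b, x} Y | {c, d} ⊆ t} =
        #{t ∈ Y | {c, d} ⊆ t} + if {c, d} ⊆ ({a, b, x} : Finset V) then 1 else 0 := by
      rw [filter_insert]
      split_ifs
      · exact card_insert_of_notMem fun h => htY (mem_of_mem_filter _ h)
      · rfl
    obtain ⟨k, hk⟩ := hT.even_count_add c d hcd
    simp only [Multiset.count_cons] at hcount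
    rw [hcard, Nat.even_iff]
    omega

/-- A minimal nontrivial 2-cycle. -/
def IsMinimalCycle (Z : Finset (Finset V)) : Prop :=
  Minimal (fun Z => Z.Nonempty ∧ IsTwoCycle Z) Z

lemma exists_isMinimalCycle_subset {Z : Finset (Finset V)} (hne : Z.Nonempty)
    (hZ : IsTwoCycle Z) :
    ∃ Y ⊆ Z, IsMinimalCycle Y :=
  exists_minimal_le_of_wellFoundedLT _ Z ⟨hne, hZ⟩

lemma IsMinimalCycle.exists_odd {Y Z : Finset (Finset V)} (hZ : IsMinimalCycle Z)
    (hYZ : Y ⊂ Z) (hY : Y.Nonempty) :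
    ∃ a b, a ≠ b ∧ Odd #{t ∈ Y | {a, b} ⊆ t} := by
  by_contra! h
  refine hYZ.not_subset (hZ.2 ⟨hY, fun t ht => hZ.1.2.1 t (hYZ.1 ht), fun e he => ?_⟩ hYZ.1)
  obtain ⟨a, b, hab, rfl⟩ := card_eq_two.1 he
  exact Nat.not_odd_iff_even.1 (h a b hab)

lemma IsMinimalCycle.exists_isUnfolding_insert {Y Z : Finset (Finset V)} (hZ : IsMinimalCycle Z)
    (hYZ : Y ⊂ Z) (hY : Y.Nonempty) {T : BinaryTree V} {w u : V} (hT : IsUnfolding T w u Y) :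
    ∃ t ∈ Z, t ∉ Y ∧ ∃ T', IsUnfolding T' w u (insert t Y) := by
  obtain ⟨a, b, hab, hodd⟩ := hZ.exists_odd hYZ hY
  have hside : s(a, b) ∈ sides T w w := by
    have hcount := (Nat.even_add'.1 (hT.even_count_add a b hab)).2 hodd
    exact Multiset.count_pos.1 hcount.pos
  obtain ⟨t, htZ, htY, habt⟩ : ∃ t ∈ Z, t ∉ Y ∧ {a, b} ⊆ t := by
    by_contra! h
    have heq : {t ∈ Y | {a, b} ⊆ t} = {t ∈ Z | {a, b} ⊆ t} := by
      ext t
      simp only [mem_filter]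
      exact ⟨fun ht => ⟨hYZ.1 ht.1, ht.2⟩, fun ht => ⟨by_contra fun htY => h t ht.1 htY ht.2, ht.2⟩⟩
    exact Nat.not_even_iff_odd.2 (heq ▸ hodd) (hZ.1.2.2 _ (card_pair hab))
  exact ⟨t, htZ, htY, hT.exists_insert (hZ.1.2.1 t htZ) htY hab habt hside⟩

lemma IsMinimalCycle.exists_isUnfolding {Z : Finset (Finset V)} (hZ : IsMinimalCycle Z) :
    ∃ T w u, IsUnfolding T w u Z := by
  obtain ⟨t, ht⟩ := hZ.1.1
  have htri : #t = 3 := hZ.1.2.1 t ht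
  obtain ⟨w, hw, u, hu, hwu⟩ := one_lt_card.1 (by omega : 1 < #t)
  obtain ⟨T, hT⟩ := (isUnfolding_empty hwu).exists_insert htri (notMem_empty t) hwu
    (insert_subset hw (singleton_subset_iff.2 hu)) (by simp [sides])
  classical
  obtain ⟨Y, -, hmax⟩ := exists_le_maximal {Y ∈ Z.powerset | Y.Nonempty ∧ ∃ T, IsUnfolding T w u Y}
    (a := {t}) (by simpa [ht] using ⟨T, hT⟩)
  simp only [mem_filter, mem_powerset] at hmax
  obtain ⟨hYZ, hY, T, hT⟩ := hmax.prop
  obtain rfl | hYZ := hYZ.eq_or_ssubset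
  · exact ⟨T, w, u, hT⟩
  · obtain ⟨t, htZ, htY, hT'⟩ := hZ.exists_isUnfolding_insert hYZ hY hT
    exact absurd (hmax.le_of_ge ⟨insert_subset htZ hYZ.1, insert_nonempty t Y, hT'⟩
      (subset_insert t Y) (mem_insert_self t Y)) htY

end Unfolding

section CountingCycles

variable {V : Type} [DecidableEq V]

lemma IsUnfolding.filter_faces {T : BinaryTree V} {w u : V} {Y : Finset (Finset V)}
    (hT : IsUnfolding T w u Y) (hY : ∀ t ∈ Y, #t = 3) :
    {t ∈ (faces T w w).toFinset | #t = 3} = Y := by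
  have hwu : #{w, u} ≠ 3 := (card_le_two.trans_lt (by norm_num)).ne
  rw [hT.faces_eq, Multiset.toFinset_cons, filter_insert, if_neg hwu, val_toFinset,
    filter_true_of_mem hY]

lemma IsUnfolding.numNodes_eq {T : BinaryTree V} {w u : V} {Y : Finset (Finset V)}
    (hT : IsUnfolding T w u Y) : T.numNodes = #Y + 1 := by
  rw [← card_faces T w w, hT.faces_eq, Multiset.card_cons, card_val]

lemma IsUnfolding.isEvenLoop {T : BinaryTree V} {w u : V} {Y : Finset (Finset V)}
    (hT : IsUnfolding T w u Y) (hY : IsTwoCycle Y) : IsEvenLoop w (labels T ++ [w]) := by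
  refine ⟨List.getLastD_concat, fun e => ?_⟩
  rw [← Multiset.coe_count, ← sides_eq_walkEdges]
  by_cases hmem : e ∈ sides T w w
  · induction e using Sym2.ind with | _ a b =>
    have hab : a ≠ b := hT.not_isDiag _ hmem
    exact (Nat.even_add.1 (hT.even_count_add a b hab)).2 (hY.2 _ (card_pair hab))
  · simp [Multiset.count_eq_zero_of_notMem hmem]

/-- The tree shape `q.1` and the boundary walk `q.2` are those of an unfolding of `Z` with base
`(w, w)`. -/
def IsCode (Z : Finset (Finset V)) (w : V) (q : BinaryTree Unit × List V) : Prop :=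
  ∃ T u, IsUnfolding T w u Z ∧ q = (T.map fun _ => (), labels T ++ [w])

lemma IsCode.eq {Z Z' : Finset (Finset V)} {w : V} {q : BinaryTree Unit × List V}
    (hZ : ∀ t ∈ Z, #t = 3) (hZ' : ∀ t ∈ Z', #t = 3) (h : IsCode Z w q) (h' : IsCode Z' w q) :
    Z = Z' := by
  obtain ⟨T, u, hT, rfl⟩ := h
  obtain ⟨T', u', hT', hq⟩ := h'
  obtain ⟨hshape, hwalk⟩ := Prod.ext_iff.1 hq
  obtain rfl := eq_of_shape_eq_of_labels_eq hshape (List.append_cancel_right hwalk)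
  rw [← hT.filter_faces hZ, hT'.filter_faces hZ']

lemma IsMinimalCycle.exists_isCode [Fintype V] {Z : Finset (Finset V)} (hZ : IsMinimalCycle Z) :
    ∃ w, ∃ q ∈ BinaryTree.treesOfNumNodesEq (#Z + 1) ×ˢ evenLoops w (#Z + 2), IsCode Z w q := by
  obtain ⟨T, w, u, hT⟩ := hZ.exists_isUnfolding
  refine ⟨w, _, mem_product.2 ⟨?_, ?_⟩, T, u, hT, rfl⟩
  · rw [BinaryTree.mem_treesOfNumNodesEq, numNodes_map, hT.numNodes_eq]
  · refine mem_evenLoops.2 ⟨?_, hT.isEvenLoop hZ.1.2⟩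
    rw [List.length_append, length_labels, hT.numNodes_eq, List.length_singleton]

lemma catalan_le_four_pow (n : ℕ) : catalan n ≤ 4 ^ n := by
  rw [catalan_eq_centralBinom_div]
  exact (Nat.div_le_self _ _).trans (Nat.centralBinom_le_four_pow n)

lemma card_minimalCycles_le [Fintype V] {f : ℕ} {B : Finset (Finset (Finset V))}
    (hB : ∀ Z ∈ B, IsMinimalCycle Z ∧ #Z = f) :
    #B ≤ ∑ w : V, catalan (f + 1) * #(evenLoops w (f + 2)) := by
  set codes : Finset ((_ : V) × BinaryTree Unit × List V) := univ.sigma fun w =>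
    BinaryTree.treesOfNumNodesEq (f + 1) ×ˢ evenLoops w (f + 2)
  have hcodes : #codes = ∑ w : V, catalan (f + 1) * #(evenLoops w (f + 2)) := by
    simp only [codes, card_sigma, card_product, BinaryTree.treesOfNumNodesEq_card_eq_catalan]
  rw [← hcodes]
  refine card_le_card_of_forall_subsingleton (fun Z q => IsCode Z q.1 q.2) (fun Z hZ => ?_) ?_
  · obtain ⟨hZ, rfl⟩ := hB Z hZ
    obtain ⟨w, q, hq, hcode⟩ := hZ.exists_isCode
    exact ⟨⟨w, q⟩, mem_sigma.2 ⟨mem_univ w, hq⟩, hcode⟩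
  · intro q _ Z hZ Z' hZ'
    exact hZ.2.eq (hB Z hZ.1).1.1.2.1 (hB Z' hZ'.1).1.1.2.1 hZ'.2

lemma card_minimalCycles_sq_le [Fintype V] {f : ℕ} {B : Finset (Finset (Finset V))}
    (hB : ∀ Z ∈ B, IsMinimalCycle Z ∧ #Z = f) :
    #B ^ 2 ≤ Fintype.card V ^ 2 * (2048 * (Fintype.card V + (f + 2))) ^ (f + 2) := by
  set n := Fintype.card V
  set K := (128 * (n + (f + 2))) ^ (f + 2) with hK
  have hB' : #B ≤ n * (4 ^ (f + 1) * Nat.sqrt K) :=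
    calc #B ≤ ∑ w : V, catalan (f + 1) * #(evenLoops w (f + 2)) := card_minimalCycles_le hB
      _ ≤ ∑ _w : V, 4 ^ (f + 1) * Nat.sqrt K := by
          gcongr with w
          · exact catalan_le_four_pow _
          · exact Nat.le_sqrt'.2 (card_evenLoops_sq_le w (Nat.succ_pos _))
      _ = n * (4 ^ (f + 1) * Nat.sqrt K) := by rw [sum_const, card_univ, smul_eq_mul]
  calc #B ^ 2 ≤ (n * (4 ^ (f + 1) * Nat.sqrt K)) ^ 2 := by gcongr
    _ = n ^ 2 * (16 ^ (f + 1) * Nat.sqrt K ^ 2) := by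
        rw [mul_pow, mul_pow, ← pow_mul, mul_comm (f + 1), pow_mul]
        norm_num
    _ ≤ n ^ 2 * (16 ^ (f + 2) * K) := by
        gcongr
        · norm_num
        · norm_num
        · exact Nat.sqrt_le' K
    _ = n ^ 2 * (2048 * (n + (f + 2))) ^ (f + 2) := by
        rw [hK, ← mul_pow]
        ring

lemma card_minimalCycles_mul_pow_le [Fintype V] {f : ℕ} {B : Finset (Finset (Finset V))}
    (hB : ∀ Z ∈ B, IsMinimalCycle Z ∧ #Z = f) {p : ℝ}
    (hpf : 32768 * (Fintype.card V + f + 2) * p ^ 2 ≤ 1) :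
    #B * p ^ f ≤ 6144 * Fintype.card V ^ 2 * (1 / 2) ^ f := by
  set n := Fintype.card V
  set K : ℝ := 2048 * (n + (f + 2)) with hK
  have hcard : (#B : ℝ) ^ 2 ≤ n ^ 2 * K ^ (f + 2) := by
    rw [hK]
    exact_mod_cast card_minimalCycles_sq_le hB
  have hKp : K * p ^ 2 ≤ (1 / 4) ^ 2 := by
    rw [hK]
    linarith
  have hsq : (#B * p ^ f) ^ 2 ≤ (n * K * (1 / 4) ^ f) ^ 2 :=
    calc (#B * p ^ f) ^ 2 = #B ^ 2 * (p ^ 2) ^ f := by ring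
      _ ≤ n ^ 2 * K ^ (f + 2) * (p ^ 2) ^ f := by gcongr
      _ = (n * K) ^ 2 * (K * p ^ 2) ^ f := by rw [mul_pow K]; ring
      _ ≤ (n * K) ^ 2 * ((1 / 4) ^ 2) ^ f := by gcongr
      _ = (n * K * (1 / 4) ^ f) ^ 2 := by rw [mul_pow (n * K), pow_right_comm]
  have hnK : n * K ≤ 6144 * n ^ 2 * 2 ^ f := by
    have hf : f + 2 ≤ 2 * 2 ^ f := by
      have := Nat.lt_two_pow_self (n := f)
      omega
    have hn : n * (n + (f + 2)) ≤ 3 * n ^ 2 * 2 ^ f := by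
      nlinarith [Nat.le_self_pow two_ne_zero n, Nat.one_le_two_pow (n := f),
        Nat.mul_le_mul_left n hf, Nat.zero_le (n * n)]
    have hn' : (n * (n + (f + 2)) : ℝ) ≤ 3 * n ^ 2 * 2 ^ f := by exact_mod_cast hn
    rw [hK]
    linarith
  calc #B * p ^ f ≤ n * K * (1 / 4) ^ f := le_of_sq_le_sq hsq (by positivity)
    _ ≤ 6144 * n ^ 2 * 2 ^ f * (1 / 4) ^ f := by gcongr
    _ = 6144 * n ^ 2 * (1 / 2) ^ f := by rw [mul_assoc, ← mul_pow]; norm_num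

lemma sum_minimalCycles_pow_card_le [Fintype V] {B : Finset (Finset (Finset V))} {p : ℝ}
    (hB : ∀ Z ∈ B, IsMinimalCycle Z ∧ 32768 * (Fintype.card V + #Z + 2) * p ^ 2 ≤ 1) :
    ∑ Z ∈ B, p ^ #Z ≤ 12288 * Fintype.card V ^ 2 :=
  calc ∑ Z ∈ B, p ^ #Z = ∑ f ∈ B.image card, ∑ Z ∈ B with #Z = f, p ^ #Z :=
        (sum_fiberwise_of_maps_to (fun _ => mem_image_of_mem card) _).symm
    _ = ∑ f ∈ B.image card, #{Z ∈ B | #Z = f} * p ^ f :=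
        sum_congr rfl fun f _ => by
          rw [sum_congr rfl fun Z hZ => by rw [(mem_filter.1 hZ).2], sum_const, nsmul_eq_mul]
    _ ≤ ∑ f ∈ B.image card, 6144 * (Fintype.card V : ℝ) ^ 2 * (1 / 2) ^ f :=
        sum_le_sum fun f hf => by
          obtain ⟨Z, hZ, rfl⟩ := mem_image.1 hf
          refine card_minimalCycles_mul_pow_le (fun Y hY => ?_) (hB Z hZ).2
          exact ⟨(hB Y (mem_filter.1 hY).1).1, (mem_filter.1 hY).2⟩
    _ ≤ 6144 * (Fintype.card V : ℝ) ^ 2 * 2 := by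
        rw [← mul_sum]
        gcongr
        exact (summable_geometric_two.sum_le_tsum _ fun _ _ => by positivity).trans_eq
          tsum_geometric_two
    _ = 12288 * Fintype.card V ^ 2 := by ring

end CountingCycles

section Deletion

variable {α : Type*}

/-- The probability that a random subset of `P`, containing each element independently with
probability `p`, equals `F`. -/
def bernoulliWeight (p : ℝ) (P F : Finset α) : ℝ :=
  p ^ #F * (1 - p) ^ (#P - #F)

lemma sum_bernoulliWeight_superset [DecidableEq α] (p : ℝ) {P Z : Finset α} (hZ : Z ⊆ P) :
    ∑ F ∈ P.powerset with Z ⊆ F, bernoulliWeight p P F = p ^ #Z := by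
  have hIcc : {F ∈ P.powerset | Z ⊆ F} = (P \ Z).powerset.image (Z ∪ ·) := by
    rw [← Icc_eq_image_powerset hZ]
    ext F
    simp [and_comm]
  have hdisj : ∀ F ∈ (P \ Z).powerset, Disjoint Z F := fun F hF =>
    disjoint_sdiff.mono_right (mem_powerset.1 hF)
  have hinj : Set.InjOn (Z ∪ ·) ((P \ Z).powerset : Set (Finset α)) := fun F hF G hG h => by
    rw [← union_sdiff_cancel_left (hdisj F hF), ← union_sdiff_cancel_left (hdisj G hG)]
    exact congrArg (· \ Z) h
  rw [hIcc, sum_image hinj]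
  calc ∑ F ∈ (P \ Z).powerset, bernoulliWeight p P (Z ∪ F)
      = ∑ F ∈ (P \ Z).powerset, p ^ #Z * (p ^ #F * (1 - p) ^ (#(P \ Z) - #F)) :=
        sum_congr rfl fun F hF => by
          rw [bernoulliWeight, card_union_of_disjoint (hdisj F hF), card_sdiff_of_subset hZ,
            Nat.sub_add_eq, pow_add, mul_assoc]
    _ = p ^ #Z := by
        rw [← mul_sum, sum_pow_mul_eq_add_pow, add_sub_cancel, one_pow, mul_one]

lemma sum_bernoulliWeight_mul_card_filter [DecidableEq α] (p : ℝ) {P : Finset α}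
    {B : Finset (Finset α)} (hB : ∀ Z ∈ B, Z ⊆ P) :
    ∑ F ∈ P.powerset, bernoulliWeight p P F * #{Z ∈ B | Z ⊆ F} = ∑ Z ∈ B, p ^ #Z := by
  simp only [card_filter, Nat.cast_sum, Nat.cast_ite, Nat.cast_one, Nat.cast_zero, mul_sum,
    mul_ite, mul_one, mul_zero]
  rw [sum_comm]
  exact sum_congr rfl fun Z hZ => by rw [← sum_filter, sum_bernoulliWeight_superset p (hB Z hZ)]

lemma sum_bernoulliWeight_mul_card (p : ℝ) (P : Finset α) :
    ∑ F ∈ P.powerset, bernoulliWeight p P F * #F = p * #P := by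
  classical
  have hsingletons : ∀ F ∈ P.powerset, #{Z ∈ P.map ⟨_, singleton_injective⟩ | Z ⊆ F} = #F :=
    fun F hF => by
      have hPF : {x ∈ P | {x} ⊆ F} = F := by
        simp only [singleton_subset_iff, filter_mem_eq_inter]
        exact inter_eq_right.2 (mem_powerset.1 hF)
      rw [filter_map, card_map]
      exact congrArg card hPF
  rw [sum_congr rfl fun F hF => by rw [← hsingletons F hF],
    sum_bernoulliWeight_mul_card_filter]
  · simp [mul_comm]
  · simp

lemma exists_le_card_sub_card_filter [DecidableEq α] {p : ℝ} (hp0 : 0 ≤ p) (hp1 : p ≤ 1)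
    {P : Finset α} {B : Finset (Finset α)} (hB : ∀ Z ∈ B, Z ⊆ P) :
    ∃ F ⊆ P, p * #P - ∑ Z ∈ B, p ^ #Z ≤ #F - #{Z ∈ B | Z ⊆ F} := by
  obtain ⟨F, hF, hmax⟩ := exists_max_image P.powerset (fun F => (#F - #{Z ∈ B | Z ⊆ F} : ℝ))
    (powerset_nonempty P)
  refine ⟨F, mem_powerset.1 hF, ?_⟩
  have htotal : ∑ G ∈ P.powerset, bernoulliWeight p P G = 1 := by
    simpa using sum_bernoulliWeight_superset p (empty_subset P)
  calc p * #P - ∑ Z ∈ B, p ^ #Z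
      = ∑ G ∈ P.powerset, bernoulliWeight p P G * (#G - #{Z ∈ B | Z ⊆ G}) := by
        simp only [mul_sub]
        rw [sum_sub_distrib, sum_bernoulliWeight_mul_card, sum_bernoulliWeight_mul_card_filter p hB]
    _ ≤ ∑ G ∈ P.powerset, bernoulliWeight p P G * (#F - #{Z ∈ B | Z ⊆ F}) := by
        refine sum_le_sum fun G hG => mul_le_mul_of_nonneg_left (hmax G hG) ?_
        exact mul_nonneg (pow_nonneg hp0 _) (pow_nonneg (sub_nonneg.2 hp1) _)
    _ = #F - #{Z ∈ B | Z ⊆ F} := by rw [← sum_mul, htotal, one_mul]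

lemma exists_subset_forall_not_subset [DecidableEq α] (F : Finset α) {B : Finset (Finset α)}
    (hB : ∀ Z ∈ B, Z.Nonempty) :
    ∃ G ⊆ F, (∀ Z ∈ B, ¬ Z ⊆ G) ∧ #F ≤ #G + #{Z ∈ B | Z ⊆ F} := by
  choose x hx using hB
  set S : Finset (Finset α) := {Z ∈ B | Z ⊆ F}
  set D : Finset α := S.attach.image fun Z => x Z.1 (mem_filter.1 Z.2).1
  refine ⟨F \ D, sdiff_subset, fun Z hZ hZF => ?_, ?_⟩
  · have hxD : x Z hZ ∈ D :=
      mem_image.2 ⟨⟨Z, mem_filter.2 ⟨hZ, hZF.trans sdiff_subset⟩⟩, mem_attach _ _, rfl⟩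
    exact (mem_sdiff.1 (hZF (hx Z hZ))).2 hxD
  · have hD : #D ≤ #S := card_image_le.trans card_attach.le
    exact (card_le_card_sdiff_add_card).trans (Nat.add_le_add_left hD _)

lemma exists_large_subset_avoiding {p : ℝ} (hp0 : 0 ≤ p) (hp1 : p ≤ 1) {P : Finset α}
    {B : Finset (Finset α)} (hBP : ∀ Z ∈ B, Z ⊆ P) (hB : ∀ Z ∈ B, Z.Nonempty) :
    ∃ F ⊆ P, (∀ Z ∈ B, ¬ Z ⊆ F) ∧ p * #P - ∑ Z ∈ B, p ^ #Z ≤ #F := by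
  classical
  obtain ⟨F, hFP, hF⟩ := exists_le_card_sub_card_filter hp0 hp1 hBP
  obtain ⟨G, hGF, hG, hcard⟩ := exists_subset_forall_not_subset F hB
  have hcard' : (#F : ℝ) ≤ #G + #{Z ∈ B | Z ⊆ F} := by exact_mod_cast hcard
  exact ⟨G, hGF.trans hFP, hG, by linarith⟩

end Deletion

lemma exists_complex_of_sq_le {V : Type} [Fintype V] [DecidableEq V] {p m : ℝ} (hp0 : 0 ≤ p)
    (hp1 : p ≤ 1) (hpm : 32768 * (Fintype.card V + m + 2) * p ^ 2 ≤ 1) :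
    ∃ F : Finset (Finset V), (∀ t ∈ F, #t = 3) ∧
      p * (Fintype.card V).choose 3 - 12288 * Fintype.card V ^ 2 ≤ #F ∧
      ∀ Z ⊆ F, Z.Nonempty → IsTwoCycle Z → m ≤ #Z := by
  classical
  set P : Finset (Finset V) := powersetCard 3 univ
  set B : Finset (Finset (Finset V)) := {Z | IsMinimalCycle Z ∧ #Z < m}
  have hB : ∀ Z ∈ B, IsMinimalCycle Z ∧ #Z < m := fun Z hZ => (mem_filter.1 hZ).2
  have hBP : ∀ Z ∈ B, Z ⊆ P := fun Z hZ t ht =>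
    mem_powersetCard_univ.2 ((hB Z hZ).1.1.2.1 t ht)
  have hsum : ∑ Z ∈ B, p ^ #Z ≤ 12288 * Fintype.card V ^ 2 := by
    refine sum_minimalCycles_pow_card_le fun Z hZ => ⟨(hB Z hZ).1, le_trans ?_ hpm⟩
    gcongr
    exact (hB Z hZ).2.le
  obtain ⟨F, hFP, hF, hcard⟩ := exists_large_subset_avoiding hp0 hp1 hBP fun Z hZ =>
    (hB Z hZ).1.1.1
  refine ⟨F, fun t ht => mem_powersetCard_univ.1 (hFP ht), ?_, fun Z hZF hne hZ => ?_⟩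
  · rw [card_powersetCard, card_univ] at hcard
    linarith
  · obtain ⟨Y, hYZ, hY⟩ := exists_isMinimalCycle_subset hne hZ
    have hmY : m ≤ #Y := not_lt.1 fun hlt =>
      hF Y (mem_filter.2 ⟨mem_univ Y, hY, hlt⟩) (hYZ.trans hZF)
    exact hmY.trans (by exact_mod_cast card_le_card hYZ)

section Asymptotics

open Filter

lemma pow_three_div_le_choose {n : ℕ} (hn : 12 ≤ n) : (n : ℝ) ^ 3 / 12 ≤ n.choose 3 := by
  have hn' : (12 : ℝ) ≤ n := by exact_mod_cast hn
  rw [Nat.cast_choose_eq_descPochhammer_div]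
  simp only [descPochhammer_succ_right, descPochhammer_zero, Nat.factorial]
  norm_num
  nlinarith [mul_nonneg (sub_nonneg.2 hn') (sub_nonneg.2 hn'),
    mul_nonneg (sub_nonneg.2 hn') (sq_nonneg (n : ℝ))]

lemma eventually_natCast_rpow_le {r c : ℝ} (hr : r < 0) (hc : 0 < c) :
    ∀ᶠ n : ℕ in atTop, (n : ℝ) ^ r ≤ c := by
  have h := (tendsto_rpow_neg_atTop (neg_pos.2 hr)).comp tendsto_natCast_atTop_atTop
  rw [neg_neg] at h
  exact h.eventually_le_const hc

lemma eventually_le_natCast_rpow {r : ℝ} (hr : 0 < r) (c : ℝ) :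
    ∀ᶠ n : ℕ in atTop, c ≤ (n : ℝ) ^ r :=
  ((tendsto_rpow_atTop hr).comp tendsto_natCast_atTop_atTop).eventually_ge_atTop c

lemma eventually_density_sq_le {α ε : ℝ} (hα : α < 1 / 2) (hε : 0 < ε) :
    ∀ᶠ n : ℕ in atTop,
      32768 * (n + (n : ℝ) ^ (2 - 2 * α - ε) + 2) * (24 * (n : ℝ) ^ (α - 1)) ^ 2 ≤ 1 := by
  set C : ℝ := 32768 * 24 ^ 2 with hC
  filter_upwards [
    eventually_natCast_rpow_le (r := 2 * α - 1) (c := 1 / (6 * C)) (by linarith) (by positivity),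
    eventually_natCast_rpow_le (r := -ε) (c := 1 / (2 * C)) (by linarith) (by positivity),
    eventually_ge_atTop 1] with n hlinear hgirth' hn
  have hn' : (1 : ℝ) ≤ n := by exact_mod_cast hn
  have hn0 : (0 : ℝ) < n := by linarith
  have hsq : ((n : ℝ) ^ (α - 1)) ^ 2 = (n : ℝ) ^ (2 * α - 2) := by
    rw [← Real.rpow_mul_natCast hn0.le]
    ring_nf
  have hlin : n * (n : ℝ) ^ (2 * α - 2) = (n : ℝ) ^ (2 * α - 1) := by
    rw [show 2 * α - 1 = 1 + (2 * α - 2) by ring, Real.rpow_add hn0, Real.rpow_one]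
  have hgirth : (n : ℝ) ^ (2 - 2 * α - ε) * (n : ℝ) ^ (2 * α - 2) = (n : ℝ) ^ (-ε) := by
    rw [← Real.rpow_add hn0]
    ring_nf
  calc 32768 * (n + (n : ℝ) ^ (2 - 2 * α - ε) + 2) * (24 * (n : ℝ) ^ (α - 1)) ^ 2
      ≤ 32768 * (n + (n : ℝ) ^ (2 - 2 * α - ε) + 2 * n) * (24 * (n : ℝ) ^ (α - 1)) ^ 2 := by
        gcongr
        linarith
    _ = C * (3 * (n : ℝ) ^ (2 * α - 1) + (n : ℝ) ^ (-ε)) := by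
        rw [mul_pow, hsq, ← hlin, ← hgirth]
        ring
    _ ≤ C * (3 * (1 / (6 * C)) + 1 / (2 * C)) := by gcongr
    _ = 1 := by norm_num [hC]

lemma eventually_rpow_le_density_mul_choose {α : ℝ} (hα : 0 < α) :
    ∀ᶠ n : ℕ in atTop,
      (n : ℝ) ^ (2 + α) ≤ 24 * (n : ℝ) ^ (α - 1) * n.choose 3 - 12288 * n ^ 2 := by
  filter_upwards [eventually_le_natCast_rpow hα 12288, eventually_ge_atTop 12] with n hbig hn
  have hn0 : (0 : ℝ) < n := by exact_mod_cast (by omega : 0 < n)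
  have hfaces : 2 * (n : ℝ) ^ (2 + α) ≤ 24 * (n : ℝ) ^ (α - 1) * n.choose 3 :=
    calc 2 * (n : ℝ) ^ (2 + α) = 24 * (n : ℝ) ^ (α - 1) * (n ^ 3 / 12) := by
          rw [show 2 + α = α - 1 + (3 : ℕ) by push_cast; ring, Real.rpow_add_natCast hn0.ne']
          ring
      _ ≤ 24 * (n : ℝ) ^ (α - 1) * n.choose 3 := by
          gcongr
          exact pow_three_div_le_choose hn
  have hcycles : 12288 * (n : ℝ) ^ 2 ≤ (n : ℝ) ^ (2 + α) := by
    rw [Real.rpow_add hn0, Real.rpow_two, mul_comm]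
    gcongr
  linarith

end Asymptotics

end TwoGirth

/-- **Theorem (existence of complexes with large 2-girth).**
Let `0 < α < 1/2` and `ε > 0`. For all sufficiently large `n` there is a set `F` of
3-element subsets of an `n`-element vertex set with `|F| ≥ n^(2+α)` such that every
nontrivial `Z/2` 2-cycle `Z ⊆ F` satisfies `|Z| ≥ n^(2-2α-ε)`. -/
theorem exists_large_girth_complex (α ε : ℝ) (hα0 : 0 < α) (hα : α < 1 / 2) (hε : 0 < ε) :
    ∃ N : ℕ, ∀ n : ℕ, N ≤ n →
      ∃ F : Finset (Finset (Fin n)),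
        (∀ t ∈ F, t.card = 3) ∧
        ((n : ℝ) ^ ((2 : ℝ) + α) ≤ F.card) ∧
        ∀ Z ⊆ F, Z.Nonempty → IsTwoCycle Z →
          (n : ℝ) ^ ((2 : ℝ) - 2 * α - ε) ≤ Z.card := by
  rw [← Filter.eventually_atTop]
  filter_upwards [TwoGirth.eventually_natCast_rpow_le (r := α - 1) (c := 1 / 24) (by linarith)
      (by norm_num), TwoGirth.eventually_density_sq_le hα hε,
    TwoGirth.eventually_rpow_le_density_mul_choose hα0] with n hp1 hsq hcard
  have hp0 : 0 ≤ 24 * (n : ℝ) ^ (α - 1) := by positivity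
  obtain ⟨F, hF, hFcard, hgirth⟩ := TwoGirth.exists_complex_of_sq_le (V := Fin n) hp0
    (by linarith) (by rwa [Fintype.card_fin])
  rw [Fintype.card_fin] at hFcard
  exact ⟨F, hF, hcard.trans hFcard, hgirth⟩
end

section
/- For every δ > 0 there is a constant C_δ such that for all sufficiently large f and v, Z(f,v) ≤ C_δ^f · f^{f/2} · v^{δ f}. -/
/-- An inclusion-minimal (nontrivial) `Z/2` 2-cycle: a nonempty 2-cycle no nonempty
proper subset of which is a 2-cycle. -/
def IsMinCycle {V : Type} [DecidableEq V] (Z : Finset (Finset V)) : Prop :=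
  IsTwoCycle Z ∧ Z.Nonempty ∧ ∀ Z' ⊂ Z, Z'.Nonempty → ¬ IsTwoCycle Z'

/-- `Zcount f v` is the number of inclusion-minimal `Z/2` 2-cycles consisting of exactly
`f` 3-element subsets of a `v`-element vertex set (realized as `Finset.range v`)
whose members together cover all `v` vertices. -/
noncomputable def Zcount (f v : ℕ) : ℕ :=
  Nat.card {Z : Finset (Finset ℕ) //
    IsMinCycle Z ∧ Z.card = f ∧ Z.biUnion id = Finset.range v}

/-!
By minimality, the faces of a minimal 2-cycle can be glued one after another to a triangulated
polygon: as long as some faces are missing, the faces used so far do not form a 2-cycle, so some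
pair is contained in an odd number of them; it is therefore an edge of the boundary of the polygon,
and some unused face contains it. In the end the polygon maps onto the cycle, and its boundary
becomes a closed walk of length `f + 2` traversing every edge an even number of times. The cycle is
recovered from this walk and the combinatorial type of the triangulation, a binary tree with `f`
nodes, of which there are at most `4 ^ f`.

To count even walks with `m` vertices, fix the multiset of vertices visited, and let `d x` be the
multiplicity of `x`. Consider the random walk which at each step flips a coin and either follows a
uniformly chosen open edge, one so far traversed an odd number of times (there are at most `2 * d x`
of these at `x`), or moves to a vertex `y` with probability `d y / m`. A step from `x` to `y` has
probability at least `√(d y / d x) / (4 * √m)` times `√(d x * d y / m)` if it opens the edge, and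
divided by this factor if it closes the edge. On an even walk the latter factors cancel and the
former telescope, so the random walk follows it with probability about `(4 * √m) ^ (-m)`. Hence for
each multiset there are at most about `(4 * √m) ^ m` even walks from a given starting vertex, while
the number of multisets is only exponential in `f`, because a cycle with `f` faces has at most
`3 * f` vertices.
-/

section Walks

variable {α : Type*}

/-- The edges traversed by a walk on the complete graph with loops, the walk being given by its
list of vertices. -/
def walkEdges (w : List α) : List (Sym2 α) :=
  List.zipWith Sym2.mk w w.tail

@[simp]
lemma walkEdges_cons_cons (x y : α) (w : List α) :
    walkEdges (x :: y :: w) = s(x, y) :: walkEdges (y :: w) :=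
  rfl

lemma walkEdges_append (w₁ : List α) (x : α) (w₂ : List α) :
    walkEdges (w₁ ++ x :: w₂) = walkEdges (w₁ ++ [x]) ++ walkEdges (x :: w₂) := by
  induction w₁ with
  | nil => rfl
  | cons y w₁ ih =>
    cases w₁ with
    | nil => rfl
    | cons z w₁ => simpa using ih

lemma walkEdges_map {β : Type*} (g : α → β) (w : List α) :
    walkEdges (w.map g) = (walkEdges w).map (Sym2.map g) := by
  simp only [walkEdges, ← List.map_tail, List.zipWith_map, List.map_zipWith, Sym2.map_mk]

variable [DecidableEq α]

/-- A walk is even if it traverses every edge an even number of times. -/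
def IsEvenWalk (w : List α) : Prop :=
  ∀ e, Even ((walkEdges w).count e)

lemma IsEvenWalk.of_map {β : Type*} [DecidableEq β] {g : α → β} (hg : g.Injective) {w : List α}
    (h : IsEvenWalk (w.map g)) : IsEvenWalk w := by
  intro e
  simpa only [walkEdges_map, List.count_map_of_injective _ _ (Sym2.map.injective hg)] using
    h (e.map g)

/-- The weight `d x * d y / m` of the edge `s(x, y)`, for a multiset with `m` elements in which `z`
has multiplicity `d z`. The product of the weights of the open edges of a walk is the potential that
is played off against the probability of the walk. -/
noncomputable def edgeWeight (s : Multiset α) (e : Sym2 α) : ℝ :=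
  (e.map fun x => (s.count x : ℝ)).mul / s.card

lemma edgeWeight_nonneg (s : Multiset α) (e : Sym2 α) : 0 ≤ edgeWeight s e := by
  induction e with | _ x y =>
  rw [edgeWeight, Sym2.map_mk, Sym2.mul_mk]
  positivity

variable [Fintype α]

lemma card_neighbors_add_le (x y : α) (w : List α) :
    Finset.card {z | s(z, x) ∈ walkEdges (y :: w)} + (if y = x then 1 else 0) ≤
      2 * (y :: w).count x := by
  induction w generalizing y with
  | nil => by_cases h : y = x <;> simp [walkEdges, h]
  | cons u w ih =>
    have hsub : (Finset.univ.filter fun z => s(z, x) ∈ walkEdges (y :: u :: w)) ⊆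
        (Finset.univ.filter fun z => s(z, x) ∈ walkEdges (u :: w)) ∪
          ((if y = x then {u} else ∅) ∪ (if u = x then {y} else ∅)) := by
      intro z
      simp only [walkEdges_cons_cons, List.mem_cons, Sym2.eq_iff, Finset.mem_filter_univ,
        Finset.mem_union]
      grind
    have hcard := (Finset.card_le_card hsub).trans
      ((Finset.card_union_le _ _).trans (Nat.add_le_add_left (Finset.card_union_le _ _) _))
    simp only [apply_ite Finset.card, Finset.card_singleton, Finset.card_empty] at hcard
    have hcount : (y :: u :: w).count x = (u :: w).count x + if y = x then 1 else 0 := by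
      simp only [List.count_cons, beq_iff_eq]
    have := ih u
    omega

/-- The edges which a walk has traversed an odd number of times. -/
def openEdges (w : List α) : Finset (Sym2 α) := {e | Odd ((walkEdges w).count e)}

@[simp]
lemma mem_openEdges {e : Sym2 α} {w : List α} :
    e ∈ openEdges w ↔ Odd ((walkEdges w).count e) :=
  Finset.mem_filter_univ e

/-- The vertices to which an open edge leads from `x`. -/
def openNeighbors (w : List α) (x : α) : Finset α := {z | s(z, x) ∈ openEdges w}

lemma mem_openNeighbors {w : List α} {x z : α} :
    z ∈ openNeighbors w x ↔ s(z, x) ∈ openEdges w :=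
  Finset.mem_filter_univ z

lemma card_openNeighbors_le (w : List α) (x : α) :
    (openNeighbors w x).card ≤ 2 * w.count x := by
  cases w with
  | nil => simp [openNeighbors, walkEdges]
  | cons y w =>
    refine le_trans (Finset.card_le_card fun z hz => ?_)
      (le_of_add_le_left (card_neighbors_add_le x y w))
    rw [mem_openNeighbors, mem_openEdges] at hz
    exact (Finset.mem_filter_univ z).2 (List.count_pos_iff.1 hz.pos)

lemma openEdges_cons_of_mem {x y : α} {w : List α} (h : s(y, x) ∈ openEdges (x :: w)) :
    openEdges (y :: x :: w) = (openEdges (x :: w)).erase s(y, x) := by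
  ext e
  rw [mem_openEdges] at h
  by_cases he : e = s(y, x)
  · simpa [he, parity_simps] using h
  · simp [he, List.count_cons_of_ne (Ne.symm he)]

lemma openEdges_cons_of_notMem {x y : α} {w : List α} (h : s(y, x) ∉ openEdges (x :: w)) :
    openEdges (y :: x :: w) = insert s(y, x) (openEdges (x :: w)) := by
  ext e
  rw [mem_openEdges] at h
  by_cases he : e = s(y, x)
  · simpa [he, parity_simps] using h
  · simp [he, List.count_cons_of_ne (Ne.symm he)]

lemma IsEvenWalk.openEdges_eq_empty {w : List α} (h : IsEvenWalk w) : openEdges w = ∅ :=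
  Finset.filter_eq_empty_iff.2 fun e _ => Nat.not_odd_iff_even.2 (h e)

/-- Transition probability, from the walk `x :: w` to the walk `y :: x :: w`, of the random walk
which at each step flips a coin: on heads it picks an open edge at `x` uniformly and closes it,
on tails it moves to a vertex drawn from the multiset `s`, provided that this opens an edge. Walks
are extended at the head of the list, and the total mass may be smaller than one. -/
noncomputable def stepProb (s : Multiset α) (w : List α) (x y : α) : ℝ :=
  if y ∈ openNeighbors (x :: w) x then (2 * (openNeighbors (x :: w) x).card : ℝ)⁻¹
  else s.count y / (2 * s.card)

/-- The probability that the random walk with steps `stepProb s` follows a given walk, conditioned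
on the starting vertex, which is the last entry of the list. -/
noncomputable def walkProb (s : Multiset α) : List α → ℝ
  | y :: x :: w => stepProb s w x y * walkProb s (x :: w)
  | _ => 1

lemma stepProb_nonneg (s : Multiset α) (w : List α) (x y : α) : 0 ≤ stepProb s w x y := by
  unfold stepProb
  positivity

lemma walkProb_nonneg (s : Multiset α) (w : List α) : 0 ≤ walkProb s w := by
  induction w with
  | nil => exact zero_le_one
  | cons y w ih =>
    cases w with
    | nil => exact zero_le_one
    | cons x w => exact mul_nonneg (stepProb_nonneg s w x y) ih

lemma sum_stepProb_le_one (s : Multiset α) (w : List α) (x : α) :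
    ∑ y, stepProb s w x y ≤ 1 := by
  set N := openNeighbors (x :: w) x
  have hclose : ∑ _y ∈ N, (2 * N.card : ℝ)⁻¹ ≤ 1 / 2 := by
    rw [Finset.sum_const, nsmul_eq_mul, mul_inv, mul_left_comm]
    linarith [mul_inv_le_one (a := (N.card : ℝ))]
  have hopen : ∑ y, (s.count y / (2 * s.card) : ℝ) ≤ 1 / 2 := by
    have hs : ∑ y, (s.count y : ℝ) = s.card := by
      exact_mod_cast Multiset.sum_count_eq_card fun y _ => Finset.mem_univ y
    rw [← Finset.sum_div, hs, div_eq_mul_inv, mul_inv, mul_left_comm]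
    linarith [mul_inv_le_one (a := (s.card : ℝ))]
  calc ∑ y, stepProb s w x y
      ≤ ∑ y, ((if y ∈ N then (2 * N.card : ℝ)⁻¹ else 0) + s.count y / (2 * s.card)) := by
        gcongr with y
        unfold stepProb
        split_ifs
        · exact le_add_of_nonneg_right (by positivity)
        · rw [zero_add]
    _ ≤ 1 / 2 + 1 / 2 := by
        rw [Finset.sum_add_distrib, Finset.sum_ite_mem, Finset.univ_inter]
        exact add_le_add hclose hopen
    _ = 1 := add_halves 1

lemma sum_walkProb_le (s : Multiset α) (n : ℕ) :
    ∑ w : List.Vector α (n + 1), walkProb s w.toList ≤ Fintype.card α := by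
  have hsplit (k : ℕ) (g : List α → ℝ) : ∑ w : List.Vector α (k + 1), g w.toList =
      ∑ w : List.Vector α k, ∑ y, g (y :: w.toList) := by
    rw [← Fintype.sum_prod_type_right' (fun y (w : List.Vector α k) => g (y :: w.toList))]
    refine Fintype.sum_equiv ⟨fun w => (w.head, w.tail), fun p => p.1 ::ᵥ p.2, ?_, ?_⟩ _ _ ?_
    · intro w
      simp
    · intro p
      simp
    · intro w
      simp [← List.Vector.toList_cons]
  induction n with
  | zero => simp [walkProb]
  | succ n ih =>
    rw [hsplit]
    refine (Finset.sum_le_sum fun w _ => ?_).trans ih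
    obtain ⟨_ | ⟨x, w⟩, hw⟩ := w
    · simp at hw
    · simp only [List.Vector.toList_mk, walkProb, ← Finset.sum_mul]
      exact mul_le_of_le_one_left (walkProb_nonneg s _) (sum_stepProb_le_one s w x)

lemma count_mul_prod_openEdges_cons_le {s : Multiset α} {x y : α} {w : List α}
    (hs : ↑(x :: w) ≤ s) :
    s.count y * ∏ e ∈ openEdges (y :: x :: w), edgeWeight s e ≤
      (s.count x * ∏ e ∈ openEdges (x :: w), edgeWeight s e) *
        (16 * s.card * stepProb s w x y ^ 2) := by
  have hx : (0 : ℝ) < s.count x :=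
    Nat.cast_pos.2 (Multiset.count_pos.2 (Multiset.mem_of_le hs (by simp)))
  have hm : (0 : ℝ) < s.card := hx.trans_le (mod_cast Multiset.count_le_card x s)
  have hweight : edgeWeight s s(y, x) = s.count y * s.count x / s.card := rfl
  by_cases hy : y ∈ openNeighbors (x :: w) x
  · set k := (openNeighbors (x :: w) x).card
    have hkx : (k : ℝ) ≤ 2 * s.count x := by
      have := (card_openNeighbors_le (x :: w) x).trans
        (Nat.mul_le_mul_left 2 (Multiset.coe_count x _ ▸ Multiset.count_le_of_le x hs))
      exact_mod_cast this
    have hk : (0 : ℝ) < k := Nat.cast_pos.2 (Finset.card_pos.2 ⟨y, hy⟩)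
    have hratio : 1 ≤ (2 * s.count x / k : ℝ) ^ 2 := one_le_pow₀ ((one_le_div hk).2 hkx)
    rw [stepProb, if_pos hy]
    rw [mem_openNeighbors] at hy
    rw [openEdges_cons_of_mem hy, ← Finset.mul_prod_erase _ _ hy, hweight]
    set P := ∏ e ∈ (openEdges (x :: w)).erase s(y, x), edgeWeight s e
    have hP : 0 ≤ P := Finset.prod_nonneg fun e _ => edgeWeight_nonneg s e
    calc (s.count y : ℝ) * P ≤ s.count y * P * (2 * s.count x / k : ℝ) ^ 2 :=
          le_mul_of_one_le_right (by positivity) hratio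
      _ = _ := by
        change _ = _ * (16 * s.card * ((2 * k : ℝ)⁻¹) ^ 2)
        field_simp
        norm_num
  · rw [stepProb, if_neg hy]
    rw [mem_openNeighbors] at hy
    rw [openEdges_cons_of_notMem hy, Finset.prod_insert hy, hweight]
    set P := ∏ e ∈ openEdges (x :: w), edgeWeight s e
    have hP : 0 ≤ P := Finset.prod_nonneg fun e _ => edgeWeight_nonneg s e
    calc (s.count y : ℝ) * (s.count y * s.count x / s.card * P)
        ≤ 4 * (s.count y * (s.count y * s.count x / s.card * P)) :=
          le_mul_of_one_le_left (by positivity) (by norm_num)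
      _ = _ := by
        field_simp
        ring

lemma count_mul_prod_openEdges_le {s : Multiset α} {x : α} {w : List α} (hs : ↑(x :: w) ≤ s) :
    s.count x * ∏ e ∈ openEdges (x :: w), edgeWeight s e ≤
      s.card * (16 * s.card) ^ w.length * walkProb s (x :: w) ^ 2 := by
  induction w generalizing x with
  | nil => simpa [openEdges, walkEdges, walkProb] using Multiset.count_le_card x s
  | cons u w ih =>
    have hs' : ↑(u :: w) ≤ s := (Multiset.le_cons_self _ x).trans hs
    calc s.count x * ∏ e ∈ openEdges (x :: u :: w), edgeWeight s e
        ≤ (s.count u * ∏ e ∈ openEdges (u :: w), edgeWeight s e) *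
            (16 * s.card * stepProb s w u x ^ 2) := count_mul_prod_openEdges_cons_le hs'
      _ ≤ (s.card * (16 * s.card) ^ w.length * walkProb s (u :: w) ^ 2) *
            (16 * s.card * stepProb s w u x ^ 2) :=
        mul_le_mul_of_nonneg_right (ih hs') (by positivity)
      _ = s.card * (16 * s.card) ^ (u :: w).length * walkProb s (x :: u :: w) ^ 2 := by
        rw [List.length_cons, walkProb]
        ring

lemma IsEvenWalk.one_le_mul_walkProb {w : List α} (h : IsEvenWalk w) :
    1 ≤ (4 * √w.length) ^ w.length * walkProb w w := by
  cases w with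
  | nil => simp [walkProb]
  | cons x w =>
    have hbound := count_mul_prod_openEdges_le (le_refl (↑(x :: w) : Multiset α))
    rw [h.openEdges_eq_empty, Finset.prod_empty, mul_one] at hbound
    set m := (x :: w).length with hm
    set p := walkProb ↑(x :: w) (x :: w)
    have hp : 0 ≤ p := walkProb_nonneg _ _
    rw [← one_le_sq_iff₀ (by positivity)]
    calc (1 : ℝ) ≤ (↑(x :: w) : Multiset α).count x := by simp
      _ ≤ m * (16 * m) ^ w.length * p ^ 2 := hbound
      _ ≤ (16 * m) * (16 * m) ^ w.length * p ^ 2 := by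
        gcongr
        exact le_mul_of_one_le_left (by positivity) (by norm_num)
      _ = ((4 * √m) ^ m * p) ^ 2 := by
        rw [mul_pow _ p, pow_right_comm, mul_pow 4, Real.sq_sqrt (by positivity), hm,
          List.length_cons, ← pow_succ']
        norm_num

open Classical in
lemma card_isEvenWalk_coe_eq_le {n : ℕ} (s : Sym α (n + 1)) :
    (Finset.card {w : List.Vector α (n + 1) | IsEvenWalk w.toList ∧ Sym.ofVector w = s} : ℝ) ≤
      (4 * √(n + 1 : ℕ)) ^ (n + 1) * Fintype.card α := by
  set E : Finset (List.Vector α (n + 1)) := {w | IsEvenWalk w.toList ∧ Sym.ofVector w = s}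
  have hone : ∀ w ∈ E, 1 ≤ (4 * √(n + 1 : ℕ)) ^ (n + 1) * walkProb s w.toList := by
    intro w hw
    obtain ⟨heven, rfl⟩ := (Finset.mem_filter_univ w).1 hw
    change 1 ≤ _ * walkProb w.toList w.toList
    simpa only [List.Vector.toList_length] using heven.one_le_mul_walkProb
  calc (E.card : ℝ) = ∑ _w ∈ E, 1 := by simp
    _ ≤ ∑ w ∈ E, (4 * √(n + 1 : ℕ)) ^ (n + 1) * walkProb s w.toList := Finset.sum_le_sum hone
    _ ≤ (4 * √(n + 1 : ℕ)) ^ (n + 1) * ∑ w : List.Vector α (n + 1), walkProb s w.toList := by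
      rw [← Finset.mul_sum]
      gcongr
      · exact fun w _ _ => walkProb_nonneg _ _
      · exact Finset.subset_univ E
    _ ≤ (4 * √(n + 1 : ℕ)) ^ (n + 1) * Fintype.card α := by
      gcongr
      exact sum_walkProb_le _ n

open Classical in
lemma card_isEvenWalk_le (n : ℕ) :
    (Finset.card {w : List.Vector α (n + 1) | IsEvenWalk w.toList} : ℝ) ≤
      2 ^ (Fintype.card α + n) * ((4 * √(n + 1 : ℕ)) ^ (n + 1) * Fintype.card α) := by
  have hsym : (Fintype.card (Sym α (n + 1)) : ℝ) ≤ 2 ^ (Fintype.card α + n) := by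
    rw [Sym.card_sym_eq_choose]
    exact_mod_cast Nat.choose_le_two_pow _ _
  rw [Finset.card_eq_sum_card_fiberwise (f := Sym.ofVector) (t := Finset.univ)
    (fun w _ => Finset.mem_coe.2 (Finset.mem_univ _))]
  simp only [Finset.filter_filter]
  rw [Nat.cast_sum]
  refine (Finset.sum_le_card_nsmul _ _ _ fun s _ => card_isEvenWalk_coe_eq_le s).trans ?_
  rw [nsmul_eq_mul, Finset.card_univ]
  gcongr

end Walks

section Polygons

variable {α : Type*}

/-- The labels of a binary tree in symmetric order. -/
def inorder : BinaryTree α → List α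
  | .nil => []
  | .node c l r => inorder l ++ c :: inorder r

/-- The boundary, other than the root edge from `b` to `a`, of the triangulated polygon encoded by
a labelled binary tree. A tree `node c l r` over the root edge `a`, `b` stands for the triangle with
apex `c`, with the polygon `l` glued to its edge `a`, `c` and the polygon `r` to its edge
`c`, `b`. -/
def polygonPath (T : BinaryTree α) (a b : α) : List α := a :: (inorder T ++ [b])

lemma walkEdges_polygonPath_node (c : α) (l r : BinaryTree α) (a b : α) :
    walkEdges (polygonPath (.node c l r) a b) =
      walkEdges (polygonPath l a c) ++ walkEdges (polygonPath r c b) := by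
  simpa [polygonPath, inorder] using walkEdges_append (a :: inorder l) c (inorder r ++ [b])

lemma walkEdges_cons_polygonPath (T : BinaryTree α) (a b : α) :
    walkEdges (b :: polygonPath T a b) = s(b, a) :: walkEdges (polygonPath T a b) :=
  rfl

lemma length_inorder (T : BinaryTree α) : (inorder T).length = T.numNodes := by
  induction T with
  | nil => rfl
  | node c l r ihl ihr =>
    rw [inorder, List.length_append, List.length_cons, ihl, ihr, BinaryTree.numNodes, add_assoc]

lemma numNodes_map {β : Type*} (g : α → β) (T : BinaryTree α) :
    (T.map g).numNodes = T.numNodes := by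
  induction T with
  | nil => rfl
  | node c l r ihl ihr => rw [BinaryTree.map, BinaryTree.numNodes, ihl, ihr, BinaryTree.numNodes]

lemma eq_of_map_unit_eq_of_inorder_eq {T T' : BinaryTree α}
    (hshape : T.map (fun _ => ()) = T'.map fun _ => ()) (hlabels : inorder T = inorder T') :
    T = T' := by
  induction T generalizing T' with
  | nil =>
    cases T' with
    | nil => rfl
    | node c' l' r' => simp only [BinaryTree.map, reduceCtorEq] at hshape
  | node c l r ihl ihr =>
    cases T' with
    | nil => simp only [BinaryTree.map, reduceCtorEq] at hshape
    | node c' l' r' =>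
      simp only [BinaryTree.map, BinaryTree.node.injEq, true_and] at hshape
      have hlen : (inorder l).length = (inorder l').length := by
        rw [length_inorder, length_inorder, ← numNodes_map, hshape.1, numNodes_map]
      obtain ⟨hl, hr⟩ := List.append_inj hlabels hlen
      obtain ⟨hc, hr⟩ := List.cons_eq_cons.1 hr
      rw [ihl hshape.1 hl, hc, ihr hshape.2 hr]

variable [DecidableEq α]

/-- The triangles, with multiplicity, of the polygon encoded by a labelled binary tree over the root
edge `a`, `b`. -/
def polygonFaces : BinaryTree α → α → α → Multiset (Finset α)
  | .nil, _, _ => 0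
  | .node c l r, a, b => {c, a, b} ::ₘ (polygonFaces l a c + polygonFaces r c b)

/-- A set of triangles is polygonal if its members are, without repetition, the images of the
triangles of a triangulated polygon. -/
def IsPolygonal (S : Finset (Finset α)) : Prop :=
  ∃ T a b, polygonFaces T a b = S.val

lemma card_polygonFaces (T : BinaryTree α) (a b : α) : (polygonFaces T a b).card = T.numNodes := by
  induction T generalizing a b with
  | nil => rfl
  | node c l r ihl ihr =>
    rw [polygonFaces, Multiset.card_cons, Multiset.card_add, ihl, ihr, BinaryTree.numNodes]

lemma isPolygonal_singleton {t : Finset α} (ht : t.card = 3) : IsPolygonal {t} := by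
  obtain ⟨c, a, b, -, -, -, rfl⟩ := Finset.card_eq_three.1 ht
  exact ⟨.node c .nil .nil, a, b, rfl⟩

lemma exists_mem_polygonFaces_of_mem_inorder {T : BinaryTree α} {x : α} (hx : x ∈ inorder T)
    (a b : α) : ∃ t ∈ polygonFaces T a b, x ∈ t := by
  induction T generalizing a b with
  | nil => simp [inorder] at hx
  | node c l r ihl ihr =>
    simp only [inorder, List.mem_append, List.mem_cons] at hx
    simp only [polygonFaces, Multiset.mem_cons, Multiset.mem_add]
    rcases hx with hx | rfl | hx
    · obtain ⟨t, ht, hxt⟩ := ihl hx a c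
      exact ⟨t, .inr (.inl ht), hxt⟩
    · exact ⟨_, .inl rfl, Finset.mem_insert_self _ _⟩
    · obtain ⟨t, ht, hxt⟩ := ihr hx c b
      exact ⟨t, .inr (.inr ht), hxt⟩

lemma exists_mem_polygonFaces_of_mem_polygonPath {T : BinaryTree α} {a b x : α}
    (hT : polygonFaces T a b ≠ 0) (hx : x ∈ b :: polygonPath T a b) :
    ∃ t ∈ polygonFaces T a b, x ∈ t := by
  cases T with
  | nil => exact absurd rfl hT
  | node c l r =>
    by_cases hroot : x = a ∨ x = b
    · exact ⟨{c, a, b}, Multiset.mem_cons_self _ _, by simpa using .inr hroot⟩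
    · have hx' : x ∈ inorder (.node c l r) := by
        simp only [polygonPath, List.mem_cons, List.mem_append, List.not_mem_nil] at hx
        tauto
      exact exists_mem_polygonFaces_of_mem_inorder hx' a b

lemma ite_pair_subset_triangle {a b c : α} (h : Finset.card {c, a, b} = 3) (x y : α) :
    (if x ≠ y ∧ {x, y} ⊆ ({c, a, b} : Finset α) then 1 else 0) =
      (if s(b, a) = s(x, y) then 1 else 0) + (if s(c, a) = s(x, y) then 1 else 0) +
        (if s(b, c) = s(x, y) then 1 else 0) := by
  obtain ⟨hca, hcb, hab⟩ := Finset.card_triple_eq_three_iff.1 h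
  simp only [Finset.insert_subset_iff, Finset.singleton_subset_iff, Finset.mem_insert,
    Finset.mem_singleton, Sym2.eq_iff]
  grind

/-- Modulo 2, the sum of the boundaries of the triangles is the boundary of the polygon. -/
lemma even_countP_polygonFaces_add_count {T : BinaryTree α} {a b : α}
    (h : ∀ t ∈ polygonFaces T a b, t.card = 3) (x y : α) :
    Even ((polygonFaces T a b).countP (fun t => x ≠ y ∧ {x, y} ⊆ t) +
      (walkEdges (b :: polygonPath T a b)).count s(x, y)) := by
  induction T generalizing a b with
  | nil =>
    have : walkEdges (b :: polygonPath .nil a b) = [s(b, a), s(b, a)] := by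
      simp [polygonPath, inorder, walkEdges, Sym2.eq_swap]
    rw [this, polygonFaces, Multiset.countP_zero, zero_add]
    by_cases hab : s(b, a) = s(x, y) <;> simp [hab]
  | node c l r ihl ihr =>
    simp only [polygonFaces, Multiset.mem_cons, Multiset.mem_add, forall_eq_or_imp] at h
    have hl := ihl fun t ht => h.2 t (.inl ht)
    have hr := ihr fun t ht => h.2 t (.inr ht)
    have hface := ite_pair_subset_triangle h.1 x y
    simp only [polygonFaces, Multiset.countP_cons, Multiset.countP_add, hface,
      walkEdges_cons_polygonPath, walkEdges_polygonPath_node, List.count_cons, List.count_append,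
      beq_iff_eq] at hl hr ⊢
    rw [Nat.even_iff] at hl hr ⊢
    omega

lemma even_card_filter_add_count {S : Finset (Finset α)} (hcard : ∀ t ∈ S, t.card = 3)
    {T : BinaryTree α} {a b : α} (hT : polygonFaces T a b = S.val) (x y : α) :
    Even (Finset.card {t ∈ S | x ≠ y ∧ {x, y} ⊆ t} +
      (walkEdges (b :: polygonPath T a b)).count s(x, y)) := by
  have hpar := even_countP_polygonFaces_add_count
    (fun t ht => hcard t (Finset.mem_def.2 (hT ▸ ht))) x y
  rwa [hT, Multiset.countP_eq_card_filter] at hpar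

lemma finset_pair_eq_of_sym2_eq {a b x y : α} (h : s(x, y) = s(a, b)) :
    ({x, y} : Finset α) = {a, b} := by
  simpa only [Sym2.toFinset_mk_eq] using congrArg Sym2.toFinset h

lemma exists_polygonFaces_eq_cons_of_mem_polygonPath {T : BinaryTree α} {a b x y : α}
    (h : s(x, y) ∈ walkEdges (polygonPath T a b)) (z : α) :
    ∃ T', polygonFaces T' a b = {z, x, y} ::ₘ polygonFaces T a b := by
  induction T generalizing a b with
  | nil =>
    have hab : s(x, y) = s(a, b) := by simpa [polygonPath, inorder, walkEdges] using h
    exact ⟨.node z .nil .nil, by simp only [polygonFaces, finset_pair_eq_of_sym2_eq hab, add_zero]⟩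
  | node c l r ihl ihr =>
    rw [walkEdges_polygonPath_node, List.mem_append] at h
    simp only [polygonFaces]
    rcases h with h | h
    · obtain ⟨T', hT'⟩ := ihl h
      refine ⟨.node c T' r, ?_⟩
      rw [polygonFaces, hT', Multiset.cons_add, Multiset.cons_swap]
    · obtain ⟨T', hT'⟩ := ihr h
      refine ⟨.node c l T', ?_⟩
      rw [polygonFaces, hT', Multiset.add_cons, Multiset.cons_swap]

lemma exists_polygonFaces_eq_cons {T : BinaryTree α} {a b x y : α}
    (h : s(x, y) ∈ walkEdges (b :: polygonPath T a b)) (z : α) :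
    ∃ T' a' b', polygonFaces T' a' b' = {z, x, y} ::ₘ polygonFaces T a b := by
  rcases List.mem_cons.1 h with hroot | hpath
  · refine ⟨.node b T .nil, a, z, ?_⟩
    rw [polygonFaces, polygonFaces, add_zero, finset_pair_eq_of_sym2_eq hroot, Finset.pair_comm a z,
      Finset.insert_comm b z]
  · obtain ⟨T', hT'⟩ := exists_polygonFaces_eq_cons_of_mem_polygonPath hpath z
    exact ⟨T', a, b, hT'⟩

lemma IsPolygonal.cons {S : Finset (Finset α)} (hS : IsPolygonal S) (hcard : ∀ t ∈ S, t.card = 3)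
    {x y : α} (hxy : x ≠ y) (hodd : Odd (Finset.card {t ∈ S | {x, y} ⊆ t}))
    {t : Finset α} (ht : t.card = 3) (htS : t ∉ S) (hxyt : {x, y} ⊆ t) :
    IsPolygonal (Finset.cons t S htS) := by
  obtain ⟨T, a, b, hT⟩ := hS
  obtain ⟨z, -, rfl⟩ := Finset.exists_eq_insert_iff.2
    ⟨hxyt, by rw [Finset.card_pair hxy, ht]⟩
  suffices hmem : s(x, y) ∈ walkEdges (b :: polygonPath T a b) by
    rw [IsPolygonal, Finset.cons_val, ← hT]
    exact exists_polygonFaces_eq_cons hmem z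
  have hpar := even_card_filter_add_count hcard hT x y
  simp only [hxy, ne_eq, not_false_eq_true, true_and] at hpar
  exact List.count_pos_iff.1 ((Nat.even_add'.1 hpar).1 hodd).pos

end Polygons

section MinimalCycles

variable {V : Type} [DecidableEq V]

lemma IsMinCycle.exists_odd_pair {S Z : Finset (Finset V)} (hZ : IsMinCycle Z) (hSZ : S ⊂ Z)
    (hS : S.Nonempty) :
    ∃ x y, x ≠ y ∧ Odd (Finset.card {t ∈ S | {x, y} ⊆ t}) ∧ ∃ t ∈ Z, t ∉ S ∧ {x, y} ⊆ t := by
  obtain ⟨⟨hcard, heven⟩, -, hmin⟩ := hZ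
  obtain ⟨e, he, hodd⟩ : ∃ e : Finset V, e.card = 2 ∧ Odd (Finset.card {t ∈ S | e ⊆ t}) := by
    by_contra! h
    exact hmin S hSZ hS
      ⟨fun t ht => hcard t (hSZ.1 ht), fun e he => Nat.not_odd_iff_even.1 (h e he)⟩
  obtain ⟨x, y, hxy, rfl⟩ := Finset.card_eq_two.1 he
  refine ⟨x, y, hxy, hodd, ?_⟩
  by_contra! h
  have hfilter : {t ∈ S | {x, y} ⊆ t} = {t ∈ Z | {x, y} ⊆ t} :=
    (Finset.filter_subset_filter _ hSZ.1).antisymm fun t ht => by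
      rw [Finset.mem_filter] at ht ⊢
      exact ⟨by_contra fun htS => h t ht.1 htS ht.2, ht.2⟩
  exact Nat.not_odd_iff_even.2 (heven _ he) (hfilter ▸ hodd)

lemma IsMinCycle.isPolygonal {Z : Finset (Finset V)} (hZ : IsMinCycle Z) : IsPolygonal Z := by
  classical
  obtain ⟨t₀, ht₀⟩ := hZ.2.1
  obtain ⟨S, hS⟩ := Finset.exists_maximal
    (s := {S ∈ Z.powerset | S.Nonempty ∧ IsPolygonal S}) ⟨{t₀}, by
      simpa [ht₀] using isPolygonal_singleton (hZ.1.1 t₀ ht₀)⟩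
  obtain ⟨hSZ, hne, hpoly⟩ : S ⊆ Z ∧ S.Nonempty ∧ IsPolygonal S := by
    simpa only [Finset.mem_filter, Finset.mem_powerset] using hS.prop
  obtain rfl | hssub := hSZ.eq_or_ssubset
  · exact hpoly
  obtain ⟨x, y, hxy, hodd, t, htZ, htS, hxyt⟩ := hZ.exists_odd_pair hssub hne
  have hcons := hpoly.cons (fun t ht => hZ.1.1 t (hSZ ht)) hxy hodd (hZ.1.1 t htZ) htS hxyt
  have hmem : Finset.cons t S htS ∈ Z.powerset.filter fun S => S.Nonempty ∧ IsPolygonal S :=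
    Finset.mem_filter.2 ⟨Finset.mem_powerset.2 (Finset.cons_subset.2 ⟨htZ, hSZ⟩),
      Finset.cons_nonempty htS, hcons⟩
  exact absurd (hS.le_of_ge hmem (Finset.subset_cons htS) (Finset.mem_cons_self t S)) htS

lemma IsTwoCycle.isEvenWalk_polygonPath {Z : Finset (Finset V)} (hZ : IsTwoCycle Z)
    {T : BinaryTree V} {a b : V} (hT : polygonFaces T a b = Z.val) :
    IsEvenWalk (b :: polygonPath T a b) := by
  intro e
  induction e with | _ x y =>
  refine (Nat.even_add.1 (even_card_filter_add_count hZ.1 hT x y)).1 ?_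
  by_cases hxy : x = y
  · simp [hxy]
  · simpa [hxy] using hZ.2 {x, y} (Finset.card_pair hxy)

end MinimalCycles

section Counting

lemma Zcount_zero (v : ℕ) : Zcount 0 v = 0 := by
  refine Nat.card_eq_zero.2 (.inl ⟨fun ⟨Z, hZ, hcard, _⟩ => ?_⟩)
  exact hZ.2.1.ne_empty (Finset.card_eq_zero.1 hcard)

lemma le_three_mul_of_Zcount_ne_zero {f v : ℕ} (h : Zcount f v ≠ 0) : v ≤ 3 * f := by
  obtain ⟨⟨Z, hZ, hcard, hcover⟩⟩ := (Nat.card_ne_zero.1 h).1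
  have := Finset.card_biUnion_le_card_mul Z id 3 fun t ht => (hZ.1.1 t ht).le
  rwa [hcover, Finset.card_range, hcard, mul_comm] at this

lemma IsMinCycle.exists_tree_walk {Z : Finset (Finset ℕ)} (hZ : IsMinCycle Z) {v : ℕ}
    (hcover : Z.biUnion id = Finset.range v) :
    ∃ T a b, polygonFaces T a b = Z.val ∧ ∃ w : List.Vector (Fin v) (Z.card + 3),
      IsEvenWalk w.toList ∧ w.toList.map Fin.val = b :: polygonPath T a b := by
  obtain ⟨T, a, b, hT⟩ := hZ.isPolygonal
  refine ⟨T, a, b, hT, ?_⟩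
  have heven := hZ.1.isEvenWalk_polygonPath hT
  have hlength : (b :: polygonPath T a b).length = Z.card + 3 := by
    rw [Finset.card, ← hT, card_polygonFaces]
    simp [polygonPath, length_inorder]
  have hlt : ∀ x ∈ b :: polygonPath T a b, x < v := by
    intro x hx
    obtain ⟨t, ht, hxt⟩ := exists_mem_polygonFaces_of_mem_polygonPath
      (by simpa [hT] using hZ.2.1.ne_empty) hx
    rw [hT] at ht
    exact Finset.mem_range.1 (hcover ▸ Finset.mem_biUnion.2 ⟨t, ht, hxt⟩)
  generalize b :: polygonPath T a b = w at heven hlength hlt ⊢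
  lift w to List (Fin v) using hlt
  exact ⟨⟨w, by simpa using hlength⟩, heven.of_map Fin.val_injective, rfl⟩

lemma card_treesOfNumNodesEq_le (n : ℕ) : (BinaryTree.treesOfNumNodesEq n).card ≤ 4 ^ n := by
  rw [BinaryTree.treesOfNumNodesEq_card_eq_catalan, catalan_eq_centralBinom_div]
  exact (Nat.div_le_self _ _).trans (Nat.centralBinom_le_four_pow n)

open Classical in
lemma Zcount_le_mul_card_isEvenWalk (f v : ℕ) :
    Zcount f v ≤ 4 ^ f *
      Finset.card {w : List.Vector (Fin v) (f + 3) | IsEvenWalk w.toList} := by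
  set W : Finset (List.Vector (Fin v) (f + 3)) := {w | IsEvenWalk w.toList}
  have hcode (Z : {Z : Finset (Finset ℕ) //
      IsMinCycle Z ∧ Z.card = f ∧ Z.biUnion id = Finset.range v}) :
      ∃ c : (BinaryTree.treesOfNumNodesEq f ×ˢ W : Finset _), ∃ T a b,
        polygonFaces T a b = Z.1.val ∧ T.map (fun _ => ()) = c.1.1 ∧
          c.1.2.toList.map Fin.val = b :: polygonPath T a b := by
    obtain ⟨Z, hZ, rfl, hcover⟩ := Z
    obtain ⟨T, a, b, hT, w, heven, hw⟩ := hZ.exists_tree_walk hcover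
    refine ⟨⟨(T.map fun _ => (), w), Finset.mem_product.2 ⟨?_, ?_⟩⟩, T, a, b, hT, rfl, hw⟩
    · rw [BinaryTree.mem_treesOfNumNodesEq, numNodes_map, ← card_polygonFaces T a b, hT]
      rfl
    · exact (Finset.mem_filter_univ w).2 heven
  choose code T a b hfaces hshape hwalk using hcode
  have hinj : code.Injective := by
    intro Z Z' h
    have hwalks := (hwalk Z).symm.trans (h ▸ hwalk Z')
    simp only [polygonPath, List.cons.injEq] at hwalks
    obtain ⟨hb, ha, hpath⟩ := hwalks
    have hT : T Z = T Z' :=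
      eq_of_map_unit_eq_of_inorder_eq (by rw [hshape, hshape, h])
        (List.append_inj' hpath rfl).1
    exact Subtype.ext (Finset.val_injective (by rw [← hfaces, ← hfaces, ha, hb, hT]))
  calc Zcount f v ≤ (BinaryTree.treesOfNumNodesEq f).card * W.card := by
        simpa only [Zcount, Nat.card_eq_finsetCard, Finset.card_product] using
          Nat.card_le_card_of_injective code hinj
    _ ≤ 4 ^ f * W.card := by
      gcongr
      exact card_treesOfNumNodesEq_le f

lemma four_mul_sqrt_add_three_pow_le {f : ℕ} (hf : 1 ≤ f) :
    (4 * √(f + 3 : ℕ)) ^ (f + 3) ≤ 2 ^ (15 * f) * (f : ℝ) ^ ((f : ℝ) / 2) := by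
  have hf' : (1 : ℝ) ≤ f := mod_cast hf
  have hsqrt : √(f + 3 : ℕ) ≤ 2 * √f := by
    rw [Real.sqrt_le_left (by positivity), mul_pow, Real.sq_sqrt (by positivity)]
    push_cast
    linarith
  have hpow : √f ≤ 2 ^ f :=
    (Real.sqrt_le_self_iff.2 (.inr hf')).trans (mod_cast Nat.lt_two_pow_self.le)
  calc (4 * √(f + 3 : ℕ)) ^ (f + 3) ≤ (2 ^ 3 * √f) ^ (f + 3) :=
        pow_le_pow_left₀ (by positivity) (by linarith) _
    _ = 2 ^ (3 * (f + 3)) * √f ^ 3 * √f ^ f := by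
      rw [mul_pow, ← pow_mul, pow_add √f]
      ring
    _ ≤ 2 ^ (3 * (f + 3)) * (2 ^ f) ^ 3 * √f ^ f := by gcongr
    _ ≤ 2 ^ (15 * f) * (f : ℝ) ^ ((f : ℝ) / 2) := by
      rw [Real.rpow_div_two_eq_sqrt _ (Nat.cast_nonneg f), Real.rpow_natCast, ← pow_mul,
        ← pow_add]
      gcongr
      · norm_num
      · omega

theorem Zcount_upper_bound_general :
    ∃ C : ℝ, 0 < C ∧ ∀ f v : ℕ, (Zcount f v : ℝ) ≤ C ^ f * (f : ℝ) ^ ((f : ℝ) / 2) := by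
  classical
  refine ⟨2 ^ 26, by positivity, fun f v => ?_⟩
  by_cases hZ : Zcount f v = 0
  · rw [hZ, Nat.cast_zero]
    positivity
  have hf : 1 ≤ f := Nat.one_le_iff_ne_zero.2 fun h => hZ (h ▸ Zcount_zero v)
  have hv : v ≤ 3 * f := le_three_mul_of_Zcount_ne_zero hZ
  have hv' : (v : ℝ) ≤ 2 ^ v := mod_cast Nat.lt_two_pow_self.le
  calc (Zcount f v : ℝ)
      ≤ 4 ^ f * Finset.card {w : List.Vector (Fin v) (f + 3) | IsEvenWalk w.toList} :=
        mod_cast Zcount_le_mul_card_isEvenWalk f v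
    _ ≤ 4 ^ f * (2 ^ (v + (f + 2)) * ((4 * √(f + 3 : ℕ)) ^ (f + 3) * v)) := by
      gcongr
      simpa only [Fintype.card_fin] using card_isEvenWalk_le (α := Fin v) (f + 2)
    _ ≤ 4 ^ f * (2 ^ (v + (f + 2)) * (2 ^ (15 * f) * (f : ℝ) ^ ((f : ℝ) / 2) * 2 ^ v)) := by
      gcongr
      exact four_mul_sqrt_add_three_pow_le hf
    _ = 2 ^ (2 * f + (v + (f + 2)) + 15 * f + v) * (f : ℝ) ^ ((f : ℝ) / 2) := by
      rw [show (4 : ℝ) ^ f = 2 ^ (2 * f) by rw [pow_mul]; norm_num]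
      ring
    _ ≤ (2 ^ 26) ^ f * (f : ℝ) ^ ((f : ℝ) / 2) := by
      rw [← pow_mul]
      gcongr
      · norm_num
      · omega

end Counting

/-- **Theorem (upper bound on the number of minimal 2-cycles).**
For every `δ > 0` there is a constant `C_δ` such that for all sufficiently large `f`
and `v`, `Z(f,v) ≤ C_δ^f · f^(f/2) · v^(δf)`. -/
theorem Zcount_upper_bound (δ : ℝ) (hδ : 0 < δ) :
    ∃ C : ℝ, 0 < C ∧ ∃ N : ℕ, ∀ f v : ℕ, N ≤ f → N ≤ v →
      (Zcount f v : ℝ) ≤ C ^ f * (f : ℝ) ^ ((f : ℝ) / 2) * (v : ℝ) ^ (δ * f) := by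
  obtain ⟨C, hC, hbound⟩ := Zcount_upper_bound_general
  exact ⟨C, hC, 1, fun f v _ hv => (hbound f v).trans (le_mul_of_one_le_right (by positivity)
    (Real.one_le_rpow (mod_cast hv) (by positivity)))⟩
end

section
/- For all positive integers f and v, Z(f,v) ≤ Σ_{w = v}^{3f} |T(f,w)| · v^w, i.e. the number of inclusion-minimal 2-cycles on vertex set {1,…,v} with f faces is at most the sum over w ≥ v of the number of isomorphism classes of connected triangulated closed surfaces with f faces and w vertices, times v^w. -/
/-- A connected triangulated closed surface on the vertex set `Fin w`, given by its
(nonempty) set `F` of 3-element faces: every edge lies in exactly two faces, the link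
of every vertex is connected, any two faces are joined by a chain of faces in which
consecutive faces share an edge, and every vertex lies in some face. -/
def IsClosedSurface {w : ℕ} (F : Finset (Finset (Fin w))) : Prop :=
  F.Nonempty ∧
  (∀ t ∈ F, t.card = 3) ∧
  (∀ e : Finset (Fin w), e.card = 2 → (∃ t ∈ F, e ⊆ t) →
    (F.filter (fun t => e ⊆ t)).card = 2) ∧
  (∀ v : Fin w, ∃ t ∈ F, v ∈ t) ∧
  (∀ v a b : Fin w,
    (∃ t ∈ F, v ∈ t ∧ a ∈ t ∧ a ≠ v) → (∃ t ∈ F, v ∈ t ∧ b ∈ t ∧ b ≠ v) →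
    Relation.ReflTransGen (fun x y => ({v, x, y} : Finset (Fin w)) ∈ F) a b) ∧
  (∀ t ∈ F, ∀ t' ∈ F,
    Relation.ReflTransGen (fun s s' => s ∈ F ∧ s' ∈ F ∧ (s ∩ s').card = 2) t t')

/-- Simplicial isomorphism of two complexes on the vertex set `Fin w`: a bijection of
the vertex set mapping the faces of one bijectively onto the faces of the other. -/
def SurfIso {w : ℕ} (F F' : Finset (Finset (Fin w))) : Prop :=
  ∃ σ : Equiv.Perm (Fin w), F.image (fun t => t.image σ) = F'

/-- `Tcount f w` is the number of simplicial-isomorphism classes of connected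
triangulated closed surfaces with `f` faces and `w` vertices. -/
noncomputable def Tcount (f w : ℕ) : ℕ :=
  Nat.card (Quot (fun (X Y : {F : Finset (Finset (Fin w)) // IsClosedSurface F ∧ F.card = f}) =>
    SurfIso X.1 Y.1))

/-! A vertex `a` of a 2-cycle can be split in two along any proper nonempty part of its star in
which every edge at `a` lies in an even number of triangles. Splitting creates a vertex and no
triangle, and the result is again a 2-cycle covering its vertices, so it has at most three vertices
per triangle and the process stops. When no vertex can be split, every vertex link is an even graph
without a proper nonempty even subgraph, that is, a single cycle. Splitting preserves minimality,
because a smaller 2-cycle inside the split complex would be identified to a smaller 2-cycle inside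
the original one, and minimality makes the complex strongly connected. A minimal cycle thus unfolds
to a closed surface, from which it is recovered by the map identifying vertices again: there are at
most `v ^ w` such maps for each isomorphism class. -/

open Finset

section EvenGraphs

variable {V : Type*} {G : SimpleGraph V} [Finite G.edgeSet]

-- The first vertex of a longest path has no neighbour other than the second one.
theorem exists_existsUnique_adj_of_isAcyclic (hG : G.IsAcyclic) (hne : G ≠ ⊥) :
    ∃ u, ∃! w, G.Adj u w := by
  obtain ⟨x, y, hxy⟩ := SimpleGraph.ne_bot_iff_exists_adj.mp hne
  have : Nonempty V := ⟨x⟩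
  obtain ⟨u, v, p, hp, hmax⟩ := SimpleGraph.Walk.exists_isPath_forall_isPath_length_le_length G
  have hnil : ¬p.Nil := fun h ↦ by
    have hlen := hmax x y (.cons hxy .nil) (by simp [hxy.ne])
    simp [SimpleGraph.Walk.length_eq_zero_iff.mpr h] at hlen
  refine ⟨u, p.snd, p.adj_snd hnil, fun w hadj ↦ hG.eq_snd_of_adj_start hp hadj ?_⟩
  by_contra hw
  have hlen := hmax w v (p.cons hadj.symm) (hp.cons hw)
  simp at hlen

theorem exists_isCycle_of_even_ncard_neighborSet (heven : ∀ x, Even (G.neighborSet x).ncard)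
    (hne : G ≠ ⊥) : ∃ (u : V) (c : G.Walk u u), c.IsCycle := by
  by_contra! hacyclic
  obtain ⟨u, w, hw, huniq⟩ := exists_existsUnique_adj_of_isAcyclic (G := G) hacyclic hne
  have hleaf : G.neighborSet u = {w} := Set.eq_singleton_iff_unique_mem.mpr ⟨hw, huniq⟩
  simpa [hleaf] using heven u

end EvenGraphs

section VertexLinks

variable {V : Type*} [DecidableEq V] {F : Finset (Finset V)} {a x y : V}

/-- The link of the vertex `a` in the family of triangles `F`, as a graph on all of `V`: the edges
of the link are the pairs completing `a` to a member of `F`, and vertices outside the link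
are isolated. The cardinality condition discards the degenerate triples with a repeated vertex. -/
def vertexLink (F : Finset (Finset V)) (a : V) : SimpleGraph V where
  Adj x y := #{a, x, y} = 3 ∧ {a, x, y} ∈ F
  symm := ⟨fun x y h ↦ by rwa [pair_comm y x]⟩
  loopless := ⟨fun _ h ↦ (card_triple_eq_three_iff.mp h.1).2.2 rfl⟩

theorem vertexLink_adj (hF : ∀ t ∈ F, #t = 3) : (vertexLink F a).Adj x y ↔ {a, x, y} ∈ F :=
  ⟨And.right, fun h ↦ ⟨hF _ h, h⟩⟩

theorem exists_eq_triple_of_mem {t : Finset V} (ht : #t = 3) (ha : a ∈ t) (hx : x ∈ t)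
    (hax : a ≠ x) : ∃ y, t = {a, x, y} := by
  obtain ⟨y, -, rfl⟩ := exists_eq_insert_iff.mpr
    ⟨insert_subset ha (singleton_subset_iff.mpr hx), by rw [card_pair hax, ht]⟩
  exact ⟨y, by rw [insert_comm, pair_comm y x]⟩

theorem neighborSet_vertexLink_self : (vertexLink F a).neighborSet a = ∅ := by
  refine Set.eq_empty_of_forall_notMem fun y hy ↦ ?_
  exact (card_triple_eq_three_iff.mp hy.1).1 rfl

theorem ncard_neighborSet_vertexLink (hF : ∀ t ∈ F, #t = 3) (hax : a ≠ x) :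
    ((vertexLink F a).neighborSet x).ncard = #{t ∈ F | {a, x} ⊆ t} := by
  have himage : (fun y ↦ ({a, x, y} : Finset V)) '' (vertexLink F a).neighborSet x =
      ↑{t ∈ F | {a, x} ⊆ t} := by
    ext t
    simp only [Set.mem_image, SimpleGraph.mem_neighborSet, vertexLink_adj hF, coe_filter,
      Set.mem_ofPred_eq, insert_subset_iff, singleton_subset_iff]
    constructor
    · rintro ⟨y, hy, rfl⟩
      simpa using hy
    · rintro ⟨ht, ha, hx⟩
      obtain ⟨y, rfl⟩ := exists_eq_triple_of_mem (hF t ht) ha hx hax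
      exact ⟨y, ht, rfl⟩
  rw [← Set.ncard_coe_finset, ← himage, Set.InjOn.ncard_image]
  intro y hy z _ hyz
  obtain ⟨-, hay, hxy⟩ := card_triple_eq_three_iff.mp hy.1
  have hyz' : y ∈ ({a, x, z} : Finset V) := hyz.subset (by simp)
  simpa [hay.symm, hxy.symm] using hyz'

theorem finite_edgeSet_vertexLink : (vertexLink F a).edgeSet.Finite := by
  refine (F.biUnion id).sym2.finite_toSet.subset fun e he ↦ ?_
  induction e with
  | _ x y =>
    have hvertex {z : V} (hz : z ∈ ({a, x, y} : Finset V)) : z ∈ F.biUnion id :=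
      mem_biUnion.mpr ⟨_, he.2, hz⟩
    exact mk_mem_sym2_iff.mpr ⟨hvertex (by simp), hvertex (by simp)⟩

/-- The members of `F` spanned by the vertex `a` and an edge of `H`: the part of the star of `a`
whose link is `H`, when `H` is a subgraph of the link of `a`. -/
noncomputable def starOver (F : Finset (Finset V)) (a : V) (H : SimpleGraph V) :
    Finset (Finset V) :=
  open Classical in {t ∈ F | ∃ x y, H.Adj x y ∧ t = {a, x, y}}

variable {H : SimpleGraph V}

theorem mem_starOver {t : Finset V} :
    t ∈ starOver F a H ↔ t ∈ F ∧ ∃ x y, H.Adj x y ∧ t = {a, x, y} := by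
  simp only [starOver, mem_filter]

theorem starOver_subset : starOver F a H ⊆ F :=
  fun _ ht ↦ (mem_starOver.mp ht).1

theorem vertexLink_starOver (hH : H ≤ vertexLink F a) : vertexLink (starOver F a H) a = H := by
  ext x y
  constructor
  · rintro ⟨hcard, hmem⟩
    obtain ⟨-, x', y', hadj, heq⟩ := mem_starOver.mp hmem
    obtain ⟨hax, hay, -⟩ := card_triple_eq_three_iff.mp hcard
    obtain ⟨hax', hay', -⟩ := card_triple_eq_three_iff.mp (hH hadj).1
    have hpair : ({x, y} : Finset V) = {x', y'} := by
      simpa [hax, hay, hax', hay'] using congrArg (erase · a) heq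
    rw [← coe_inj, coe_pair, coe_pair, Set.pair_eq_pair_iff] at hpair
    obtain ⟨rfl, rfl⟩ | ⟨rfl, rfl⟩ := hpair
    exacts [hadj, hadj.symm]
  · exact fun h ↦ ⟨(hH h).1, mem_starOver.mpr ⟨(hH h).2, x, y, h, rfl⟩⟩

/-- A family of triangles around the vertex `a` in which every edge at `a` lies in an even number
of members. A 2-cycle can be pulled apart at `a` along such a subfamily. -/
def IsEvenStar (a : V) (S : Finset (Finset V)) : Prop :=
  (∀ t ∈ S, a ∈ t) ∧ ∀ x ≠ a, Even #{t ∈ S | {a, x} ⊆ t}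

/-- No vertex can be split: a nonempty even star contained in `F` is the whole star of its apex. -/
def IsUnsplittable (F : Finset (Finset V)) : Prop :=
  ∀ a, ∀ S ⊆ F, S.Nonempty → IsEvenStar a S → ∀ t ∈ F, a ∈ t → t ∈ S

end VertexLinks

section UnsplittableCycles

variable {V : Type} [DecidableEq V] {F : Finset (Finset V)} {a x y : V}

theorem IsTwoCycle.even_ncard_neighborSet_vertexLink (hF : IsTwoCycle F) (a x : V) :
    Even ((vertexLink F a).neighborSet x).ncard := by
  obtain rfl | hax := eq_or_ne a x
  · simp [neighborSet_vertexLink_self]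
  · rw [ncard_neighborSet_vertexLink hF.1 hax]
    exact hF.2 _ (card_pair hax)

theorem IsUnsplittable.exists_isCycle_spanningCoe_eq_vertexLink
    (hF : IsUnsplittable F) (hcycle : IsTwoCycle F) (hne : vertexLink F a ≠ ⊥) :
    ∃ (u : V) (c : (vertexLink F a).Walk u u),
      c.IsCycle ∧ c.toSubgraph.spanningCoe = vertexLink F a := by
  have : Finite (vertexLink F a).edgeSet := finite_edgeSet_vertexLink
  obtain ⟨u, c, hc⟩ := exists_isCycle_of_even_ncard_neighborSet
    (hcycle.even_ncard_neighborSet_vertexLink a) hne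
  refine ⟨u, c, hc, ?_⟩
  set H := c.toSubgraph.spanningCoe
  have hH : H ≤ vertexLink F a := c.toSubgraph.spanningCoe_le
  have hlink : vertexLink (starOver F a H) a = H := vertexLink_starOver hH
  have hstart : H.Adj u c.snd := c.toSubgraph_adj_snd hc.not_nil
  have hnonempty : (starOver F a H).Nonempty :=
    ⟨_, mem_starOver.mpr ⟨(hH hstart).2, _, _, hstart, rfl⟩⟩
  have hstar : IsEvenStar a (starOver F a H) := by
    refine ⟨fun t ht ↦ ?_, fun x hx ↦ ?_⟩
    · obtain ⟨-, _, _, -, rfl⟩ := mem_starOver.mp ht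
      exact mem_insert_self _ _
    · have hcard : ∀ t ∈ starOver F a H, #t = 3 := fun t ht ↦ hcycle.1 t (starOver_subset ht)
      rw [← ncard_neighborSet_vertexLink hcard hx.symm, hlink]
      obtain hempty | hnbr := (H.neighborSet x).eq_empty_or_nonempty
      · rw [hempty, Set.ncard_empty]
        exact Even.zero
      · rw [hc.isCycles_spanningCoe_toSubgraph hnbr]
        exact even_two
  refine hH.antisymm fun x y hxy ↦ ?_
  rw [← hlink]
  exact ⟨hxy.1, hF a _ starOver_subset hnonempty hstar _ hxy.2 (mem_insert_self _ _)⟩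

theorem IsUnsplittable.isCycles_vertexLink (hF : IsUnsplittable F)
    (hcycle : IsTwoCycle F) (a : V) : (vertexLink F a).IsCycles := by
  obtain hbot | hne := eq_or_ne (vertexLink F a) ⊥
  · intro x ⟨y, hxy⟩
    simp [hbot] at hxy
  · obtain ⟨u, c, hc, heq⟩ := hF.exists_isCycle_spanningCoe_eq_vertexLink hcycle hne
    exact heq ▸ hc.isCycles_spanningCoe_toSubgraph

theorem IsUnsplittable.reachable_vertexLink (hF : IsUnsplittable F)
    (hcycle : IsTwoCycle F) {x' y' : V} (hx : (vertexLink F a).Adj x x')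
    (hy : (vertexLink F a).Adj y y') : (vertexLink F a).Reachable x y := by
  have hne : vertexLink F a ≠ ⊥ := SimpleGraph.ne_bot_iff_exists_adj.mpr ⟨x, x', hx⟩
  obtain ⟨u, c, -, heq⟩ := hF.exists_isCycle_spanningCoe_eq_vertexLink hcycle hne
  have hsupport {p q : V} (h : (vertexLink F a).Adj p q) : p ∈ c.support := by
    rw [← heq] at h
    exact c.mem_verts_toSubgraph.mp (c.toSubgraph.edge_vert h)
  exact (c.takeUntil x (hsupport hx)).reachable.symm.trans
    (c.takeUntil y (hsupport hy)).reachable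

theorem IsUnsplittable.card_filter_subset_eq_two (hF : IsUnsplittable F)
    (hcycle : IsTwoCycle F) {e : Finset V} (he : #e = 2) (hex : ∃ t ∈ F, e ⊆ t) :
    #{t ∈ F | e ⊆ t} = 2 := by
  obtain ⟨a, x, hax, rfl⟩ := card_eq_two.mp he
  obtain ⟨t, ht, hsub⟩ := hex
  obtain ⟨y, rfl⟩ := exists_eq_triple_of_mem (hcycle.1 t ht)
    (hsub (mem_insert_self _ _)) (hsub (mem_insert_of_mem (mem_singleton_self _))) hax
  rw [← ncard_neighborSet_vertexLink hcycle.1 hax]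
  exact hF.isCycles_vertexLink hcycle a ⟨y, (vertexLink_adj hcycle.1).mpr ht⟩

theorem IsUnsplittable.reflTransGen_link (hF : IsUnsplittable F)
    (hcycle : IsTwoCycle F) (hx : ∃ t ∈ F, a ∈ t ∧ x ∈ t ∧ x ≠ a)
    (hy : ∃ t ∈ F, a ∈ t ∧ y ∈ t ∧ y ≠ a) :
    Relation.ReflTransGen (fun p q ↦ ({a, p, q} : Finset V) ∈ F) x y := by
  have hadj {z : V} (hz : ∃ t ∈ F, a ∈ t ∧ z ∈ t ∧ z ≠ a) :
      ∃ z', (vertexLink F a).Adj z z' := by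
    obtain ⟨t, ht, hat, hzt, hza⟩ := hz
    obtain ⟨z', rfl⟩ := exists_eq_triple_of_mem (hcycle.1 t ht) hat hzt hza.symm
    exact ⟨z', (vertexLink_adj hcycle.1).mpr ht⟩
  obtain ⟨x', hx'⟩ := hadj hx
  obtain ⟨y', hy'⟩ := hadj hy
  exact Relation.ReflTransGen.mono (fun _ _ h ↦ h.2) _ _
    ((SimpleGraph.reachable_iff_reflTransGen x y).mp (hF.reachable_vertexLink hcycle hx' hy'))

end UnsplittableCycles

section TwoCycles

variable {V W : Type} [DecidableEq V] [DecidableEq W]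

theorem card_filter_image_of_injOn {α β : Type*} [DecidableEq β] {s : Finset α} {f : α → β}
    (hf : Set.InjOn f s) (p : β → Prop) [DecidablePred p] :
    #{b ∈ s.image f | p b} = #{a ∈ s | p (f a)} := by
  rw [filter_image]
  exact card_image_of_injOn (hf.mono (coe_subset.mpr (filter_subset _ _)))

theorem filter_mem_eq_and_subset_image_iff {α β : Type*} [DecidableEq β]
    {t e' : Finset α} {e : Finset β} {φ : α → β} (hφ : Set.InjOn φ t) :
    {x ∈ t | φ x ∈ e} = e' ∧ e ⊆ t.image φ ↔ e' ⊆ t ∧ e'.image φ = e := by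
  constructor
  · rintro ⟨rfl, he⟩
    refine ⟨filter_subset _ _, ?_⟩
    ext y
    grind
  · rintro ⟨he', rfl⟩
    refine ⟨?_, image_subset_image he'⟩
    ext x
    grind [Set.InjOn]

theorem card_inter_eq_of_ne {α : Type*} [DecidableEq α] {s t e : Finset α} {n : ℕ}
    (hs : #s = n + 1) (ht : #t = n + 1) (hst : s ≠ t) (he : #e = n) (hes : e ⊆ s) (het : e ⊆ t) :
    #(s ∩ t) = n := by
  have hle : n ≤ #(s ∩ t) := he ▸ card_le_card (subset_inter hes het)
  have hssubset : s ∩ t ⊂ s := inter_subset_left.ssubset_of_ne fun h ↦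
    hst (eq_of_subset_of_card_le (inter_eq_left.mp h) (by rw [hs, ht]))
  have hlt := card_lt_card hssubset
  omega

theorem card_univ_le_mul_card_of_forall_mem {α : Type*} [Fintype α]
    {F : Finset (Finset α)} {k : ℕ} (hF : ∀ t ∈ F, #t = k) (hcover : ∀ x, ∃ t ∈ F, x ∈ t) :
    Fintype.card α ≤ k * #F := by
  classical
  have huniv : univ = F.biUnion id := by
    ext x
    simpa using hcover x
  rw [← card_univ, huniv, mul_comm]
  exact card_biUnion_le_card_mul _ _ _ fun t ht ↦ (hF t ht).le

-- The triangles whose image contains an edge `e` are partitioned according to the edge they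
-- contain above `e`.
theorem IsTwoCycle.pushforward {F : Finset (Finset W)} (hF : IsTwoCycle F) {φ : W → V}
    (hφ : ∀ t ∈ F, Set.InjOn φ t) (hinj : Set.InjOn (Finset.image φ) (F : Set (Finset W))) :
    IsTwoCycle (F.image (Finset.image φ)) := by
  refine ⟨forall_mem_image.mpr fun t ht ↦ by rw [card_image_of_injOn (hφ t ht), hF.1 t ht],
    fun e he ↦ ?_⟩
  rw [card_filter_image_of_injOn hinj, card_eq_sum_card_image fun t ↦ t.filter (φ · ∈ e)]
  refine even_sum _ (forall_mem_image.mpr fun t ht ↦ ?_)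
  obtain ⟨ht, het⟩ := mem_filter.mp ht
  set e' := {x ∈ t | φ x ∈ e} with he'
  obtain ⟨he't, himage⟩ := (filter_mem_eq_and_subset_image_iff (hφ t ht)).mp ⟨he'.symm, het⟩
  have hcard : #e' = 2 := by
    rw [← card_image_of_injOn ((hφ t ht).mono (coe_subset.mpr he't)), himage, he]
  have hfibre : {s ∈ {s ∈ F | e ⊆ s.image φ} | s.filter (φ · ∈ e) = e'} = {s ∈ F | e' ⊆ s} := by
    rw [filter_filter]
    refine filter_congr fun s hs ↦ ?_
    rw [and_comm, filter_mem_eq_and_subset_image_iff (hφ s hs), and_iff_left himage]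
  rw [hfibre]
  exact hF.2 e' hcard

theorem IsTwoCycle.of_image {F : Finset (Finset W)} {φ : W → V} (hφ : Function.Injective φ)
    (hF : IsTwoCycle (F.image (Finset.image φ))) : IsTwoCycle F := by
  refine ⟨fun t ht ↦ ?_, fun e he ↦ ?_⟩
  · rw [← card_image_of_injective t hφ]
    exact hF.1 _ (mem_image_of_mem _ ht)
  · have heven := hF.2 (e.image φ) (by rw [card_image_of_injective _ hφ, he])
    rw [card_filter_image_of_injOn (image_injective hφ).injOn] at heven
    simpa only [image_subset_image_iff hφ] using heven

-- The faces reachable from `t` form a 2-cycle: whenever one of them contains an edge, so do all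
-- faces containing that edge.
theorem IsMinCycle.reflTransGen_card_inter_eq_two {F : Finset (Finset V)} (hF : IsMinCycle F)
    {t t' : Finset V} (ht : t ∈ F) (ht' : t' ∈ F) :
    Relation.ReflTransGen (fun s s' ↦ s ∈ F ∧ s' ∈ F ∧ #(s ∩ s') = 2) t t' := by
  classical
  set R := Relation.ReflTransGen (fun s s' ↦ s ∈ F ∧ s' ∈ F ∧ #(s ∩ s') = 2)
  set C := {s ∈ F | R t s}
  have hCF : C ⊆ F := filter_subset _ _
  have hclosed {s s' e : Finset V} (hs : s ∈ C) (hs' : s' ∈ F) (he : #e = 2) (hes : e ⊆ s)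
      (hes' : e ⊆ s') : s' ∈ C := by
    obtain rfl | hne := eq_or_ne s s'
    · exact hs
    obtain ⟨hsF, hts⟩ := mem_filter.mp hs
    exact mem_filter.mpr ⟨hs', hts.tail ⟨hsF, hs',
      card_inter_eq_of_ne (hF.1.1 s hsF) (hF.1.1 s' hs') hne he hes hes'⟩⟩
  have hC : IsTwoCycle C := by
    refine ⟨fun s hs ↦ hF.1.1 s (hCF hs), fun e he ↦ ?_⟩
    obtain hempty | ⟨s, hs⟩ := {s ∈ C | e ⊆ s}.eq_empty_or_nonempty
    · simp [hempty]
    obtain ⟨hsC, hes⟩ := mem_filter.mp hs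
    have hfilter : {s ∈ C | e ⊆ s} = {s ∈ F | e ⊆ s} :=
      (filter_subset_filter _ hCF).antisymm fun s' hs' ↦
        have ⟨hs'F, hes'⟩ := mem_filter.mp hs'
        mem_filter.mpr ⟨hclosed hsC hs'F he hes hes', hes'⟩
    exact hfilter ▸ hF.1.2 e he
  have hCeq : C = F := by
    by_contra hne
    exact hF.2.2 C (hCF.ssubset_of_ne hne) ⟨t, mem_filter.mpr ⟨ht, .refl⟩⟩ hC
  exact (mem_filter.mp (hCeq.superset ht')).2

end TwoCycles

section Unfoldings

variable {U V W : Type} [DecidableEq U] [DecidableEq V] [DecidableEq W]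

/-- The 2-cycle `F`, which covers all of `W`, becomes `Z` when its vertices are identified
along `φ`, and this identification merges no two triangles. -/
structure IsUnfolding (φ : W → V) (F : Finset (Finset W)) (Z : Finset (Finset V)) : Prop where
  isTwoCycle : IsTwoCycle F
  covers : ∀ x, ∃ t ∈ F, x ∈ t
  image_eq : F.image (image φ) = Z
  card_eq : #F = #Z

namespace IsUnfolding

theorem refl {Z : Finset (Finset V)} (hZ : IsTwoCycle Z) (hcover : ∀ x, ∃ t ∈ Z, x ∈ t) :
    IsUnfolding id Z Z :=
  ⟨hZ, hcover, by ext; simp, rfl⟩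

theorem trans {φ : V → U} {ψ : W → V} {G : Finset (Finset W)} {F : Finset (Finset V)}
    {Z : Finset (Finset U)} (hψ : IsUnfolding ψ G F) (hφ : IsUnfolding φ F Z) :
    IsUnfolding (φ ∘ ψ) G Z where
  isTwoCycle := hψ.isTwoCycle
  covers := hψ.covers
  image_eq := by
    rw [← hφ.image_eq, ← hψ.image_eq, Finset.image_image]
    exact image_congr fun t _ ↦ (Finset.image_image).symm
  card_eq := hψ.card_eq.trans hφ.card_eq

theorem of_equiv {F : Finset (Finset V)} (hF : IsTwoCycle F) (hcover : ∀ x, ∃ t ∈ F, x ∈ t)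
    (e : W ≃ V) : IsUnfolding e (F.image (image e.symm)) F where
  isTwoCycle := hF.pushforward (fun _ _ ↦ e.symm.injective.injOn)
    (image_injective e.symm.injective).injOn
  covers x := by
    obtain ⟨t, ht, hx⟩ := hcover (e x)
    exact ⟨_, mem_image_of_mem _ ht, by simpa using mem_image_of_mem e.symm hx⟩
  image_eq := by simp [Finset.image_image, Function.comp_def]
  card_eq := card_image_of_injective _ (image_injective e.symm.injective)

theorem isMinCycle {φ : W → V} {F : Finset (Finset W)} {Z : Finset (Finset V)}
    (h : IsUnfolding φ F Z) (hZ : IsMinCycle Z) : IsMinCycle F := by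
  have hmem {t} (ht : t ∈ F) : t.image φ ∈ Z := h.image_eq ▸ mem_image_of_mem _ ht
  have hφ {t} (ht : t ∈ F) : Set.InjOn φ t :=
    card_image_iff.mp (by rw [h.isTwoCycle.1 t ht, hZ.1.1 _ (hmem ht)])
  have hinj : Set.InjOn (image φ) (F : Set (Finset W)) :=
    card_image_iff.mp (by rw [h.image_eq, h.card_eq])
  refine ⟨h.isTwoCycle, card_pos.mp (h.card_eq ▸ hZ.2.1.card_pos), fun F' hF' hne hcycle ↦ ?_⟩
  have hsub : F'.image (image φ) ⊆ Z := h.image_eq ▸ image_subset_image hF'.subset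
  have hssub : F'.image (image φ) ⊂ Z := hsub.ssubset_of_ne fun heq ↦ by
    have hcard : #F ≤ #F' := h.card_eq.trans_le (heq ▸ card_image_le)
    exact (card_lt_card hF').not_ge hcard
  exact hZ.2.2 _ hssub (hne.image _) (hcycle.pushforward (fun t ht ↦ hφ (hF'.subset ht))
    (hinj.mono (coe_subset.mpr hF'.subset)))

end IsUnfolding

end Unfoldings

section Splitting

variable {V : Type*} [DecidableEq V] {F S : Finset (Finset V)} {a : V} {t : Finset V}

/-- The effect on a face `t` of splitting the vertex `a`: the faces in `S` are moved to the new
copy `none` of `a`, all other faces keep their vertices. -/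
def splitFace (a : V) (S : Finset (Finset V)) (t : Finset V) : Finset (Option V) :=
  t.image (if t ∈ S then Function.update some a none else some)

theorem none_mem_splitFace : none ∈ splitFace a S t ↔ t ∈ S ∧ a ∈ t := by
  by_cases ht : t ∈ S <;> simp [splitFace, ht, Function.update_apply]

theorem some_mem_splitFace {x : V} : some x ∈ splitFace a S t ↔ x ∈ t ∧ (t ∈ S → x ≠ a) := by
  by_cases ht : t ∈ S <;> simp [splitFace, ht, Function.update_apply, and_comm]

theorem image_getD_splitFace : (splitFace a S t).image (·.getD a) = t := by
  rw [splitFace, image_image]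
  have hcomp : (·.getD a) ∘ (if t ∈ S then Function.update some a none else some) = id := by
    ext x
    by_cases ht : t ∈ S <;> by_cases hx : x = a <;> simp [ht, hx]
  rw [hcomp, image_id]

theorem splitFace_injective : Function.Injective (splitFace a S) :=
  Function.LeftInverse.injective fun _ ↦ image_getD_splitFace

theorem card_splitFace : #(splitFace a S t) = #t := by
  refine (card_image_le).antisymm ?_
  conv_lhs => rw [← image_getD_splitFace (a := a) (S := S) (t := t)]
  exact card_image_le

theorem even_card_filter_none_some_subset_splitFace (hSF : S ⊆ F) (hS : IsEvenStar a S) (x : V) :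
    Even #{t ∈ F | {none, some x} ⊆ splitFace a S t} := by
  simp only [insert_subset_iff, singleton_subset_iff, none_mem_splitFace, some_mem_splitFace]
  obtain rfl | hx := eq_or_ne x a
  · rw [filter_false_of_mem fun t _ h ↦ h.2.2 h.1.1 rfl, card_empty]
    exact Even.zero
  · convert hS.2 x hx using 2
    ext t
    have := @hSF t
    grind

end Splitting

section SplittingCycles

variable {V : Type} [DecidableEq V] {F S : Finset (Finset V)} {a : V} {t : Finset V}

theorem even_card_filter_some_some_subset_splitFace (hF : IsTwoCycle F) (hSF : S ⊆ F)
    (hS : IsEvenStar a S) {x : V} (hx : x ≠ a) :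
    Even #{t ∈ F | {some a, some x} ⊆ splitFace a S t} := by
  have hdiff : {t ∈ F | {some a, some x} ⊆ splitFace a S t} =
      {t ∈ F | {a, x} ⊆ t} \ {t ∈ S | {a, x} ⊆ t} := by
    ext t
    simp only [insert_subset_iff, singleton_subset_iff, some_mem_splitFace, mem_filter, mem_sdiff]
    grind
  rw [hdiff, card_sdiff_of_subset (filter_subset_filter _ hSF)]
  exact (hF.2 _ (card_pair hx.symm)).tsub (hS.2 x hx)

theorem IsTwoCycle.image_splitFace (hF : IsTwoCycle F) (hSF : S ⊆ F) (hS : IsEvenStar a S) :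
    IsTwoCycle (F.image (splitFace a S)) := by
  refine ⟨forall_mem_image.mpr fun t ht ↦ by rw [card_splitFace, hF.1 t ht], fun e he ↦ ?_⟩
  rw [card_filter_image_of_injOn splitFace_injective.injOn]
  obtain ⟨p, q, hpq, rfl⟩ := card_eq_two.mp he
  obtain _ | x := p <;> obtain _ | y := q
  · exact absurd rfl hpq
  · exact even_card_filter_none_some_subset_splitFace hSF hS y
  · rw [pair_comm]
    exact even_card_filter_none_some_subset_splitFace hSF hS x
  · have hxy : x ≠ y := fun h ↦ hpq (congrArg some h)
    obtain rfl | hx := eq_or_ne x a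
    · exact even_card_filter_some_some_subset_splitFace hF hSF hS hxy.symm
    obtain rfl | hy := eq_or_ne y a
    · rw [pair_comm]
      exact even_card_filter_some_some_subset_splitFace hF hSF hS hxy
    simpa [insert_subset_iff, some_mem_splitFace, hx, hy] using hF.2 _ (card_pair hxy)

theorem isUnfolding_image_splitFace (hF : IsTwoCycle F) (hcover : ∀ x, ∃ t ∈ F, x ∈ t)
    (hSF : S ⊆ F) (hS : IsEvenStar a S) (hne : S.Nonempty) (ht : t ∈ F) (hat : a ∈ t)
    (htS : t ∉ S) : IsUnfolding (·.getD a) (F.image (splitFace a S)) F where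
  isTwoCycle := hF.image_splitFace hSF hS
  covers
    | none => by
      obtain ⟨s, hs⟩ := hne
      exact ⟨_, mem_image_of_mem _ (hSF hs), none_mem_splitFace.mpr ⟨hs, hS.1 s hs⟩⟩
    | some x => by
      obtain rfl | hx := eq_or_ne x a
      · exact ⟨_, mem_image_of_mem _ ht, some_mem_splitFace.mpr ⟨hat, fun h ↦ absurd h htS⟩⟩
      · obtain ⟨s, hs, hxs⟩ := hcover x
        exact ⟨_, mem_image_of_mem _ hs, some_mem_splitFace.mpr ⟨hxs, fun _ ↦ hx⟩⟩
  image_eq := by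
    rw [image_image]
    have hcomp : image (·.getD a) ∘ splitFace a S = id := funext fun _ ↦ image_getD_splitFace
    rw [hcomp, image_id]
  card_eq := card_image_of_injective _ splitFace_injective

theorem exists_isUnfolding_succ_of_not_isUnsplittable {n : ℕ} {F : Finset (Finset (Fin n))}
    (hF : IsTwoCycle F) (hcover : ∀ x, ∃ t ∈ F, x ∈ t) (hsplit : ¬IsUnsplittable F) :
    ∃ (G : Finset (Finset (Fin (n + 1)))) (ψ : Fin (n + 1) → Fin n), IsUnfolding ψ G F := by
  unfold IsUnsplittable at hsplit
  push Not at hsplit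
  obtain ⟨a, S, hSF, hne, hS, t, ht, hat, htS⟩ := hsplit
  have hunfold := isUnfolding_image_splitFace hF hcover hSF hS hne ht hat htS
  exact ⟨_, _, (IsUnfolding.of_equiv hunfold.isTwoCycle hunfold.covers finSuccEquivLast).trans
    hunfold⟩

-- Splitting terminates because a covering 2-cycle has at most three vertices per triangle.
theorem exists_isUnfolding_isUnsplittable {n : ℕ} {Z : Finset (Finset (Fin n))}
    (hZ : IsTwoCycle Z) (hcover : ∀ x, ∃ t ∈ Z, x ∈ t) :
    ∃ w ≥ n, ∃ (F : Finset (Finset (Fin w))) (φ : Fin w → Fin n),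
      IsUnfolding φ F Z ∧ IsUnsplittable F := by
  induction hk : 3 * #Z - n using Nat.strong_induction_on generalizing n with
  | _ k ih =>
    by_cases hsplit : IsUnsplittable Z
    · exact ⟨n, le_rfl, Z, id, .refl hZ hcover, hsplit⟩
    obtain ⟨G, ψ, hG⟩ := exists_isUnfolding_succ_of_not_isUnsplittable hZ hcover hsplit
    have hbound := card_univ_le_mul_card_of_forall_mem hG.isTwoCycle.1 hG.covers
    rw [Fintype.card_fin, hG.card_eq] at hbound
    obtain ⟨w, hw, F, φ, hφ, hF⟩ :=
      ih (3 * #G - (n + 1)) (by rw [hG.card_eq]; omega) hG.isTwoCycle hG.covers rfl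
    exact ⟨w, by omega, F, ψ ∘ φ, hφ.trans hG, hF⟩

end SplittingCycles

section Counting

theorem IsMinCycle.exists_isClosedSurface {v : ℕ} {Z : Finset (Finset (Fin v))}
    (hZ : IsMinCycle Z) (hcover : ∀ x, ∃ t ∈ Z, x ∈ t) :
    ∃ w ∈ Icc v (3 * #Z), ∃ (F : Finset (Finset (Fin w))) (φ : Fin w → Fin v),
      IsClosedSurface F ∧ IsUnfolding φ F Z := by
  obtain ⟨w, hvw, F, φ, hφ, hF⟩ := exists_isUnfolding_isUnsplittable hZ.1 hcover
  have hmin : IsMinCycle F := hφ.isMinCycle hZ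
  have hw : w ≤ 3 * #Z := by
    simpa [hφ.card_eq] using card_univ_le_mul_card_of_forall_mem hmin.1.1 hφ.covers
  exact ⟨w, mem_Icc.mpr ⟨hvw, hw⟩, F, φ,
    ⟨hmin.2.1, hmin.1.1, fun _ ↦ hF.card_filter_subset_eq_two hmin.1, hφ.covers,
      fun _ _ _ ↦ hF.reflTransGen_link hmin.1,
      fun _ ht _ ht' ↦ hmin.reflTransGen_card_inter_eq_two ht ht'⟩, hφ⟩

theorem IsTwoCycle.exists_isUnfolding_val {v : ℕ} {Z : Finset (Finset ℕ)} (hZ : IsTwoCycle Z)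
    (hcover : Z.biUnion id = range v) :
    ∃ F : Finset (Finset (Fin v)), IsUnfolding Fin.val F Z := by
  have hlt : ∀ t ∈ Z, ∀ x ∈ t, x < v := fun t ht x hx ↦
    mem_range.mp (hcover ▸ mem_biUnion.mpr ⟨t, ht, hx⟩)
  lift Z to Finset (Finset (Fin v)) using hlt
  refine ⟨Z, hZ.of_image Fin.val_injective, fun x ↦ ?_, rfl,
    (card_image_of_injective _ (image_injective Fin.val_injective)).symm⟩
  have hx : (x : ℕ) ∈ range v := mem_range.mpr x.isLt
  rw [← hcover] at hx
  simpa [Fin.val_inj] using hx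

theorem Zcount_le_ncard_isMinCycle (f v : ℕ) :
    Zcount f v ≤ {Z : Finset (Finset (Fin v)) |
      IsMinCycle Z ∧ #Z = f ∧ ∀ x, ∃ t ∈ Z, x ∈ t}.ncard := by
  refine le_trans ?_ (Set.ncard_image_le (f := Finset.image (Finset.image Fin.val)))
  refine Set.ncard_le_ncard fun Z ⟨hZ, hcard, hcover⟩ ↦ ?_
  obtain ⟨F, hF⟩ := hZ.1.exists_isUnfolding_val hcover
  exact ⟨F, ⟨hF.isMinCycle hZ, hF.card_eq.trans hcard, hF.covers⟩, hF.image_eq⟩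

theorem SurfIso.range_image_eq {V : Type*} [DecidableEq V] {w : ℕ} {F F' : Finset (Finset (Fin w))}
    (h : SurfIso F F') :
    Set.range (fun φ : Fin w → V ↦ F.image (image φ)) =
      Set.range (fun φ : Fin w → V ↦ F'.image (image φ)) := by
  obtain ⟨σ, rfl⟩ := h
  rw [← (σ.arrowCongr (Equiv.refl V)).symm.surjective.range_comp]
  congr 1
  ext1 φ
  simp [image_image, Function.comp_def, Equiv.arrowCongr]

/-- Simplicial-isomorphism classes of connected triangulated closed surfaces with `f` faces and
`w` vertices: the type counted by `Tcount f w`. -/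
abbrev SurfaceClass (f w : ℕ) : Type :=
  Quot (fun (X Y : {F : Finset (Finset (Fin w)) // IsClosedSurface F ∧ F.card = f}) =>
    SurfIso X.1 Y.1)

/-- The families of subsets of `V` obtained from the surfaces of a class by labelling their
vertices with elements of `V`. -/
def SurfaceClass.labellings {f w : ℕ} (V : Type*) [DecidableEq V] (c : SurfaceClass f w) :
    Set (Finset (Finset V)) :=
  c.lift (fun X ↦ Set.range fun φ : Fin w → V ↦ X.1.image (image φ))
    fun _ _ h ↦ h.range_image_eq

theorem SurfaceClass.ncard_labellings_le {f w : ℕ} (V : Type*) [DecidableEq V] [Finite V]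
    (c : SurfaceClass f w) : (c.labellings V).ncard ≤ Nat.card V ^ w := by
  obtain ⟨X, rfl⟩ := c.exists_rep
  calc (Set.range fun φ : Fin w → V ↦ X.1.image (image φ)).ncard
      ≤ Nat.card (Fin w → V) := by
        rw [← Set.image_univ, ← Set.ncard_univ]
        exact Set.ncard_image_le
    _ = Nat.card V ^ w := by simp [Nat.card_fun]

theorem ncard_iUnion_labellings_le (f w : ℕ) (V : Type*) [DecidableEq V] [Finite V] :
    (⋃ c : SurfaceClass f w, c.labellings V).ncard ≤ Tcount f w * Nat.card V ^ w := by
  have : Finite (SurfaceClass f w) := Quot.finite _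
  have := Fintype.ofFinite (SurfaceClass f w)
  calc (⋃ c : SurfaceClass f w, c.labellings V).ncard
      ≤ ∑ c : SurfaceClass f w, (c.labellings V).ncard := Set.ncard_iUnion_le_of_fintype _
    _ ≤ #(univ : Finset (SurfaceClass f w)) • Nat.card V ^ w :=
        sum_le_card_nsmul _ _ _ fun c _ ↦ c.ncard_labellings_le V
    _ = Tcount f w * Nat.card V ^ w := by
        rw [smul_eq_mul, card_univ, ← Nat.card_eq_fintype_card, Tcount]

end Counting

/-- **Lemma (cycle counts from surface counts).**
For all positive integers `f` and `v`,
`Z(f,v) ≤ Σ_{w=v}^{3f} |T(f,w)| · v^w`. -/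
theorem Zcount_le_sum_Tcount (f v : ℕ) (hf : 0 < f) (hv : 0 < v) :
    Zcount f v ≤ ∑ w ∈ Finset.Icc v (3 * f), Tcount f w * v ^ w := by
  have hlabel : {Z : Finset (Finset (Fin v)) | IsMinCycle Z ∧ #Z = f ∧ ∀ x, ∃ t ∈ Z, x ∈ t} ⊆
      ⋃ w ∈ Icc v (3 * f), ⋃ c : SurfaceClass f w, c.labellings (Fin v) := by
    rintro Z ⟨hZ, rfl, hcover⟩
    obtain ⟨w, hw, F, φ, hF, hφ⟩ := hZ.exists_isClosedSurface hcover
    exact Set.mem_biUnion hw (Set.mem_iUnion.mpr ⟨.mk _ ⟨F, hF, hφ.card_eq⟩, φ, hφ.image_eq⟩)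
  calc Zcount f v
      ≤ _ := Zcount_le_ncard_isMinCycle f v
    _ ≤ (⋃ w ∈ Icc v (3 * f), ⋃ c : SurfaceClass f w, c.labellings (Fin v)).ncard :=
        Set.ncard_le_ncard hlabel
    _ ≤ ∑ w ∈ Icc v (3 * f), (⋃ c : SurfaceClass f w, c.labellings (Fin v)).ncard :=
        set_ncard_biUnion_le _ _
    _ ≤ ∑ w ∈ Icc v (3 * f), Tcount f w * v ^ w := sum_le_sum fun w _ ↦ by
        simpa using ncard_iUnion_labellings_le f w (Fin v)
end

section
/- For every δ > 0 there exists a constant C_δ such that for all positive integers f and w, |T(f,w)| ≤ C_δ^f · f^{f/2} · w^{−(1−δ)w}. -/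
/-!
A flag is a triangle with an ordering of its corners, and its mate is the flag over the same
directed edge in the neighbouring triangle. The mates determine a surface up to isomorphism. Fix a
spanning tree of the 1-skeleton. The link of a vertex `v` is a cycle that crosses the edge from `v`
to its parent exactly once, so the gluings across the other edges at `v` determine the gluing across
this one. Going from the leaves to the root, the gluings across the `3f/2 + 1 - w` edges off the
tree determine all of them. Up to a factor `C ^ f`, there are therefore at most
`(6f) ^ (3f/2 + 1 - w)` mate maps on surfaces whose faces are numbered. An automorphism that fixes a
flag is the identity, so the numberings of one surface yield at least `(f-1)!` mate maps. The
quotient is of order `f ^ (f/2) * (6f) ^ (-w)` up to a factor `C ^ f`, and `w ≤ 6f`.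
-/

namespace TriangulatedSurface

open Finset

section Involutions

variable {X : Type*}

lemma even_card_of_involutive {α : X → X} (hα : Function.Involutive α)
    (hne : ∀ z, α z ≠ z) {S : Finset X} (hS : ∀ z ∈ S, α z ∈ S) : Even #S := by
  classical
  have h : ∑ _z ∈ S, (1 : ZMod 2) = 0 :=
    sum_involution (fun z _ => α z) (fun _ _ => rfl) (fun z _ _ => hne z) hS (fun z _ => hα z)
  rwa [sum_const, nsmul_one, ZMod.natCast_eq_zero_iff_even] at h

-- If `α x ∉ S`, then `β` acts freely on `S` and `α` acts freely on `S \ {x}`, so both are even.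
lemma apply_mem_of_involutive [Finite X] {α β : X → X} (hα : Function.Involutive α)
    (hα_ne : ∀ z, α z ≠ z) (hβ : Function.Involutive β) (hβ_ne : ∀ z, β z ≠ z)
    {S : Set X} {x : X} (hx : x ∈ S) (hβS : ∀ z ∈ S, β z ∈ S)
    (hαS : ∀ z ∈ S, z ≠ x → z ≠ α x → α z ∈ S) : α x ∈ S := by
  classical
  by_contra hαx
  lift S to Finset X using S.toFinite
  have even_S : Even #S := even_card_of_involutive hβ hβ_ne hβS
  have even_erase : Even #(S.erase x) := even_card_of_involutive hα hα_ne fun z hz => by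
    obtain ⟨hzx, hzS⟩ := mem_erase.1 hz
    have hzα : z ≠ α x := fun h => hαx (h ▸ hzS)
    exact mem_erase.2 ⟨fun h => hzα (h ▸ (hα z).symm), hαS z hzS hzx hzα⟩
  rw [← card_erase_add_one (mem_coe.1 hx), Nat.even_add_one] at even_S
  exact even_S even_erase

lemma exists_equiv_of_ker_eq {V W : Type*} {p : X → V} {q : X → W}
    (hp : Function.Surjective p) (hq : Function.Surjective q)
    (h : ∀ x y, p x = p y ↔ q x = q y) : ∃ σ : V ≃ W, ∀ x, q x = σ (p x) :=
  ⟨(Setoid.quotientKerEquivOfSurjective p hp).symm.trans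
    ((Quotient.congrRight h).trans (Setoid.quotientKerEquivOfSurjective q hq)), fun x => by
      have hx : (Setoid.quotientKerEquivOfSurjective p hp).symm (p x) = Quotient.mk _ x :=
        (Equiv.symm_apply_eq _).2 rfl
      rw [Equiv.trans_apply, hx]
      rfl⟩

lemma card_moving_le [Fintype X] [Nonempty X] [DecidableEq X] (m : ℕ) :
    #{g : X → X | #{x | g x ≠ x} ≤ m} ≤ 2 ^ Fintype.card X * Fintype.card X ^ m := by
  let movesIn (D : Finset X) : Finset (X → X) :=
    Fintype.piFinset fun x => if x ∈ D then univ else {x}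
  have card_movesIn (D : Finset X) : #(movesIn D) = Fintype.card X ^ #D := by
    simp only [movesIn, Fintype.card_piFinset, apply_ite card, card_univ, card_singleton,
      prod_ite_mem, univ_inter, prod_const]
  calc #{g : X → X | #{x | g x ≠ x} ≤ m}
      ≤ #(({D | #D ≤ m} : Finset (Finset X)).biUnion movesIn) := by
        refine card_le_card fun g hg => mem_biUnion.2
          ⟨univ.filter fun x => g x ≠ x, by simpa using hg, Fintype.mem_piFinset.2 fun x => ?_⟩
        by_cases hx : g x = x <;> simp [hx]
    _ ≤ #({D | #D ≤ m} : Finset (Finset X)) * Fintype.card X ^ m :=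
        card_biUnion_le_card_mul _ _ _ fun D hD =>
          (card_movesIn D).trans_le (Nat.pow_le_pow_right Fintype.card_pos (mem_filter.1 hD).2)
    _ ≤ 2 ^ Fintype.card X * Fintype.card X ^ m := by
        gcongr
        exact (card_le_univ _).trans_eq (Fintype.card_finset)

end Involutions

lemma exists_parent {V : Type*} {G : SimpleGraph V} (hG : G.Connected) (r : V) :
    ∃ p : V → V, ∀ v, v ≠ r → G.Adj v (p v) ∧ G.dist (p v) r < G.dist v r := by
  have parent (v : V) : ∃ u, v ≠ r → G.Adj v u ∧ G.dist u r < G.dist v r := by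
    obtain ⟨walk, hwalk⟩ := hG.exists_walk_length_eq_dist v r
    cases walk with
    | nil => exact ⟨r, fun h => absurd rfl h⟩
    | @cons _ u _ hadj tl =>
      refine ⟨u, fun _ => ⟨hadj, ?_⟩⟩
      rw [← hwalk, SimpleGraph.Walk.length_cons]
      exact Nat.lt_succ_of_le (G.dist_le tl)
  choose p hp using parent
  exact ⟨p, hp⟩

/-- A flag of a family of triangles indexed by `ι`: a triangle together with an ordering of its
three corners. -/
abbrev TriFlag (ι : Type*) := ι × Equiv.Perm (Fin 3)

lemma exists_perm_of_ne : ∀ {k l : Fin 3}, k ≠ l → ∃ σ : Equiv.Perm (Fin 3), σ 0 = k ∧ σ 1 = l := by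
  decide

section Flags

variable {ι V : Type*} {φ : ι → Fin 3 → V}

namespace TriFlag

/-- The flag along the same side of the triangle, traversed in the opposite direction. -/
def reverse (x : TriFlag ι) : TriFlag ι := (x.1, x.2 * Equiv.swap 0 1)

/-- The flag along the other side of the triangle that leaves the first corner. -/
def turn (x : TriFlag ι) : TriFlag ι := (x.1, x.2 * Equiv.swap 1 2)

@[simp]
lemma reverse_reverse (x : TriFlag ι) : x.reverse.reverse = x := by simp [reverse]

lemma turn_involutive : Function.Involutive (turn (ι := ι)) := fun x => by simp [turn]

lemma turn_ne (x : TriFlag ι) : x.turn ≠ x := by simp [turn, Prod.ext_iff]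

end TriFlag

open TriFlag

/-- The vertex at the first corner of a flag, where `φ i` lists the vertices of triangle `i`. -/
def tail (φ : ι → Fin 3 → V) (x : TriFlag ι) : V := φ x.1 (x.2 0)

/-- The vertex at the second corner of a flag. -/
def head (φ : ι → Fin 3 → V) (x : TriFlag ι) : V := φ x.1 (x.2 1)

/-- The vertex at the third corner of a flag. -/
def apex (φ : ι → Fin 3 → V) (x : TriFlag ι) : V := φ x.1 (x.2 2)

/-- The directed edge of the complex underlying a flag. -/
def dart (φ : ι → Fin 3 → V) (x : TriFlag ι) : V × V := (tail φ x, head φ x)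

/-- The undirected edge of the complex underlying a flag. -/
def edge (φ : ι → Fin 3 → V) (x : TriFlag ι) : Sym2 V := s(tail φ x, head φ x)

lemma dart_eq_iff {ψ : ι → Fin 3 → V} {x y : TriFlag ι} :
    dart φ x = dart ψ y ↔ tail φ x = tail ψ y ∧ head φ x = head ψ y := Prod.ext_iff

@[simp]
lemma tail_reverse (x : TriFlag ι) : tail φ x.reverse = head φ x := by
  simp [tail, head, reverse]

@[simp]
lemma head_reverse (x : TriFlag ι) : head φ x.reverse = tail φ x := by
  simp [tail, head, reverse]

@[simp]
lemma tail_turn (x : TriFlag ι) : tail φ x.turn = tail φ x := by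
  simp [tail, turn, Equiv.swap_apply_of_ne_of_ne]

@[simp]
lemma head_turn (x : TriFlag ι) : head φ x.turn = apex φ x := by simp [head, apex, turn]

lemma dart_reverse (x : TriFlag ι) : dart φ x.reverse = (dart φ x).swap := by simp [dart]

lemma edge_eq_iff {x y : TriFlag ι} :
    edge φ x = edge φ y ↔ dart φ x = dart φ y ∨ dart φ x = dart φ y.reverse := by
  simp [edge, dart]

lemma tail_ne_head (hφ : ∀ i, Function.Injective (φ i)) (x : TriFlag ι) : tail φ x ≠ head φ x :=
  (hφ _).ne (x.2.injective.ne (by decide))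

lemma tail_ne_apex (hφ : ∀ i, Function.Injective (φ i)) (x : TriFlag ι) : tail φ x ≠ apex φ x :=
  (hφ _).ne (x.2.injective.ne (by decide))

lemma head_ne_apex (hφ : ∀ i, Function.Injective (φ i)) (x : TriFlag ι) : head φ x ≠ apex φ x :=
  (hφ _).ne (x.2.injective.ne (by decide))

lemma eq_of_dart_eq (hφ : ∀ i, Function.Injective (φ i)) {x y : TriFlag ι} (hface : x.1 = y.1)
    (hdart : dart φ x = dart φ y) : x = y := by
  obtain ⟨i, σ⟩ := x
  obtain ⟨j, τ⟩ := y
  obtain rfl : i = j := hface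
  have perm_ext : ∀ σ τ : Equiv.Perm (Fin 3), σ 0 = τ 0 → σ 1 = τ 1 → σ = τ := by decide
  obtain ⟨htail, hhead⟩ := dart_eq_iff.1 hdart
  rw [perm_ext σ τ (hφ i htail) (hφ i hhead)]

/-- The family of triangles with vertex lists `φ i` is a closed surface in which every vertex of
`V` occurs: each directed edge lies in exactly two flags, the flags leaving a vertex are linked by
turning inside triangles and crossing edges, and any two triangles are linked by crossing edges. -/
structure IsSurface (φ : ι → Fin 3 → V) : Prop where
  injective : ∀ i, Function.Injective (φ i)
  existsUnique_mate : ∀ x, ∃! y, y ≠ x ∧ dart φ y = dart φ x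
  tail_surjective : Function.Surjective (tail φ)
  link_connected : ∀ x y, tail φ x = tail φ y →
    Relation.ReflTransGen (fun a b => b = a.turn ∨ dart φ b = dart φ a) x y
  connected : ∀ i j,
    Relation.ReflTransGen (fun i j => ∃ σ τ, dart φ (i, σ) = dart φ (j, τ)) i j

namespace IsSurface

/-- The flag over the same directed edge in the neighbouring triangle. -/
noncomputable def mate (hφ : IsSurface φ) (x : TriFlag ι) : TriFlag ι :=
  (hφ.existsUnique_mate x).choose

variable (hφ : IsSurface φ)

include hφ

lemma mate_ne (x : TriFlag ι) : hφ.mate x ≠ x := (hφ.existsUnique_mate x).choose_spec.1.1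

@[simp]
lemma dart_mate (x : TriFlag ι) : dart φ (hφ.mate x) = dart φ x :=
  (hφ.existsUnique_mate x).choose_spec.1.2

@[simp]
lemma tail_mate (x : TriFlag ι) : tail φ (hφ.mate x) = tail φ x :=
  (dart_eq_iff.1 (hφ.dart_mate x)).1

lemma eq_mate {x y : TriFlag ι} (hne : y ≠ x) (hdart : dart φ y = dart φ x) : y = hφ.mate x :=
  (hφ.existsUnique_mate x).choose_spec.2 y ⟨hne, hdart⟩

lemma dart_eq_dart_iff {x y : TriFlag ι} : dart φ y = dart φ x ↔ y = x ∨ y = hφ.mate x := by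
  refine ⟨fun h => or_iff_not_imp_left.2 fun hne => hφ.eq_mate hne h, ?_⟩
  rintro (rfl | rfl)
  exacts [rfl, hφ.dart_mate x]

lemma mate_involutive : Function.Involutive hφ.mate := fun x =>
  (hφ.eq_mate (hφ.mate_ne x).symm (hφ.dart_mate x).symm).symm

lemma mate_reverse (x : TriFlag ι) : hφ.mate x.reverse = (hφ.mate x).reverse := by
  refine (hφ.eq_mate (fun h => hφ.mate_ne x ?_) ?_).symm
  · rw [← reverse_reverse (hφ.mate x), h, reverse_reverse]
  · rw [dart_reverse, dart_reverse, dart_mate]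

lemma edge_mate (x : TriFlag ι) : edge φ (hφ.mate x) = edge φ x :=
  edge_eq_iff.2 (Or.inl (hφ.dart_mate x))

end IsSurface

section Reconstruction

variable {W : Type*} {ψ : ι → Fin 3 → W}

lemma tail_eq_of_mate_eq (hφ : IsSurface φ) (hψ : IsSurface ψ)
    (h : ∀ x, hψ.mate x = hφ.mate x) {x y : TriFlag ι} (hxy : tail φ x = tail φ y) :
    tail ψ x = tail ψ y := by
  have path := hφ.link_connected x y hxy
  clear hxy
  induction path with
  | refl => rfl
  | @tail a b _ hab ih =>
    refine ih.trans ?_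
    rcases hab with rfl | hdart
    · exact (tail_turn a).symm
    · rcases hφ.dart_eq_dart_iff.1 hdart with rfl | rfl
      · rfl
      · rw [← h, hψ.tail_mate]

lemma exists_equiv_of_mate_eq (hφ : IsSurface φ) (hψ : IsSurface ψ)
    (h : ∀ x, hψ.mate x = hφ.mate x) : ∃ σ : V ≃ W, ∀ i k, ψ i k = σ (φ i k) := by
  obtain ⟨σ, hσ⟩ := exists_equiv_of_ker_eq hφ.tail_surjective hψ.tail_surjective fun x y =>
    ⟨tail_eq_of_mate_eq hφ hψ h, tail_eq_of_mate_eq hψ hφ fun x => (h x).symm⟩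
  exact ⟨σ, fun i k => by simpa [tail] using hσ (i, Equiv.swap 0 k)⟩

lemma perm_eq_of_mate_eq {π τ : Equiv.Perm ι} (hπ : IsSurface fun i => φ (π i))
    (hτ : IsSurface fun i => φ (τ i)) (h : ∀ x, hτ.mate x = hπ.mate x) {i : ι}
    (hi : π i = τ i) : π = τ := by
  ext1 j
  induction hπ.connected i j with
  | refl => exact hi
  | @tail j k _ hjk ih =>
    obtain ⟨σ, υ, hdart⟩ := hjk
    rcases hπ.dart_eq_dart_iff.1 hdart.symm with heq | hmate
    · obtain rfl : k = j := (Prod.ext_iff.1 heq).1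
      exact ih
    · have dart_τ : dart φ (τ k, υ) = dart φ (τ j, σ) :=
        (congrArg _ (hmate.trans (h _).symm)).trans (hτ.dart_mate (j, σ))
      have dart_π : dart (fun i => φ (π i)) (π.symm (τ k), υ) =
          dart (fun i => φ (π i)) (j, σ) := by
        simpa only [dart, tail, head, π.apply_symm_apply, ih] using dart_τ
      rcases hπ.dart_eq_dart_iff.1 dart_π with heq | hmate'
      · have hkj : τ k = τ j := (π.symm_apply_eq.1 (Prod.ext_iff.1 heq).1).trans ih
        rw [τ.injective hkj, ih]
      · exact (π.symm_apply_eq.1 (Prod.ext_iff.1 (hmate'.trans hmate.symm)).1).symm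

end Reconstruction

section Codes

/-- A spanning tree of the 1-skeleton, given by the parent map towards the root together with a
height that decreases along it. -/
structure SpanningTree (φ : ι → Fin 3 → V) where
  root : V
  parent : V → V
  height : V → ℕ
  exists_dart : ∀ v, v ≠ root → ∃ x, dart φ x = (v, parent v)
  height_parent_lt : ∀ v, v ≠ root → height (parent v) < height v

/-- The flags whose directed edge leads from a vertex to its parent. -/
def SpanningTree.up (T : SpanningTree φ) : Set (TriFlag ι) :=
  {x | tail φ x ≠ T.root ∧ head φ x = T.parent (tail φ x)}

/-- The tree flags `U` and the partial gluing `g` encode the surface `φ`: away from its fixed points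
`g` is the mate map, and it moves at least one of the four flags over every edge outside the
tree. -/
structure IsCode (hφ : IsSurface φ) (U : Set (TriFlag ι)) (g : TriFlag ι → TriFlag ι) : Prop where
  exists_tree : ∃ T : SpanningTree φ, T.up = U
  eq_mate : ∀ z, g z ≠ z → g z = hφ.mate z
  exists_moved : ∀ x, x ∉ U → x.reverse ∉ U → ∃ z, edge φ z = edge φ x ∧ g z ≠ z

namespace SpanningTree

variable (T : SpanningTree φ) {x y : TriFlag ι}

lemma dart_eq_of_mem_up (hx : x ∈ T.up) (hy : y ∈ T.up) (h : tail φ x = tail φ y) :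
    dart φ x = dart φ y := dart_eq_iff.2 ⟨h, by rw [hx.2, hy.2, h]⟩

lemma mem_up_of_dart_eq (hx : x ∈ T.up) (h : dart φ x = dart φ y) : y ∈ T.up := by
  obtain ⟨htail, hhead⟩ := dart_eq_iff.1 h
  exact ⟨htail ▸ hx.1, by rw [← htail, ← hhead, hx.2]⟩

lemma height_tail_lt_of_reverse_mem_up (hx : x.reverse ∈ T.up) :
    T.height (tail φ x) < T.height (head φ x) := by
  obtain ⟨hroot, hparent⟩ := hx
  rw [tail_reverse] at hroot hparent
  rw [← head_reverse, hparent]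
  exact T.height_parent_lt _ hroot

end SpanningTree

section Decoding

variable {W : Type*} {ψ : ι → Fin 3 → W} (hφ : IsSurface φ) (hψ : IsSurface ψ)

include hφ hψ

lemma mate_eq_of_reverse {x : TriFlag ι} (h : hψ.mate x.reverse = hφ.mate x.reverse) :
    hψ.mate x = hφ.mate x := by
  rw [hψ.mate_reverse, hφ.mate_reverse] at h
  rw [← reverse_reverse (hψ.mate x), h, reverse_reverse]

lemma mate_eq_of_dart_eq {x z : TriFlag ι} (hz : hψ.mate z = hφ.mate z)
    (h : dart φ x = dart φ z) : hψ.mate x = hφ.mate x := by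
  rcases hφ.dart_eq_dart_iff.1 h with rfl | rfl
  · exact hz
  · rw [hφ.mate_involutive, ← hz, hψ.mate_involutive]

variable {hφ hψ} {U : Set (TriFlag ι)} {g : TriFlag ι → TriFlag ι}

lemma IsCode.mate_eq_of_notMem (cφ : IsCode hφ U g) (cψ : IsCode hψ U g) {x : TriFlag ι}
    (hx : x ∉ U) (hx' : x.reverse ∉ U) : hψ.mate x = hφ.mate x := by
  obtain ⟨z, hedge, hz⟩ := cφ.exists_moved x hx hx'
  have hmate : hψ.mate z = hφ.mate z := (cψ.eq_mate z hz).symm.trans (cφ.eq_mate z hz)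
  rcases edge_eq_iff.1 hedge with hdart | hdart
  · exact mate_eq_of_dart_eq hφ hψ hmate hdart.symm
  · exact mate_eq_of_reverse hφ hψ (mate_eq_of_dart_eq hφ hψ hmate hdart.symm)

-- The link of `v = tail φ x` is a cycle in which `x` and its mate are the only flags that point up.
-- All other crossings at `v` are already known to agree, so `x` and its mate, the two ends of the
-- path obtained by cutting this cycle, also have the same tail in `ψ`.
lemma IsCode.mate_eq_of_mem [Finite ι] [Finite V] (cφ : IsCode hφ U g) (cψ : IsCode hψ U g)
    {x : TriFlag ι} (hx : x ∈ U) : hψ.mate x = hφ.mate x := by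
  obtain ⟨T, rfl⟩ := cφ.exists_tree
  obtain ⟨T', hT'⟩ := cψ.exists_tree
  have wf : WellFounded (InvImage (· > ·) T.height) := Finite.wellFounded_of_trans_of_irrefl _
  induction hv : tail φ x using wf.induction generalizing x with
  | _ v ih =>
  subst hv
  have mate_eq {z : TriFlag ι} (hz : z ∉ T.up) (htail : tail φ z = tail φ x) :
      hψ.mate z = hφ.mate z := by
    by_cases hz' : z.reverse ∈ T.up
    · have hlt := T.height_tail_lt_of_reverse_mem_up hz'
      rw [htail, ← tail_reverse] at hlt
      exact mate_eq_of_reverse hφ hψ (ih _ hlt hz' rfl)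
    · exact cφ.mate_eq_of_notMem cψ hz hz'
  have tail_mate_eq : hφ.mate x ∈ {z | tail φ z = tail φ x ∧ tail ψ z = tail ψ x} := by
    refine apply_mem_of_involutive hφ.mate_involutive hφ.mate_ne turn_involutive turn_ne
      ⟨rfl, rfl⟩ (fun z hz => by simpa using hz) fun z ⟨hzφ, hzψ⟩ hzx hzx' => ?_
    have hz : z ∉ T.up := fun hz =>
      (hφ.dart_eq_dart_iff.1 (T.dart_eq_of_mem_up hz hx hzφ)).elim hzx hzx'
    exact ⟨(hφ.tail_mate z).trans hzφ, by rw [← mate_eq hz hzφ, hψ.tail_mate, hzψ]⟩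
  have hmate : hφ.mate x ∈ T.up := T.mem_up_of_dart_eq hx (hφ.dart_mate x).symm
  rw [← hT'] at hx hmate
  exact (hψ.eq_mate (hφ.mate_ne x) (T'.dart_eq_of_mem_up hmate hx tail_mate_eq.2)).symm

lemma IsCode.mate_eq [Finite ι] [Finite V] (cφ : IsCode hφ U g) (cψ : IsCode hψ U g)
    (x : TriFlag ι) : hψ.mate x = hφ.mate x := by
  by_cases hx : x ∈ U
  · exact cφ.mate_eq_of_mem cψ hx
  by_cases hx' : x.reverse ∈ U
  · exact mate_eq_of_reverse hφ hψ (cφ.mate_eq_of_mem cψ hx')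
  · exact cφ.mate_eq_of_notMem cψ hx hx'

end Decoding

section Encoding

/-- The 1-skeleton of the complex. -/
def skeleton (hφ : IsSurface φ) : SimpleGraph V where
  Adj u v := ∃ x, dart φ x = (u, v)
  symm := ⟨fun u v ⟨x, hx⟩ => ⟨x.reverse, by rw [dart_reverse, hx, Prod.swap]⟩⟩
  loopless := ⟨fun v ⟨x, hx⟩ => tail_ne_head hφ.injective x (by
    rw [dart, Prod.ext_iff] at hx
    exact hx.1.trans hx.2.symm)⟩

lemma skeleton_reachable (hφ : IsSurface φ) (i j : ι) (k l : Fin 3) :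
    (skeleton hφ).Reachable (φ i k) (φ j l) := by
  have same_face (i : ι) (k l : Fin 3) : (skeleton hφ).Reachable (φ i k) (φ i l) := by
    by_cases hkl : k = l
    · rw [hkl]
    · obtain ⟨σ, rfl, rfl⟩ := exists_perm_of_ne hkl
      exact SimpleGraph.Adj.reachable ⟨(i, σ), rfl⟩
  induction hφ.connected i j generalizing l with
  | refl => exact same_face i k l
  | @tail j j' _ hstep ih =>
    obtain ⟨σ, τ, hdart⟩ := hstep
    have hvertex : φ j (σ 0) = φ j' (τ 0) := (dart_eq_iff.1 hdart).1
    exact (ih (σ 0)).trans (hvertex ▸ same_face j' (τ 0) l)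

lemma skeleton_connected [Nonempty ι] (hφ : IsSurface φ) : (skeleton hφ).Connected where
  preconnected u v := by
    obtain ⟨x, rfl⟩ := hφ.tail_surjective u
    obtain ⟨y, rfl⟩ := hφ.tail_surjective v
    exact skeleton_reachable hφ _ _ _ _
  nonempty := ⟨φ (Classical.arbitrary ι) 0⟩

lemma nonempty_spanningTree [Nonempty ι] (hφ : IsSurface φ) : Nonempty (SpanningTree φ) := by
  have hG := skeleton_connected hφ
  obtain ⟨r⟩ := hG.nonempty
  obtain ⟨p, hp⟩ := exists_parent hG r
  exact ⟨⟨r, p, fun v => (skeleton hφ).dist v r, fun v hv => (hp v hv).1, fun v hv => (hp v hv).2⟩⟩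

lemma four_mul_card_edge_le [Fintype ι] [DecidableEq V] (hφ : IsSurface φ) :
    4 * #(univ.image (edge φ)) ≤ 6 * Fintype.card ι := by
  classical
  have four_le (e) (he : e ∈ univ.image (edge φ)) : 4 ≤ #{y | edge φ y = e} := by
    obtain ⟨x, -, rfl⟩ := mem_image.1 he
    have ne_of_dart {y z : TriFlag ι} (hy : dart φ y = dart φ x) (hz : dart φ z = dart φ x) :
        y ≠ z.reverse := by
      rintro rfl
      rw [dart_eq_iff, tail_reverse] at hy
      exact tail_ne_head hφ.injective x (hy.1.symm.trans (dart_eq_iff.1 hz).2)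
    have edge_reverse (y : TriFlag ι) : edge φ y.reverse = edge φ y := edge_eq_iff.2 (Or.inr rfl)
    have hmate := hφ.dart_mate x
    have hcard : #{x, hφ.mate x, x.reverse, (hφ.mate x).reverse} = 4 := by
      grind [hφ.mate_ne x, ne_of_dart rfl rfl, ne_of_dart rfl hmate, ne_of_dart hmate rfl,
        ne_of_dart hmate hmate, reverse_reverse x, reverse_reverse (hφ.mate x)]
    rw [← hcard]
    refine card_le_card fun y hy => mem_filter.2 ⟨mem_univ y, ?_⟩
    simp only [mem_insert, mem_singleton] at hy
    rcases hy with rfl | rfl | rfl | rfl <;> simp only [edge_reverse, hφ.edge_mate]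
  have hcard := mul_card_image_le_card univ 4 four_le
  rwa [card_univ, Fintype.card_prod, Fintype.card_perm, Fintype.card_fin,
    mul_comm (Fintype.card ι)] at hcard

namespace SpanningTree

variable [Fintype V] [DecidableEq V] (T : SpanningTree φ)

/-- The undirected edges joining the vertices other than the root to their parents. -/
def edges : Finset (Sym2 V) := (univ.erase T.root).image fun v => s(v, T.parent v)

lemma mem_edges {e : Sym2 V} : e ∈ T.edges ↔ ∃ v, v ≠ T.root ∧ s(v, T.parent v) = e := by
  simp [edges]

lemma card_edges_add_one : #T.edges + 1 = Fintype.card V := by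
  have parent_injOn : Set.InjOn (fun v => s(v, T.parent v)) (univ.erase T.root) := by
    intro u hu v hv huv
    replace hu := ne_of_mem_erase hu
    replace hv := ne_of_mem_erase hv
    rcases Sym2.eq_iff.1 huv with ⟨h, -⟩ | ⟨hu_eq, hv_eq⟩
    · exact h
    · have hu_lt := T.height_parent_lt u hu
      have hv_lt := T.height_parent_lt v hv
      rw [hv_eq] at hu_lt
      rw [← hu_eq] at hv_lt
      exact absurd hu_lt hv_lt.not_gt
  rw [edges, card_image_of_injOn parent_injOn, card_erase_add_one (mem_univ _), card_univ]

lemma edges_subset [Fintype ι] : T.edges ⊆ univ.image (edge φ) := by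
  intro e he
  obtain ⟨v, hv, rfl⟩ := T.mem_edges.1 he
  obtain ⟨x, hx⟩ := T.exists_dart v hv
  obtain ⟨htail, hhead⟩ := Prod.ext_iff.1 hx
  exact mem_image.2 ⟨x, mem_univ x, congrArg₂ (s(·, ·)) htail hhead⟩

lemma edge_notMem_edges {x : TriFlag ι} (hx : x ∉ T.up) (hx' : x.reverse ∉ T.up) :
    edge φ x ∉ T.edges := by
  intro h
  obtain ⟨v, hv, hedge⟩ := T.mem_edges.1 h
  rcases Sym2.eq_iff.1 hedge with ⟨htail, hhead⟩ | ⟨hhead, htail⟩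
  · exact hx ⟨htail ▸ hv, by rw [← htail, hhead]⟩
  · exact hx' ⟨by rwa [tail_reverse, ← hhead], by rw [head_reverse, tail_reverse, ← hhead, htail]⟩

end SpanningTree

lemma exists_isCode [Nonempty ι] [Fintype ι] [DecidableEq ι] [Fintype V] (hφ : IsSurface φ) :
    ∃ U g, IsCode hφ U g ∧ #{x | g x ≠ x} + Fintype.card V ≤ 3 * Fintype.card ι / 2 + 1 := by
  classical
  obtain ⟨T⟩ := nonempty_spanningTree hφ
  have exists_rep (e : Sym2 V) : ∃ x, e ∈ univ.image (edge φ) → edge φ x = e := by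
    by_cases he : e ∈ univ.image (edge φ)
    · obtain ⟨x, -, hx⟩ := mem_image.1 he
      exact ⟨x, fun _ => hx⟩
    · exact ⟨(Classical.arbitrary ι, 1), fun h => absurd h he⟩
  choose rep hrep using exists_rep
  let D : Finset (TriFlag ι) := (univ.image (edge φ) \ T.edges).image rep
  let g : TriFlag ι → TriFlag ι := fun x => if x ∈ D then hφ.mate x else x
  have g_ne_iff (x) : g x ≠ x ↔ x ∈ D := by simp [g, hφ.mate_ne]
  refine ⟨T.up, g, ⟨⟨T, rfl⟩, fun z hz => if_pos ((g_ne_iff z).1 hz), fun x hx hx' => ?_⟩, ?_⟩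
  · have hedge : edge φ x ∈ univ.image (edge φ) := mem_image_of_mem _ (mem_univ x)
    exact ⟨rep (edge φ x), hrep _ hedge, (g_ne_iff _).2
      (mem_image_of_mem rep (mem_sdiff.2 ⟨hedge, T.edge_notMem_edges hx hx'⟩))⟩
  · have card_moved : #{x | g x ≠ x} ≤ #(univ.image (edge φ)) - #T.edges := by
      simp only [g_ne_iff, filter_univ_mem]
      exact card_image_le.trans_eq (card_sdiff_of_subset T.edges_subset)
    have card_tree_le := card_le_card T.edges_subset
    have card_tree := T.card_edges_add_one
    have card_edges := four_mul_card_edge_le hφ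
    omega

end Encoding

end Codes

end Flags

section Labellings

variable {ι V : Type*} [DecidableEq V]

/-- The vertex set of triangle `i`. -/
def face (φ : ι → Fin 3 → V) (i : ι) : Finset V := univ.image (φ i)

/-- The vertex lists `φ i` enumerate the faces in `F`, each face once. -/
structure IsLabelling (φ : ι → Fin 3 → V) (F : Finset (Finset V)) : Prop where
  injective : ∀ i, Function.Injective (φ i)
  face_injective : Function.Injective (face φ)
  mem_iff : ∀ t, t ∈ F ↔ ∃ i, face φ i = t

section Faces

variable {φ : ι → Fin 3 → V}

lemma apply_mem_face (i : ι) (k : Fin 3) : φ i k ∈ face φ i :=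
  mem_image_of_mem _ (mem_univ k)

lemma exists_dart_of_mem_face {i : ι} {a b : V} (ha : a ∈ face φ i) (hb : b ∈ face φ i)
    (hab : a ≠ b) : ∃ σ, dart φ (i, σ) = (a, b) := by
  obtain ⟨k, -, rfl⟩ := mem_image.1 ha
  obtain ⟨l, -, rfl⟩ := mem_image.1 hb
  obtain ⟨σ, rfl, rfl⟩ := exists_perm_of_ne fun h : k = l => hab (h ▸ rfl)
  exact ⟨σ, rfl⟩

lemma exists_dart_turn_of_face_eq (hφ : ∀ i, Function.Injective (φ i)) {i : ι} {v b c : V}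
    (hface : face φ i = {v, b, c}) (hvc : v ≠ c) :
    ∃ σ, dart φ (i, σ) = (v, c) ∧ dart φ (TriFlag.turn (i, σ)) = (v, b) := by
  obtain ⟨σ, hσ⟩ : ∃ σ, dart φ (i, σ) = (v, c) :=
    exists_dart_of_mem_face (by simp [hface]) (by simp [hface]) hvc
  obtain ⟨rfl, rfl⟩ := Prod.mk_inj.1 hσ
  have hapex : apex φ (i, σ) ∈ face φ i := apply_mem_face _ _
  simp only [hface, mem_insert, mem_singleton, (tail_ne_apex hφ _).symm,
    (head_ne_apex hφ _).symm, false_or, or_false] at hapex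
  exact ⟨σ, rfl, Prod.ext (tail_turn _) ((head_turn _).trans hapex)⟩

end Faces

namespace IsLabelling

variable {φ : ι → Fin 3 → V} {F : Finset (Finset V)} (h : IsLabelling φ F)

include h

lemma face_mem (i : ι) : face φ i ∈ F := (h.mem_iff _).2 ⟨i, rfl⟩

lemma comp_equiv {κ : Type*} (e : κ ≃ ι) : IsLabelling (fun k => φ (e k)) F where
  injective k := h.injective (e k)
  face_injective := h.face_injective.comp e.injective
  mem_iff t := (h.mem_iff t).trans e.surjective.exists

lemma existsUnique_mate
    (two_faces : ∀ e : Finset V, #e = 2 → (∃ t ∈ F, e ⊆ t) → #{t ∈ F | e ⊆ t} = 2)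
    (x : TriFlag ι) : ∃! y, y ≠ x ∧ dart φ y = dart φ x := by
  have hne_head := tail_ne_head h.injective x
  have subset_face {y : TriFlag ι} (hy : dart φ y = dart φ x) :
      {tail φ x, head φ x} ⊆ face φ y.1 := by
    rw [← (dart_eq_iff.1 hy).1, ← (dart_eq_iff.1 hy).2, insert_subset_iff, singleton_subset_iff]
    exact ⟨apply_mem_face _ _, apply_mem_face _ _⟩
  have card_faces := two_faces _ (card_pair hne_head) ⟨_, h.face_mem _, subset_face rfl⟩
  have card_others : #({t ∈ F | {tail φ x, head φ x} ⊆ t}.erase (face φ x.1)) = 1 := by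
    rw [card_erase_of_mem (mem_filter.2 ⟨h.face_mem _, subset_face rfl⟩), card_faces]
  obtain ⟨t, ht⟩ := card_eq_one.1 card_others
  obtain ⟨ht_ne, htF, hsub⟩ : t ≠ face φ x.1 ∧ t ∈ F ∧ {tail φ x, head φ x} ⊆ t := by
    simpa only [mem_erase, mem_filter] using ht.symm.subset (mem_singleton_self t)
  obtain ⟨j, rfl⟩ := (h.mem_iff t).1 htF
  obtain ⟨σ, hσ⟩ := exists_dart_of_mem_face (hsub (mem_insert_self _ _))
    (hsub (mem_insert_of_mem (mem_singleton_self _))) hne_head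
  refine ⟨(j, σ), ⟨fun hx => ht_ne (hx ▸ rfl), hσ⟩, fun y ⟨hne, hdart⟩ => ?_⟩
  have hface_ne : face φ y.1 ≠ face φ x.1 := fun hface =>
    hne (eq_of_dart_eq h.injective (h.face_injective hface) hdart)
  have hface : face φ y.1 = face φ j := mem_singleton.1 <| ht.subset <|
    mem_erase.2 ⟨hface_ne, mem_filter.2 ⟨h.face_mem _, subset_face hdart⟩⟩
  exact eq_of_dart_eq h.injective (h.face_injective hface) (hdart.trans hσ.symm)

lemma link_connected {x : TriFlag ι} {b : V}
    (path : Relation.ReflTransGen (fun a b => ({tail φ x, a, b} : Finset V) ∈ F) (head φ x) b)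
    {y : TriFlag ι} (hy : dart φ y = (tail φ x, b)) :
    Relation.ReflTransGen (fun x y => y = x.turn ∨ dart φ y = dart φ x) x y := by
  induction path generalizing y with
  | refl => exact .single (Or.inr hy)
  | @tail b c _ hbc ih =>
    obtain ⟨i, hi⟩ := (h.mem_iff _).1 hbc
    have hvc : tail φ x ≠ c := by
      obtain ⟨htail, rfl⟩ := Prod.mk_inj.1 hy
      exact htail ▸ tail_ne_head h.injective y
    obtain ⟨σ, hσ, hturn⟩ := exists_dart_turn_of_face_eq h.injective hi hvc
    refine ((ih hturn).tail (Or.inl (TriFlag.turn_involutive _).symm)).tail (Or.inr ?_)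
    exact hy.trans hσ.symm

lemma connected {s t : Finset V}
    (path : Relation.ReflTransGen (fun s t => s ∈ F ∧ t ∈ F ∧ #(s ∩ t) = 2) s t) {i j : ι}
    (hi : face φ i = s) (hj : face φ j = t) :
    Relation.ReflTransGen (fun i j => ∃ σ τ, dart φ (i, σ) = dart φ (j, τ)) i j := by
  induction path generalizing j with
  | refl => rw [h.face_injective (hi.trans hj.symm)]
  | @tail s t _ hst ih =>
    obtain ⟨hs, -, hcard⟩ := hst
    obtain ⟨k, rfl⟩ := (h.mem_iff s).1 hs
    obtain ⟨a, b, hab, hinter⟩ := card_eq_two.1 hcard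
    subst hj
    have ha : a ∈ face φ k ∩ face φ j := hinter ▸ mem_insert_self a _
    have hb : b ∈ face φ k ∩ face φ j := hinter ▸ mem_insert_of_mem (mem_singleton_self b)
    rw [mem_inter] at ha hb
    obtain ⟨σ, hσ⟩ := exists_dart_of_mem_face ha.1 hb.1 hab
    obtain ⟨τ, hτ⟩ := exists_dart_of_mem_face ha.2 hb.2 hab
    exact (ih rfl).tail ⟨σ, τ, hσ.trans hτ.symm⟩

end IsLabelling

lemma exists_isLabelling {F : Finset (Finset V)} (card_face : ∀ t ∈ F, #t = 3) :
    ∃ φ : ↥F → Fin 3 → V, IsLabelling φ F := by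
  let e (t : F) : (t : Finset V) ≃ Fin 3 := equivFinOfCardEq (card_face t t.2)
  have face_eq (t : F) : face (fun t k => ((e t).symm k : V)) t = t := by
    ext v
    simp only [face, mem_image, mem_univ, true_and]
    exact ⟨fun ⟨k, hk⟩ => hk ▸ ((e t).symm k).2, fun hv => ⟨e t ⟨v, hv⟩, by simp⟩⟩
  exact ⟨fun t k => (e t).symm k, fun t => Subtype.val_injective.comp (e t).symm.injective,
    fun s t hst => Subtype.ext (by simpa only [face_eq] using hst), fun t => by simp [face_eq]⟩

end Labellings

section ClosedSurface

variable {ι : Type*} {w : ℕ} {φ : ι → Fin 3 → Fin w} {F : Finset (Finset (Fin w))}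

lemma IsLabelling.isSurface (h : IsLabelling φ F) (hF : IsClosedSurface F) : IsSurface φ := by
  obtain ⟨-, -, two_faces, exists_face, link_path, face_path⟩ := hF
  refine ⟨h.injective, h.existsUnique_mate two_faces, fun v => ?_, fun x y hxy => ?_,
    fun i j => h.connected (face_path _ (h.face_mem i) _ (h.face_mem j)) rfl rfl⟩
  · obtain ⟨t, ht, hv⟩ := exists_face v
    obtain ⟨i, rfl⟩ := (h.mem_iff t).1 ht
    obtain ⟨k, -, rfl⟩ := mem_image.1 hv
    exact ⟨(i, Equiv.swap 0 k), by simp [tail]⟩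
  · have head_mem (z : TriFlag ι) : ∃ t ∈ F, tail φ z ∈ t ∧ head φ z ∈ t ∧ head φ z ≠ tail φ z :=
      ⟨_, h.face_mem z.1, apply_mem_face _ _, apply_mem_face _ _, (tail_ne_head h.injective z).symm⟩
    exact h.link_connected (link_path _ _ _ (head_mem x) (hxy ▸ head_mem y))
      (Prod.ext hxy.symm rfl)

lemma surfIso_of_mate_eq {ψ : ι → Fin 3 → Fin w} {G : Finset (Finset (Fin w))}
    (hF : IsLabelling φ F) (hG : IsLabelling ψ G) (hφ : IsSurface φ) (hψ : IsSurface ψ)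
    (h : ∀ x, hψ.mate x = hφ.mate x) : SurfIso F G := by
  obtain ⟨σ, hσ⟩ := exists_equiv_of_mate_eq hφ hψ h
  have face_image (i : ι) : (face φ i).image σ = face ψ i := by
    rw [face, image_image]
    exact image_congr fun k _ => (hσ i k).symm
  refine ⟨σ, Finset.ext fun t => ?_⟩
  simp only [mem_image, hF.mem_iff, hG.mem_iff, ← face_image]
  simp

end ClosedSurface

section Counting

variable {f w : ℕ}

lemma card_triFlag_fin : Fintype.card (TriFlag (Fin f)) = 6 * f := by
  rw [Fintype.card_prod, Fintype.card_perm, Fintype.card_fin, Fintype.card_fin, mul_comm]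
  rfl

lemma exists_isLabelling_fin {F : Finset (Finset (Fin w))} (hF : IsClosedSurface F)
    (hcard : #F = f) : ∃ φ : Fin f → Fin 3 → Fin w, IsLabelling φ F := by
  obtain ⟨φ, hφ⟩ := exists_isLabelling hF.2.1
  exact ⟨_, hφ.comp_equiv (F.equivFinOfCardEq hcard).symm⟩

/-- The closed surfaces with `f` faces and vertex set `Fin w`. -/
abbrev ClosedSurface (f w : ℕ) := {F : Finset (Finset (Fin w)) // IsClosedSurface F ∧ #F = f}

/-- The isomorphism classes counted by `Tcount f w`. -/
abbrev SurfaceClass (f w : ℕ) := Quot fun X Y : ClosedSurface f w => SurfIso X.1 Y.1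

/-- The possible codes of a labelled surface with a marked face, when at most `m` flags are
moved. -/
abbrev MarkedCode (f m : ℕ) :=
  Set (TriFlag (Fin f)) × {g : TriFlag (Fin f) → TriFlag (Fin f) // #{x | g x ≠ x} ≤ m} × Fin f

lemma card_markedCode_le [NeZero f] (m : ℕ) :
    Nat.card (MarkedCode f m) ≤ 2 ^ (6 * f) * (2 ^ (6 * f) * (6 * f) ^ m * f) := by
  have hmaps := card_moving_le (X := TriFlag (Fin f)) m
  rw [card_triFlag_fin] at hmaps
  rw [Nat.card_prod, Nat.card_prod, Nat.card_eq_fintype_card (α := Set _), Fintype.card_set,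
    card_triFlag_fin, Nat.card_eq_fintype_card, Fintype.card_subtype, Nat.card_fin]
  gcongr

-- The marked face is needed to recover the labelling, since a relabelling may preserve all mates
-- when it comes from an automorphism, but only the identity also fixes a face.
lemma card_surfaceClass_mul_factorial_le [NeZero f] :
    Nat.card (SurfaceClass f w) * f.factorial ≤ Nat.card (MarkedCode f (3 * f / 2 + 1 - w)) := by
  choose φ hφ using fun X : ClosedSurface f w => exists_isLabelling_fin X.2.1 X.2.2
  have labelling (X) (π : Equiv.Perm (Fin f)) := (hφ X).comp_equiv π
  have isSurface (X) (π : Equiv.Perm (Fin f)) := (labelling X π).isSurface X.2.1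
  choose U g isCode card_moved using fun X π => exists_isCode (isSurface X π)
  simp only [Fintype.card_fin] at card_moved
  let encode : SurfaceClass f w × Equiv.Perm (Fin f) → MarkedCode f (3 * f / 2 + 1 - w) := fun p =>
    (U p.1.out p.2, ⟨g p.1.out p.2, Nat.le_sub_of_add_le (card_moved _ _)⟩, p.2.symm 0)
  have encode_injective : Function.Injective encode := by
    rintro ⟨q, π⟩ ⟨r, τ⟩ hqr
    simp only [encode, Prod.mk_inj, Subtype.mk_eq_mk] at hqr
    obtain ⟨hU, hg, hmark⟩ := hqr
    have mate_eq := (isCode q.out π).mate_eq (hU ▸ hg ▸ isCode r.out τ)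
    obtain rfl : q = r := by
      rw [← q.out_eq, ← r.out_eq]
      exact Quot.sound (surfIso_of_mate_eq (labelling _ _) (labelling _ _) _ _ mate_eq)
    have hfix : π (π.symm 0) = τ (π.symm 0) := by
      rw [π.apply_symm_apply, hmark, τ.apply_symm_apply]
    rw [perm_eq_of_mate_eq _ _ mate_eq hfix]
  have hcard := Nat.card_le_card_of_injective encode encode_injective
  rwa [Nat.card_prod, Nat.card_perm, Nat.card_fin] at hcard

lemma pos_of_closedSurface (X : ClosedSurface f w) : 0 < f :=
  X.2.2 ▸ X.2.1.1.card_pos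

lemma le_of_closedSurface (X : ClosedSurface f w) : w ≤ 3 * f / 2 + 1 := by
  have : NeZero f := ⟨(pos_of_closedSurface X).ne'⟩
  obtain ⟨φ, hφ⟩ := exists_isLabelling_fin X.2.1 X.2.2
  obtain ⟨U, g, -, hcard⟩ := exists_isCode (hφ.isSurface X.2.1)
  simp only [Fintype.card_fin] at hcard
  exact le_of_add_le_right hcard

lemma Tcount_mul_le (f w : ℕ) :
    Tcount f w * f.factorial * w ^ w ≤ 2 ^ (12 * f) * (6 * f) ^ (3 * f / 2) * (6 * f * f) := by
  obtain hT | ⟨⟨⟨X⟩⟩, -⟩ := (Nat.eq_zero_or_pos (Tcount f w)).imp_right Nat.card_pos_iff.1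
  · simp [hT]
  have hf : 0 < f := pos_of_closedSurface X
  have hw : w ≤ 3 * f / 2 + 1 := le_of_closedSurface X
  have : NeZero f := ⟨hf.ne'⟩
  calc Tcount f w * f.factorial * w ^ w
      ≤ 2 ^ (6 * f) * (2 ^ (6 * f) * (6 * f) ^ (3 * f / 2 + 1 - w) * f) * (6 * f) ^ w :=
        Nat.mul_le_mul (card_surfaceClass_mul_factorial_le.trans (card_markedCode_le _))
          (Nat.pow_le_pow_left (by omega) w)
    _ = 2 ^ (12 * f) * ((6 * f) ^ (3 * f / 2 + 1 - w) * (6 * f) ^ w) * f := by ring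
    _ = 2 ^ (12 * f) * (6 * f) ^ (3 * f / 2) * (6 * f * f) := by
        rw [← pow_add, Nat.sub_add_cancel hw]
        ring

end Counting

section Estimates

lemma pow_self_le_three_pow_mul_factorial (f : ℕ) : (f : ℝ) ^ f ≤ 3 ^ f * f.factorial := by
  have h := (Real.pow_div_factorial_le_exp f (Nat.cast_nonneg f) f).trans_eq
    (Real.exp_one_pow f).symm
  rw [div_le_iff₀ (by positivity)] at h
  refine h.trans ?_
  gcongr
  exact Real.exp_one_lt_three.le

lemma six_mul_mul_self_le_pow (f : ℕ) : 6 * f * f ≤ 24 ^ f := by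
  obtain rfl | hf := Nat.eq_zero_or_pos f
  · simp
  calc 6 * f * f ≤ 6 ^ f * 2 ^ f * 2 ^ f := by
        gcongr
        exacts [Nat.le_self_pow hf.ne' 6, Nat.lt_two_pow_self.le, Nat.lt_two_pow_self.le]
    _ = 24 ^ f := by
        rw [← mul_pow, ← mul_pow]
        norm_num

lemma six_mul_pow_le (f : ℕ) :
    (6 * f : ℝ) ^ (3 * f / 2) ≤ 36 ^ f * (f : ℝ) ^ f * (f : ℝ) ^ ((f : ℝ) / 2) := by
  obtain rfl | hf := Nat.eq_zero_or_pos f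
  · simp
  have one_le : (1 : ℝ) ≤ f := mod_cast hf
  have pow_le : (f : ℝ) ^ (3 * f / 2) ≤ (f : ℝ) ^ f * (f : ℝ) ^ ((f : ℝ) / 2) := by
    rw [← Real.rpow_natCast, ← Real.rpow_natCast, ← Real.rpow_add (by positivity)]
    refine Real.rpow_le_rpow_of_exponent_le one_le (Nat.cast_div_le.trans_eq ?_)
    push_cast
    ring
  calc (6 * f : ℝ) ^ (3 * f / 2) = 6 ^ (3 * f / 2) * (f : ℝ) ^ (3 * f / 2) := mul_pow ..
    _ ≤ 6 ^ (2 * f) * ((f : ℝ) ^ f * (f : ℝ) ^ ((f : ℝ) / 2)) := by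
        gcongr
        · norm_num
        · omega
    _ = 36 ^ f * (f : ℝ) ^ f * (f : ℝ) ^ ((f : ℝ) / 2) := by
        rw [pow_mul, mul_assoc]
        norm_num

end Estimates

end TriangulatedSurface

open TriangulatedSurface in
theorem Tcount_upper_bound_general :
    ∃ C : ℝ, 0 < C ∧ ∀ f w : ℕ,
      (Tcount f w : ℝ) ≤ C ^ f * (f : ℝ) ^ ((f : ℝ) / 2) * (w : ℝ) ^ (-(w : ℝ)) := by
  refine ⟨3 * 2 ^ 12 * 36 * 24, by norm_num, fun f w => ?_⟩
  have pow_pos (n : ℕ) : (0 : ℝ) < n ^ n := mod_cast Nat.pow_self_pos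
  rw [Real.rpow_neg w.cast_nonneg, Real.rpow_natCast, le_mul_inv_iff₀ (pow_pos w)]
  refine le_of_mul_le_mul_right ?_ (pow_pos f)
  have count_le : (Tcount f w * f.factorial * w ^ w : ℝ) ≤
      2 ^ (12 * f) * (6 * f) ^ (3 * f / 2) * (6 * f * f) := mod_cast Tcount_mul_le f w
  calc (Tcount f w * w ^ w * f ^ f : ℝ) ≤ Tcount f w * w ^ w * (3 ^ f * f.factorial) := by
        gcongr
        exact pow_self_le_three_pow_mul_factorial f
    _ = 3 ^ f * (Tcount f w * f.factorial * w ^ w) := by ring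
    _ ≤ 3 ^ f * (2 ^ (12 * f) * (6 * f) ^ (3 * f / 2) * (6 * f * f)) := by gcongr
    _ ≤ 3 ^ f * (2 ^ (12 * f) * (36 ^ f * f ^ f * (f : ℝ) ^ ((f : ℝ) / 2)) * 24 ^ f) := by
        gcongr
        exacts [six_mul_pow_le f, mod_cast six_mul_mul_self_le_pow f]
    _ = (3 * 2 ^ 12 * 36 * 24) ^ f * (f : ℝ) ^ ((f : ℝ) / 2) * f ^ f := by
        simp only [mul_pow, pow_mul]
        ring

/-- **Theorem (counting triangulated surfaces).**
For every `δ > 0` there is a constant `C_δ` such that for all positive integers `f`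
and `w`, `|T(f,w)| ≤ C_δ^f · f^(f/2) · w^(-(1-δ)w)`. -/
theorem Tcount_upper_bound (δ : ℝ) (hδ : 0 < δ) :
    ∃ C : ℝ, 0 < C ∧ ∀ f w : ℕ, 0 < f → 0 < w →
      (Tcount f w : ℝ) ≤ C ^ f * (f : ℝ) ^ ((f : ℝ) / 2) * (w : ℝ) ^ (-(1 - δ) * w) := by
  obtain ⟨C, hC, hT⟩ := Tcount_upper_bound_general
  refine ⟨C, hC, fun f w _ hw => (hT f w).trans ?_⟩
  have one_le : (1 : ℝ) ≤ w := mod_cast hw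
  gcongr
  nlinarith
end
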